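/- Suppose f is such a piecewise-C³ one-parameter family with β > 0, a_L > 1, and 0 < |a_R| < 1, and let ν(μ) = f(0;μ). Then there exist μ₀ > 0, continuous functions s_L(μ) = a_L + O(μ), s_R(μ) = a_R + O(μ), and t(μ), and open neighbourhoods N of 0 and M(μ) of 0 such that, writing g̃(y;μ) = g(y; ν(μ), s_L(μ), s_R(μ), t(μ)): (i) for μ ∈ (−μ₀, 0], f(·;μ) on N and g̃(·;μ) on M(μ) are differentiably conjugate; (ii) for μ ∈ (0, μ₀) with a_R > 0, f has a stable fixed point x_R > 0 and an unstable fixed point x_L < 0 in N, g̃ has corresponding fixed points y_R > 0 and y_L < 0 in M(μ), and f and g̃ are differentiably conjugate on the basins of attraction of their stable fixed points and on the basins of repulsion of their unstable fixed points; (iii) for μ ∈ (0, μ₀) with a_R < 0, f on (x_L, f_R⁻¹(x_L)) and g̃ on (y_L, g̃_R⁻¹(y_L)) are differentiably conjugate, and f on {x ∈ N | x < 0} and g̃ on {y ∈ M(μ) | y < 0} are differentiably conjugate. Moreover, for any δ > 0 one can choose μ₀ > 0, N = (−p, p), and M(μ) = (q⁻(μ), q⁺(μ)) so that (1 − δ)p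 < |q⁻(μ)| < (1 + δ)p and (1 − δ)p < |q⁺(μ)| < (1 + δ)p for all μ ∈ (−μ₀, μ₀). -/

import Mathlib

/-- The piecewise-smooth family: `f(x;μ) = f_L(x;μ)` for `x ≤ 0` and `f_R(x;μ)` for `x > 0`
(these agree when the continuity condition `f_L(0;μ) = f_R(0;μ)` holds). -/
noncomputable def pwFam (fL fR : ℝ → ℝ → ℝ) (μ : ℝ) : ℝ → ℝ :=
  fun x => if x ≤ 0 then fL x μ else fR x μ

/-- The extended normal form `g(y; ν, s_L, s_R, t)`. -/
noncomputable def enf (ν sL sR t : ℝ) : ℝ → ℝ :=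
  fun y => if y ≤ 0 then ν + sL * y + t * y ^ 2 else ν + sR * y

/-- `h` is a `C¹` diffeomorphism from `U` onto `V`. -/
def IsDiffeoOn (h : ℝ → ℝ) (U V : Set ℝ) : Prop :=
  Set.BijOn h U V ∧ ContDiffOn ℝ 1 h U ∧
    ∃ hinv : ℝ → ℝ, Set.InvOn hinv h U V ∧ ContDiffOn ℝ 1 hinv V

/-- `h` intertwines `f` and `g` on `U`: `h (f x) = g (h x)` for all `x ∈ U` with `f x ∈ U`. -/
def ConjRelOn (h f g : ℝ → ℝ) (U : Set ℝ) : Prop :=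
  ∀ x ∈ U, f x ∈ U → h (f x) = g (h x)

/-- `f` on `U` is differentiably conjugate to `g` on `V`. -/
def DiffConjOn (f g : ℝ → ℝ) (U V : Set ℝ) : Prop :=
  ∃ h : ℝ → ℝ, IsDiffeoOn h U V ∧ ConjRelOn h f g U

/-- The basin of attraction within `N` of a stable fixed point `p` of `F`:
points whose forward orbit stays in `N` and converges to `p`. -/
def basinAttr (F : ℝ → ℝ) (N : Set ℝ) (p : ℝ) : Set ℝ :=
  {x ∈ N | (∀ n : ℕ, F^[n] x ∈ N) ∧ Filter.Tendsto (fun n => F^[n] x) Filter.atTop (nhds p)}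

/-- The basin of repulsion within `N` of an unstable fixed point `p` of `F`:
points admitting a backward orbit in `N` converging to `p`. -/
def basinRep (F : ℝ → ℝ) (N : Set ℝ) (p : ℝ) : Set ℝ :=
  {x ∈ N | ∃ u : ℕ → ℝ, u 0 = x ∧ (∀ n, u n ∈ N) ∧ (∀ n, F (u (n + 1)) = u n) ∧
    Filter.Tendsto u Filter.atTop (nhds p)}

/-- The conclusions (i)–(iii) of Theorem 2.2, for the data `(μ₀, s_L, s_R, t, N, M)`:
writing `g̃(y;μ) = g(y; ν(μ), s_L(μ), s_R(μ), t(μ))` with `ν(μ) = f(0;μ) = f_L(0;μ)`,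
(i) for `μ ∈ (−μ₀,0]`, `f` on `N` and `g̃` on `M(μ)` are differentiably conjugate;
(ii) for `μ ∈ (0,μ₀)` and `a_R > 0`, `f` has a stable fixed point `x_R > 0` and an unstable
fixed point `x_L < 0` in `N`, `g̃` has corresponding fixed points `y_R > 0`, `y_L < 0` in `M(μ)`,
and `f`, `g̃` are differentiably conjugate on the basins of attraction of their stable fixed
points and on the basins of repulsion of their unstable fixed points;
(iii) for `μ ∈ (0,μ₀)` and `a_R < 0`, `f` on `(x_L, f_R⁻¹(x_L))` and `g̃` on `(y_L, g̃_R⁻¹(y_L))`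
are differentiably conjugate, and `f` on `{x ∈ N | x < 0}` and `g̃` on `{y ∈ M(μ) | y < 0}`
are differentiably conjugate. -/
def SnConclusion (fL fR : ℝ → ℝ → ℝ) (aR μ₀ : ℝ) (sL sR t : ℝ → ℝ)
    (N : Set ℝ) (M : ℝ → Set ℝ) : Prop :=
  (∀ μ ∈ Set.Ioo (-μ₀) μ₀, IsOpen (M μ) ∧ (0:ℝ) ∈ M μ) ∧
  (∀ μ ∈ Set.Ioc (-μ₀) 0,
    DiffConjOn (pwFam fL fR μ) (enf (fL 0 μ) (sL μ) (sR μ) (t μ)) N (M μ)) ∧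
  (0 < aR → ∀ μ ∈ Set.Ioo 0 μ₀,
    ∃ xL xR yL yR : ℝ,
      xL < 0 ∧ 0 < xR ∧ xL ∈ N ∧ xR ∈ N ∧
      yL < 0 ∧ 0 < yR ∧ yL ∈ M μ ∧ yR ∈ M μ ∧
      fL xL μ = xL ∧ fR xR μ = xR ∧
      enf (fL 0 μ) (sL μ) (sR μ) (t μ) yL = yL ∧
      enf (fL 0 μ) (sL μ) (sR μ) (t μ) yR = yR ∧
      |deriv (fun x => fR x μ) xR| < 1 ∧ 1 < |deriv (fun x => fL x μ) xL| ∧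
      DiffConjOn (pwFam fL fR μ) (enf (fL 0 μ) (sL μ) (sR μ) (t μ))
        (basinAttr (pwFam fL fR μ) N xR)
        (basinAttr (enf (fL 0 μ) (sL μ) (sR μ) (t μ)) (M μ) yR) ∧
      DiffConjOn (pwFam fL fR μ) (enf (fL 0 μ) (sL μ) (sR μ) (t μ))
        (basinRep (pwFam fL fR μ) N xL)
        (basinRep (enf (fL 0 μ) (sL μ) (sR μ) (t μ)) (M μ) yL)) ∧
  (aR < 0 → ∀ μ ∈ Set.Ioo 0 μ₀,
    ∃ xL yL w z : ℝ,
      xL < 0 ∧ fL xL μ = xL ∧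
      yL < 0 ∧ enf (fL 0 μ) (sL μ) (sR μ) (t μ) yL = yL ∧
      0 < w ∧ fR w μ = xL ∧ 0 < z ∧ fL 0 μ + sR μ * z = yL ∧
      DiffConjOn (pwFam fL fR μ) (enf (fL 0 μ) (sL μ) (sR μ) (t μ))
        (Set.Ioo xL w) (Set.Ioo yL z) ∧
      DiffConjOn (pwFam fL fR μ) (enf (fL 0 μ) (sL μ) (sR μ) (t μ))
        {x ∈ N | x < 0} {y ∈ M μ | y < 0})


namespace SN

structure DP (e i : ℝ → ℝ) : Prop where
  ce : ContDiff ℝ 1 e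
  ci : ContDiff ℝ 1 i
  li : ∀ x, i (e x) = x
  ri : ∀ y, e (i y) = y

lemma DP.symm {e i : ℝ → ℝ} (h : DP e i) : DP i e := ⟨h.ci, h.ce, h.ri, h.li⟩

lemma DP.deriv_mul {e i : ℝ → ℝ} (h : DP e i) (x : ℝ) : deriv i (e x) * deriv e x = 1 := by
  have h1 : HasDerivAt e (deriv e x) x := (h.ce.differentiable (by norm_num) x).hasDerivAt
  have h2 : HasDerivAt i (deriv i (e x)) (e x) :=
    (h.ci.differentiable (by norm_num) (e x)).hasDerivAt
  have h3 := h2.comp x h1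
  have h4 : (i ∘ e) = id := funext h.li
  rw [h4] at h3
  exact h3.unique (hasDerivAt_id x)

lemma contDiff_of_hd {e e' : ℝ → ℝ} (hd : ∀ x, HasDerivAt e (e' x) x) (hc : Continuous e') :
    ContDiff ℝ 1 e := by
  rw [contDiff_one_iff_deriv]
  refine ⟨fun x => (hd x).differentiableAt, ?_⟩
  have : deriv e = e' := funext fun x => (hd x).deriv
  rwa [this]

/-- a function with positive continuous derivative and surjective is a diffeo -/
lemma dp_of_pos {e e' : ℝ → ℝ} (hd : ∀ x, HasDerivAt e (e' x) x) (hc : Continuous e')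
    (hp : ∀ x, 0 < e' x) (hs : Function.Surjective e) :
    StrictMono e ∧ ∃ i, DP e i ∧ StrictMono i := by
  have hm : StrictMono e := strictMono_of_deriv_pos (fun x => by rw [(hd x).deriv]; exact hp x)
  let o := StrictMono.orderIsoOfSurjective e hm hs
  have hoe : ∀ x, o x = e x := fun x => rfl
  have hri : ∀ y, e (o.symm y) = y := fun y => by rw [← hoe, o.apply_symm_apply]
  have hli : ∀ x, o.symm (e x) = x := fun x => by rw [← hoe, o.symm_apply_apply]
  have hci : Continuous o.symm := o.symm.continuous
  refine ⟨hm, o.symm, ⟨contDiff_of_hd hd hc, ?_, hli, hri⟩, o.symm.strictMono⟩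
  refine contDiff_of_hd (e' := fun y => (e' (o.symm y))⁻¹) (fun y => ?_) ?_
  · exact HasDerivAt.of_local_left_inverse hci.continuousAt (hd _) (hp _).ne'
      (Filter.Eventually.of_forall hri)
  · exact (hc.comp hci).inv₀ (fun y => (hp _).ne')

structure Koe (F φ φ' : ℝ → ℝ) (z m C : ℝ) : Prop where
  hd : ∀ x, HasDerivAt φ (φ' x) x
  cont : Continuous φ'
  fe : ∀ x, φ (F x) = m * φ x
  z0 : φ z = 0
  z1 : φ' z = 1
  surj : Function.Surjective φ
  lo : ∀ x, Real.exp (-(C * |x - z|)) ≤ φ' x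
  hi : ∀ x, φ' x ≤ Real.exp (C * |x - z|)

lemma Koe.mono {F φ φ' : ℝ → ℝ} {z m C D : ℝ} (h : Koe F φ φ' z m C) (hCD : C ≤ D) :
    Koe F φ φ' z m D := by
  refine ⟨h.hd, h.cont, h.fe, h.z0, h.z1, h.surj, fun x => ?_, fun x => ?_⟩
  · refine le_trans (Real.exp_le_exp.2 ?_) (h.lo x)
    have := mul_le_mul_of_nonneg_right hCD (abs_nonneg (x - z)); linarith
  · refine le_trans (h.hi x) (Real.exp_le_exp.2 ?_)
    exact mul_le_mul_of_nonneg_right hCD (abs_nonneg (x - z))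

lemma Koe.pos {F φ φ' : ℝ → ℝ} {z m C : ℝ} (h : Koe F φ φ' z m C) (x : ℝ) : 0 < φ' x :=
  lt_of_lt_of_le (Real.exp_pos _) (h.lo x)

lemma contr_of_deriv {F F' : ℝ → ℝ} {lam : ℝ} (hd : ∀ x, HasDerivAt F (F' x) x)
    (hhi : ∀ x, |F' x| ≤ lam) (x y : ℝ) : |F x - F y| ≤ lam * |x - y| := by
  have := Convex.norm_image_sub_le_of_norm_hasDerivWithin_le (f := F) (f' := F') (s := Set.univ)
    (C := lam) (x := y) (y := x) (fun x _ => (hd x).hasDerivWithinAt) (fun x _ => hhi x)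
    convex_univ (Set.mem_univ _) (Set.mem_univ _)
  simpa [Real.norm_eq_abs] using this

lemma koenigs {F F' : ℝ → ℝ} {z c lam K : ℝ} (hc : 0 < c) (hl : lam < 1) (hK : 0 ≤ K)
    (hd : ∀ x, HasDerivAt F (F' x) x) (hlip : ∀ x y, |F' x - F' y| ≤ K * |x - y|)
    (hlo : ∀ x, c ≤ |F' x|) (hhi : ∀ x, |F' x| ≤ lam) (hs : ∀ x y, 0 < F' x * F' y)
    (hz : F z = z) (hsurj : Function.Surjective F) :
    ∃ φ φ', Koe F φ φ' z (F' z) (K / (c * (1 - lam))) := by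
  set m := F' z with hm
  have hl0 : 0 ≤ lam := le_trans (abs_nonneg _) (hhi z)
  have hm0 : m ≠ 0 := by
    intro h; have := hlo z; rw [← hm, h, abs_zero] at this; linarith
  have hr : ∀ x, 0 < F' x / m := fun x => by
    have := hs x z
    rw [← hm] at this
    rcases mul_pos_iff.1 this with h | h
    · exact div_pos h.1 h.2
    · exact div_pos_of_neg_of_neg h.1 h.2
  have habs1 : ∀ x y, |F' x / F' y - 1| ≤ K / c * |x - y| := fun x y => by
    have hy : F' y ≠ 0 := by
      intro h; have := hlo y; rw [h, abs_zero] at this; linarith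
    have : F' x / F' y - 1 = (F' x - F' y) / F' y := by field_simp
    rw [this, abs_div]
    calc |F' x - F' y| / |F' y| ≤ K * |x - y| / c :=
          div_le_div₀ (by positivity) (hlip x y) hc (hlo y)
      _ = K / c * |x - y| := by ring
  have hlog : ∀ x, |Real.log (F' x / m)| ≤ K / c * |x - z| := fun x => by
    rw [abs_le]
    constructor
    · have h1 : Real.log (m / F' x) ≤ m / F' x - 1 :=
        Real.log_le_sub_one_of_pos (by have := inv_pos.2 (hr x); rwa [inv_div] at this)
      have h2 := (abs_le.1 (habs1 z x)).2
      have h3 : Real.log (F' x / m) = - Real.log (m / F' x) := by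
        rw [← Real.log_inv, inv_div]
      rw [abs_sub_comm] at h2
      rw [h3]; linarith
    · have h1 : Real.log (F' x / m) ≤ F' x / m - 1 := Real.log_le_sub_one_of_pos (hr x)
      have h2 := (abs_le.1 (habs1 x z)).2
      linarith
  have hF'c : Continuous F' := by
    have : LipschitzWith ⟨K, hK⟩ F' := LipschitzWith.of_dist_le_mul (fun x y => by
      rw [Real.dist_eq, Real.dist_eq]; exact hlip x y)
    exact this.continuous
  have hFc : Continuous F := continuous_iff_continuousAt.2 fun x => (hd x).continuousAt
  have hctr := contr_of_deriv hd hhi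
  have hit : ∀ n x, |F^[n] x - z| ≤ lam ^ n * |x - z| := by
    intro n
    induction n with
    | zero => intro x; simp
    | succ n ih =>
      intro x
      rw [Function.iterate_succ_apply']
      calc |F (F^[n] x) - z| = |F (F^[n] x) - F z| := by rw [hz]
        _ ≤ lam * |F^[n] x - z| := hctr _ _
        _ ≤ lam * (lam ^ n * |x - z|) := mul_le_mul_of_nonneg_left (ih x) hl0
        _ = lam ^ (n + 1) * |x - z| := by ring
  let q : ℕ → ℝ → ℝ := fun n x => Real.log (F' (F^[n] x) / m)
  have hq : ∀ n x, |q n x| ≤ K / c * |x - z| * lam ^ n := fun n x => by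
    calc |q n x| ≤ K / c * |F^[n] x - z| := hlog _
      _ ≤ K / c * (lam ^ n * |x - z|) := mul_le_mul_of_nonneg_left (hit n x) (by positivity)
      _ = _ := by ring
  have hgs : Summable (fun n : ℕ => lam ^ n) := summable_geometric_of_lt_one hl0 hl
  have hqs : ∀ x, Summable (fun n => q n x) := fun x =>
    Summable.of_norm_bounded (hgs.mul_left (K / c * |x - z|)) (fun n => hq n x)
  let S : ℝ → ℝ := fun x => ∑' n, q n x
  have hSb : ∀ x, |S x| ≤ K / (c * (1 - lam)) * |x - z| := fun x => by
    have h1 := tsum_of_norm_bounded (f := fun n => q n x) ((hasSum_geometric_of_lt_one hl0 hl).mul_left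
      (K / c * |x - z|)) (fun n => hq n x)
    rw [Real.norm_eq_abs] at h1
    have h2 : K / c * |x - z| * (1 - lam)⁻¹ = K / (c * (1 - lam)) * |x - z| := by
      have : (1 - lam) ≠ 0 := by linarith
      field_simp
    rw [← h2]; exact h1
  have hSf : ∀ x, S x = Real.log (F' x / m) + S (F x) := fun x => by
    have := (hqs x).tsum_eq_zero_add
    simpa [S, q] using this
  have hSc : Continuous S := by
    rw [continuous_iff_continuousAt]
    intro x
    have hco : ContinuousOn S (Metric.ball z (|x - z| + 1)) := by
      refine continuousOn_tsum (u := fun n => K / c * (|x - z| + 1) * lam ^ n) (fun n => ?_)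
        (hgs.mul_left _) (fun n y hy => ?_)
      · refine Continuous.continuousOn ?_
        refine Continuous.log ?_ (fun y => (hr _).ne')
        exact (hF'c.comp (hFc.iterate n)).div_const m
      · refine le_trans (hq n y) ?_
        have : |y - z| ≤ |x - z| + 1 := by
          have := Metric.mem_ball.1 hy; rw [Real.dist_eq] at this; exact this.le
        gcongr
    refine hco.continuousAt (Metric.isOpen_ball.mem_nhds ?_)
    rw [Metric.mem_ball, Real.dist_eq]; linarith
  let φ' : ℝ → ℝ := fun x => Real.exp (S x)
  have hφ'c : Continuous φ' := Real.continuous_exp.comp hSc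
  let φ : ℝ → ℝ := fun x => ∫ t in z..x, φ' t
  have hφd : ∀ x, HasDerivAt φ (φ' x) x := fun x =>
    intervalIntegral.integral_hasDerivAt_right (hφ'c.intervalIntegrable _ _)
      hφ'c.stronglyMeasurable.stronglyMeasurableAtFilter hφ'c.continuousAt
  have hφ0 : φ z = 0 := by simp [φ]
  have hSz : S z = 0 := by
    have := hSb z
    simpa using this
  have hφfe : ∀ x, φ (F x) = m * φ x := by
    have key : ∀ x, HasDerivAt (fun x => φ (F x) - m * φ x) 0 x := fun x => by
      have h1 := ((hφd (F x)).comp x (hd x)).sub ((hφd x).const_mul m)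
      refine HasDerivAt.congr_deriv h1 ?_
      change Real.exp (S (F x)) * F' x - m * Real.exp (S x) = (0:ℝ)
      rw [hSf x, Real.exp_add, Real.exp_log (hr x)]
      field_simp
      ring
    intro x
    have h2 := is_const_of_deriv_eq_zero (fun x => (key x).differentiableAt)
      (fun x => (key x).deriv) x z
    simp only [hz, hφ0] at h2
    linarith
  have hml : |m| < 1 := lt_of_le_of_lt (hhi z) hl
  refine ⟨φ, φ', hφd, hφ'c, hφfe, hφ0, by simp [φ', hSz], ?_, fun x => ?_, fun x => ?_⟩
  · intro y
    have hφc : Continuous φ := continuous_iff_continuousAt.2 fun x => (hφd x).continuousAt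
    have hφm : StrictMono φ := strictMono_of_deriv_pos
      (fun x => by rw [(hφd x).deriv]; exact Real.exp_pos _)
    have hlt1 : φ (z - 1) < 0 := by rw [← hφ0]; exact hφm (by linarith)
    have hlt2 : 0 < φ (z + 1) := by rw [← hφ0]; exact hφm (by linarith)
    have ht : Filter.Tendsto (fun n : ℕ => m ^ n * y) Filter.atTop (nhds 0) := by
      have := (tendsto_pow_atTop_nhds_zero_of_abs_lt_one hml).mul_const y
      simpa using this
    obtain ⟨n, hn⟩ := (ht.eventually (Ioo_mem_nhds hlt1 hlt2)).exists
    obtain ⟨x, -, hx⟩ := intermediate_value_Icc (by linarith : z - 1 ≤ z + 1) hφc.continuousOn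
      ⟨hn.1.le, hn.2.le⟩
    obtain ⟨w, hw⟩ := hsurj.iterate n x
    refine ⟨w, ?_⟩
    have hitφ : ∀ (k : ℕ) (u : ℝ), φ (F^[k] u) = m ^ k * φ u := by
      intro k
      induction k with
      | zero => intro u; simp
      | succ k ih => intro u; rw [Function.iterate_succ_apply', hφfe, ih]; ring
    have h1 := hitφ n w
    rw [hw, hx] at h1
    exact (mul_left_cancel₀ (pow_ne_zero n hm0) h1).symm
  · exact Real.exp_le_exp.2 (abs_le.1 (hSb x)).1
  · exact Real.exp_le_exp.2 (abs_le.1 (hSb x)).2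

end SN


namespace SN

lemma surj_of_ge {e e' : ℝ → ℝ} {c : ℝ} (hd : ∀ x, HasDerivAt e (e' x) x) (hc : 0 < c)
    (hlo : ∀ x, c ≤ e' x) : Function.Surjective e := by
  have hcont : Continuous e := continuous_iff_continuousAt.2 fun x => (hd x).continuousAt
  have hmono : Monotone (fun x => e x - c * x) := by
    have h1 : ∀ x, HasDerivAt (fun x => e x - c * x) (e' x - c * 1) x := fun x =>
      (hd x).sub ((hasDerivAt_id x).const_mul c)
    refine monotone_of_deriv_nonneg (fun x => (h1 x).differentiableAt) (fun x => ?_)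
    rw [(h1 x).deriv]; linarith [hlo x]
  refine hcont.surjective ?_ ?_
  · refine Filter.tendsto_atTop_mono' _ (f₁ := fun x => e 0 + c * x) ?_ ?_
    · filter_upwards [Filter.eventually_ge_atTop 0] with x hx
      have := hmono hx; simp at this; linarith
    · exact Filter.tendsto_atTop_add_const_left _ _ (Filter.tendsto_id.const_mul_atTop hc)
  · refine Filter.tendsto_atBot_mono' _ (f₁ := fun x => e 0 + c * x) ?_ ?_
    · filter_upwards [Filter.eventually_le_atBot 0] with x hx
      have := hmono hx; simp at this; linarith
    · exact Filter.tendsto_atBot_add_const_left _ _ (Filter.tendsto_id.const_mul_atBot hc)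

lemma lip_cont {F' : ℝ → ℝ} {K : ℝ} (hK : 0 ≤ K) (hlip : ∀ x y, |F' x - F' y| ≤ K * |x - y|) :
    Continuous F' := by
  have : LipschitzWith ⟨K, hK⟩ F' := LipschitzWith.of_dist_le_mul (fun x y => by
    rw [Real.dist_eq, Real.dist_eq]; exact hlip x y)
  exact this.continuous

structure Exg (e e' : ℝ → ℝ) (b B K z : ℝ) : Prop where
  b1 : 1 < b
  K0 : 0 ≤ K
  hd : ∀ x, HasDerivAt e (e' x) x
  lo : ∀ x, b ≤ e' x
  hi : ∀ x, e' x ≤ B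
  lip : ∀ x y, |e' x - e' y| ≤ K * |x - y|
  fix : e z = z

lemma Exg.main {e e' : ℝ → ℝ} {b B K z : ℝ} (h : Exg e e' b B K z) :
    StrictMono e ∧ ∃ i, DP e i ∧ StrictMono i ∧
      ∃ φ φ', Koe i φ φ' z (1 / e' z) (K / (1 / B * (1 - 1 / b))) := by
  have hb := h.b1
  have hpos : ∀ x, 0 < e' x := fun x => by linarith [h.lo x]
  have hB : 0 < B := lt_of_lt_of_le (hpos 0) (h.hi 0)
  obtain ⟨hm, i, hi, him⟩ := dp_of_pos h.hd (lip_cont h.K0 h.lip) hpos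
    (surj_of_ge h.hd (by linarith) h.lo)
  refine ⟨hm, i, hi, him, ?_⟩
  have hid : ∀ y, HasDerivAt i (1 / e' (i y)) y := fun y => by
    have h1 := (hi.ci.differentiable (by norm_num) y).hasDerivAt
    have h2 := hi.deriv_mul (i y)
    rw [hi.ri, (h.hd _).deriv] at h2
    rwa [eq_div_of_mul_eq (hpos _).ne' h2] at h1
  have hhi : ∀ y, |1 / e' (i y)| ≤ 1 / b := fun y => by
    rw [abs_of_pos (one_div_pos.2 (hpos _))]
    exact one_div_le_one_div_of_le (by linarith) (h.lo _)
  have hiz : i z = z := by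
    have := hi.li z; rwa [h.fix] at this
  have hb1 : 1 / b < 1 := by rw [div_lt_one (by linarith)]; exact hb
  have := koenigs (F := i) (F' := fun y => 1 / e' (i y)) (z := z) (c := 1 / B) (lam := 1 / b)
    (K := K) (by positivity) hb1 h.K0 hid ?_ ?_ hhi ?_ hiz (fun x => ⟨e x, hi.li x⟩)
  · simpa only [hiz] using this
  · intro x y
    have h1 : |i x - i y| ≤ |x - y| := by
      refine le_trans (contr_of_deriv hid hhi x y) ?_
      have := abs_nonneg (x - y); nlinarith
    have h2 : 1 / e' (i x) - 1 / e' (i y) = (e' (i y) - e' (i x)) / (e' (i x) * e' (i y)) := by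
      have := (hpos (i x)).ne'; have := (hpos (i y)).ne'
      field_simp
    have h3 : 1 ≤ e' (i x) * e' (i y) := by nlinarith [h.lo (i x), h.lo (i y)]
    rw [h2, abs_div, abs_of_pos (by linarith : 0 < e' (i x) * e' (i y))]
    refine le_trans (div_le_self (abs_nonneg _) h3) ?_
    rw [abs_sub_comm]
    exact le_trans (h.lip _ _) (mul_le_mul_of_nonneg_left h1 h.K0)
  · intro x
    rw [abs_of_pos (one_div_pos.2 (hpos _))]
    exact one_div_le_one_div_of_le (hpos _) (h.hi _)
  · intro x y
    exact mul_pos (one_div_pos.2 (hpos _)) (one_div_pos.2 (hpos _))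

structure Ctg (F F' : ℝ → ℝ) (c lam K z : ℝ) : Prop where
  c0 : 0 < c
  l1 : lam < 1
  K0 : 0 ≤ K
  hd : ∀ x, HasDerivAt F (F' x) x
  lo : ∀ x, c ≤ |F' x|
  hi : ∀ x, |F' x| ≤ lam
  sg : (∀ x, 0 < F' x) ∨ (∀ x, F' x < 0)
  lip : ∀ x y, |F' x - F' y| ≤ K * |x - y|
  fix : F z = z

lemma Ctg.main {F F' : ℝ → ℝ} {c lam K z : ℝ} (h : Ctg F F' c lam K z) :
    ∃ i, DP F i ∧ ((∀ x, 0 < F' x) → StrictMono F ∧ StrictMono i) ∧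
      ((∀ x, F' x < 0) → StrictAnti F ∧ StrictAnti i) ∧
      ∃ φ φ', Koe F φ φ' z (F' z) (K / (c * (1 - lam))) := by
  have key : ∃ i, DP F i ∧ ((∀ x, 0 < F' x) → StrictMono F ∧ StrictMono i) ∧
      ((∀ x, F' x < 0) → StrictAnti F ∧ StrictAnti i) := by
    rcases h.sg with hs | hs
    · obtain ⟨hm, i, hi, him⟩ := dp_of_pos h.hd (lip_cont h.K0 h.lip) hs
        (surj_of_ge h.hd h.c0 (fun x => by have := h.lo x; rwa [abs_of_pos (hs x)] at this))
      exact ⟨i, hi, fun _ => ⟨hm, him⟩, fun hn => absurd (hn 0) (hs 0).not_gt⟩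
    · have hd' : ∀ x, HasDerivAt (fun x => - F x) (- F' x) x := fun x => (h.hd x).neg
      obtain ⟨hm, i, hi, him⟩ := dp_of_pos hd' (lip_cont h.K0 h.lip).neg
        (fun x => neg_pos.2 (hs x))
        (surj_of_ge hd' h.c0 (fun x => by have := h.lo x; rwa [abs_of_neg (hs x)] at this))
      have hri : ∀ y, F (i (-y)) = y := fun y => by have := hi.ri (-y); linarith
      have hli : ∀ x, i (- F x) = x := hi.li
      refine ⟨fun y => i (-y), ⟨contDiff_of_hd h.hd (lip_cont h.K0 h.lip),
        hi.ci.comp contDiff_neg, hli, hri⟩,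
        fun hn => absurd (hn 0) (hs 0).not_gt, fun _ => ⟨?_, ?_⟩⟩
      · intro x y hxy
        have := hm hxy
        simpa using this
      · intro x y hxy
        exact him (neg_lt_neg hxy)
  obtain ⟨i, hi, hp, hn⟩ := key
  refine ⟨i, hi, hp, hn, koenigs h.c0 h.l1 h.K0 h.hd h.lip h.lo h.hi ?_ h.fix
    (fun y => ⟨i y, hi.ri y⟩)⟩
  intro x y
  rcases h.sg with hs | hs
  · exact mul_pos (hs x) (hs y)
  · exact mul_pos_of_neg_of_neg (hs x) (hs y)

lemma conjK {F G φ φ' ψ ψ' : ℝ → ℝ} {z w m C κ : ℝ} (kf : Koe F φ φ' z m C)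
    (kg : Koe G ψ ψ' w m C) (hκ : 0 < κ) :
    ∃ h k, DP h k ∧ StrictMono h ∧ (∀ x, h (F x) = G (h x)) ∧ (∀ x, ψ (h x) = κ * φ x) := by
  obtain ⟨hφm, iφ, hφ, hφi⟩ := dp_of_pos kf.hd kf.cont kf.pos kf.surj
  obtain ⟨hψm, iψ, hψ, hψi⟩ := dp_of_pos kg.hd kg.cont kg.pos kg.surj
  refine ⟨fun x => iψ (κ * φ x), fun y => iφ (κ⁻¹ * ψ y), ⟨?_, ?_, ?_, ?_⟩, ?_, ?_, ?_⟩
  · exact hψ.ci.comp (contDiff_const.mul hφ.ce)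
  · exact hφ.ci.comp (contDiff_const.mul hψ.ce)
  · intro x; simp only [hψ.ri]; rw [inv_mul_cancel_left₀ hκ.ne', hφ.li]
  · intro x; simp only [hφ.ri]; rw [mul_inv_cancel_left₀ hκ.ne', hψ.li]
  · intro x y hxy
    exact hψi (mul_lt_mul_of_pos_left (hφm hxy) hκ)
  · intro x
    apply hψm.injective
    simp only [kg.fe, kf.fe, hψ.ri]; ring
  · intro x; simp only [hψ.ri]

lemma mvt' {e e' : ℝ → ℝ} (hd : ∀ x, HasDerivAt e (e' x) x) (x y : ℝ) :
    ∃ ξ ∈ Set.uIcc x y, e x - e y = e' ξ * (x - y) := by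
  rcases lt_trichotomy x y with h | h | h
  · obtain ⟨ξ, hξ, h1⟩ := exists_hasDerivAt_eq_slope e e' h
      (fun t _ => (hd t).continuousAt.continuousWithinAt) (fun t _ => hd t)
    refine ⟨ξ, by rw [Set.uIcc_of_le h.le]; exact ⟨hξ.1.le, hξ.2.le⟩, ?_⟩
    rw [h1]; have : y - x ≠ 0 := by linarith
    field_simp; ring
  · exact ⟨x, Set.left_mem_uIcc, by subst h; simp⟩
  · obtain ⟨ξ, hξ, h1⟩ := exists_hasDerivAt_eq_slope e e' h
      (fun t _ => (hd t).continuousAt.continuousWithinAt) (fun t _ => hd t)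
    refine ⟨ξ, by rw [Set.uIcc_of_ge h.le]; exact ⟨hξ.1.le, hξ.2.le⟩, ?_⟩
    rw [h1]; have : x - y ≠ 0 := by linarith
    field_simp

lemma Koe.inc {F φ φ' : ℝ → ℝ} {z m C P E : ℝ} (kf : Koe F φ φ' z m C) (hC : 0 ≤ C)
    (hz : |z| ≤ P) (hE : Real.exp (3 * C * P) ≤ E) {x y : ℝ} (hx : |x| ≤ 2 * P)
    (hy : |y| ≤ 2 * P) : |x - y| ≤ E * |φ x - φ y| ∧ |φ x - φ y| ≤ E * |x - y| := by
  obtain ⟨ξ, hξ, h1⟩ := mvt' kf.hd x y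
  have hE0 : 0 < E := lt_of_lt_of_le (Real.exp_pos _) hE
  have h2 : |ξ - z| ≤ 3 * P := by
    rw [abs_le] at *
    rcases Set.mem_uIcc.1 hξ with h | h <;> constructor <;> linarith [h.1, h.2]
  have h3 : C * |ξ - z| ≤ 3 * C * P := by nlinarith
  have h4 : φ' ξ ≤ E := le_trans (kf.hi ξ) (le_trans (Real.exp_le_exp.2 h3) hE)
  have h5 : 1 ≤ E * φ' ξ := by
    have h6 := kf.lo ξ
    have h7 : Real.exp (C * |ξ - z|) ≤ E := le_trans (Real.exp_le_exp.2 h3) hE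
    calc 1 = Real.exp (C * |ξ - z|) * Real.exp (-(C * |ξ - z|)) := by
          rw [← Real.exp_add]; simp
      _ ≤ E * φ' ξ := mul_le_mul h7 h6 (Real.exp_pos _).le hE0.le
  rw [h1, abs_mul, abs_of_pos (kf.pos ξ)]
  constructor
  · have := abs_nonneg (x - y); nlinarith
  · exact mul_le_mul_of_nonneg_right h4 (abs_nonneg _)

lemma conj_est {F G φ φ' ψ ψ' : ℝ → ℝ} {z w m C ν ρ : ℝ} (hC : 0 ≤ C) (kf : Koe F φ φ' z m C)
    (kg : Koe G ψ ψ' w m C) (h1 : φ ν = ρ * φ 0) (h2 : ψ ν = ρ * ψ 0)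
    (hs : (0 < z ∧ 0 < w ∧ ν ≠ 0) ∨ (z < 0 ∧ w < 0 ∧ ν ≠ 0) ∨ (z = 0 ∧ w = 0 ∧ ν = 0)) :
    ∃ h k, DP h k ∧ StrictMono h ∧ h 0 = 0 ∧ h ν = ν ∧ (∀ x, h (F x) = G (h x)) ∧
      (ν = 0 → deriv h 0 = 1) ∧
      (∀ P E, |z| ≤ P → |w| ≤ P → |ν| ≤ P → Real.exp (3 * C * P) ≤ E → E ^ 4 < 2 →
        ∀ x, |x| ≤ P → |h x| ≤ E ^ 4 * |x| ∧ |x| ≤ E ^ 4 * |h x|) := by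
  obtain ⟨hφm, -⟩ := dp_of_pos kf.hd kf.cont kf.pos kf.surj
  obtain ⟨hψm, -⟩ := dp_of_pos kg.hd kg.cont kg.pos kg.surj
  have hk : ∃ κ, 0 < κ ∧ κ * φ 0 = ψ 0 ∧ (ν = 0 → κ = 1) := by
    rcases hs with ⟨a, b, c⟩ | ⟨a, b, c⟩ | ⟨a, b, c⟩
    · have p1 := hφm a; have p2 := hψm b; rw [kf.z0] at p1; rw [kg.z0] at p2
      exact ⟨ψ 0 / φ 0, div_pos_of_neg_of_neg p2 p1, div_mul_cancel₀ _ p1.ne,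
        fun h => absurd h c⟩
    · have p1 := hφm a; have p2 := hψm b; rw [kf.z0] at p1; rw [kg.z0] at p2
      exact ⟨ψ 0 / φ 0, div_pos p2 p1, div_mul_cancel₀ _ p1.ne',
        fun h => absurd h c⟩
    · refine ⟨1, one_pos, ?_, fun _ => rfl⟩
      have p1 := kf.z0; have p2 := kg.z0; rw [a] at p1; rw [b] at p2; rw [p1, p2]; simp
  obtain ⟨κ, hκ, hκ0, hκ1⟩ := hk
  obtain ⟨h, k, hp, hm, hfe, hψ⟩ := conjK kf kg hκ
  have hh0 : h 0 = 0 := hψm.injective (by rw [hψ, hκ0])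
  have hhν : h ν = ν := hψm.injective (by rw [hψ, h1, h2, ← hκ0]; ring)
  refine ⟨h, k, hp, hm, hh0, hhν, hfe, ?_, ?_⟩
  · intro hν
    obtain ⟨a, b⟩ : z = 0 ∧ w = 0 := by
      rcases hs with h | h | h
      · exact absurd hν h.2.2
      · exact absurd hν h.2.2
      · exact ⟨h.1, h.2.1⟩
    have d1 := (hp.ce.differentiable (by norm_num) 0).hasDerivAt
    have d2 : HasDerivAt ψ (ψ' (h 0)) (h 0) := kg.hd (h 0)
    have d3 := d2.comp 0 d1
    have d4 : (ψ ∘ h) = φ := funext fun x => by simp [hψ, hκ1 hν]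
    rw [d4] at d3
    have d5 := d3.unique (kf.hd 0)
    have p1 := kf.z1; have p2 := kg.z1; rw [a] at p1; rw [b] at p2
    rw [hh0, p1, p2] at d5; linarith
  · intro P E hz hw hνP hE hE4 x hx
    have hE1 : 1 ≤ E := le_trans (Real.one_le_exp (by
      have := abs_nonneg z; have : 0 ≤ P := by linarith
      positivity)) hE
    have hP : 0 ≤ P := le_trans (abs_nonneg z) hz
    have hP0 : |(0:ℝ)| ≤ 2 * P := by simp; linarith
    have hκb : κ ≤ E ^ 2 ∧ 1 ≤ E ^ 2 * κ := by
      by_cases hν : ν = 0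
      · rw [hκ1 hν]; constructor <;> nlinarith
      · have a := kf.inc hC hz hE (x := ν) (y := 0) (by linarith) hP0
        have b := kg.inc hC hw hE (x := ν) (y := 0) (by linarith) hP0
        have c : |ψ ν - ψ 0| = κ * |φ ν - φ 0| := by
          rw [h1, h2, ← hκ0, ← abs_of_pos hκ, ← abs_mul, abs_of_pos hκ]; ring_nf
        have hν0 : 0 < |ν| := abs_pos.2 hν
        simp only [sub_zero] at a b
        rw [c] at b
        set d := |φ ν - φ 0|
        constructor
        · by_contra hcon; push Not at hcon
          have : E ^ 2 * d < κ * d := by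
            have : 0 < d := by by_contra hd; nlinarith [a.1]
            exact mul_lt_mul_of_pos_right hcon this
          nlinarith [a.1, b.2]
        · have : |ν| * 1 ≤ |ν| * (E ^ 2 * κ) := by
            have e1 : E * (κ * d) ≤ E * (κ * (E * |ν|)) := by gcongr; exact a.2
            nlinarith [b.1]
          exact le_of_mul_le_mul_left this hν0
    have hx2 : |x| ≤ 2 * P := by linarith
    have a := kf.inc hC hz hE hx2 hP0
    have c : ∀ x, ψ (h x) - ψ 0 = κ * (φ x - φ 0) := fun x => by rw [hψ, ← hκ0]; ring
    have hup : E * (κ * |φ x - φ 0|) ≤ E ^ 4 * |x| := by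
      have e1 : E * (κ * |φ x - φ 0|) ≤ E * (E ^ 2 * (E * |x|)) := by
        have := a.2; simp only [sub_zero] at this
        gcongr; exact hκb.1
      calc _ ≤ _ := e1
        _ = _ := by ring
    have hlt : E * (κ * |φ x - φ 0|) ≤ E ^ 4 * P :=
      le_trans hup (by gcongr)
    have c' : |ψ (h x) - ψ 0| = κ * |φ x - φ 0| := by
      rw [c, abs_mul, abs_of_pos hκ]
    have hh2 : |h x| ≤ 2 * P := by
      rcases eq_or_lt_of_le hP with hP' | hP'
      · have : x = 0 := by rw [← hP'] at hx; simpa using hx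
        rw [this, hh0]; exact hP0
      rw [abs_le]
      constructor
      · by_contra hcon; push Not at hcon
        have b := kg.inc hC hw hE (x := -(2 * P)) (y := 0) (by rw [abs_neg, abs_of_nonneg]; linarith) hP0
        rw [sub_zero, abs_neg, abs_of_nonneg (by linarith : 0 ≤ 2 * P)] at b
        have m1 := hψm hcon
        have m2 : ψ (-(2 * P)) < ψ 0 := hψm (by linarith)
        rw [abs_of_neg (by linarith)] at b
        rw [abs_of_neg (by linarith)] at c'
        rw [← c'] at hlt
        nlinarith [b.1]
      · by_contra hcon; push Not at hcon
        have b := kg.inc hC hw hE (x := (2 * P)) (y := 0) (by rw [abs_of_nonneg]; linarith) hP0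
        rw [sub_zero, abs_of_nonneg (by linarith : 0 ≤ 2 * P)] at b
        have m1 := hψm hcon
        have m2 : ψ 0 < ψ (2 * P) := hψm (by linarith)
        rw [abs_of_pos (by linarith)] at b
        rw [abs_of_pos (by linarith)] at c'
        rw [← c'] at hlt
        nlinarith [b.1]
    have b := kg.inc hC hw hE hh2 hP0
    rw [c', sub_zero] at b
    rw [sub_zero] at a
    refine ⟨le_trans b.1 hup, ?_⟩
    have e0 : 0 ≤ |φ x - φ 0| := abs_nonneg _
    calc |x| ≤ E * |φ x - φ 0| := a.1
      _ ≤ E * (E ^ 2 * κ * |φ x - φ 0|) := by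
          have := mul_le_mul_of_nonneg_right hκb.2 e0
          gcongr; linarith
      _ = E ^ 3 * (κ * |φ x - φ 0|) := by ring
      _ ≤ E ^ 3 * (E * |h x|) := mul_le_mul_of_nonneg_left b.2 (by positivity)
      _ = E ^ 4 * |h x| := by ring

end SN


namespace SN

lemma glue {l r : ℝ → ℝ} {c : ℝ} (hl : ContDiffAt ℝ 1 l c) (hr : ContDiffAt ℝ 1 r c)
    (h0 : l c = r c) (h1 : deriv l c = deriv r c) :
    ContDiffAt ℝ 1 (fun x => if x ≤ c then l x else r x) c := by
  have el : ∀ᶠ x in nhds c, ContDiffAt ℝ 1 l x := hl.eventually (by simp)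
  have er : ∀ᶠ x in nhds c, ContDiffAt ℝ 1 r x := hr.eventually (by simp)
  obtain ⟨u, hu, huo, hcu⟩ := eventually_nhds_iff.1 (el.and er)
  set f : ℝ → ℝ := fun x => if x ≤ c then l x else r x with hf
  set f' : ℝ → ℝ := fun x => if x ≤ c then deriv l x else deriv r x with hf'
  have dl : ∀ x ∈ u, HasDerivAt l (deriv l x) x := fun x hx =>
    ((hu x hx).1.differentiableAt (by norm_num)).hasDerivAt
  have dr : ∀ x ∈ u, HasDerivAt r (deriv r x) x := fun x hx =>
    ((hu x hx).2.differentiableAt (by norm_num)).hasDerivAt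
  have hd : ∀ x ∈ u, HasDerivAt f (f' x) x := by
    intro x hx
    rcases lt_trichotomy x c with h | h | h
    · have e1 : f =ᶠ[nhds x] l := by
        filter_upwards [Iio_mem_nhds h] with y hy
        simp [hf, (Set.mem_Iio.1 hy).le]
      have e2 : f' x = deriv l x := by simp [hf', h.le]
      rw [e2]; exact (dl x hx).congr_of_eventuallyEq e1
    · subst h
      have e2 : f' x = deriv l x := by simp [hf']
      rw [e2, ← hasDerivWithinAt_univ, ← Set.Iic_union_Ici (a := x)]
      refine HasDerivWithinAt.union ?_ ?_
      · refine (dl x hx).hasDerivWithinAt.congr (fun y hy => ?_) ?_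
        · simp only [hf]; rw [if_pos (Set.mem_Iic.1 hy)]
        · simp [hf]
      · rw [h1]
        refine (dr x hx).hasDerivWithinAt.congr (fun y hy => ?_) ?_
        · rcases eq_or_lt_of_le (Set.mem_Ici.1 hy) with h | h
          · subst h; simp [hf, h0]
          · simp [hf, h.not_ge]
        · simp [hf, h0]
    · have e1 : f =ᶠ[nhds x] r := by
        filter_upwards [Ioi_mem_nhds h] with y hy
        simp [hf, (Set.mem_Ioi.1 hy).not_ge]
      have e2 : f' x = deriv r x := by simp [hf', h.not_ge]
      rw [e2]; exact (dr x hx).congr_of_eventuallyEq e1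
  have cdl : ContinuousOn (deriv l) u := by
    have : ContDiffOn ℝ 1 l u := fun x hx => (hu x hx).1.contDiffWithinAt
    exact this.continuousOn_deriv_of_isOpen huo (by norm_num)
  have cdr : ContinuousOn (deriv r) u := by
    have : ContDiffOn ℝ 1 r u := fun x hx => (hu x hx).2.contDiffWithinAt
    exact this.continuousOn_deriv_of_isOpen huo (by norm_num)
  have hc : ContinuousOn f' u := by
    refine ContinuousOn.if (p := fun x => x ≤ c) ?_ ?_ ?_
    · intro a ha
      have : a = c := by
        have h2 := ha.2
        have : {x : ℝ | x ≤ c} = Set.Iic c := rfl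
        rw [this, frontier_Iic] at h2; exact h2
      rw [this, h1]
    · exact cdl.mono Set.inter_subset_left
    · exact cdr.mono Set.inter_subset_left
  rw [contDiffAt_one_iff]
  refine ⟨fun x => ContinuousLinearMap.toSpanSingleton ℝ (f' x), u, huo.mem_nhds hcu, ?_,
    fun x hx => ?_⟩
  · exact (ContinuousLinearMap.toSpanSingletonCLE (𝕜 := ℝ) (E := ℝ)).continuous.comp_continuousOn hc
  · exact (hd x hx).hasFDerivAt

lemma glue_global {l r : ℝ → ℝ} {c : ℝ} (hl : ContDiff ℝ 1 l) (hr : ContDiff ℝ 1 r)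
    (h0 : l c = r c) (h1 : deriv l c = deriv r c) :
    ContDiff ℝ 1 (fun x => if x ≤ c then l x else r x) := by
  rw [contDiff_iff_contDiffAt]
  intro x
  rcases lt_trichotomy x c with h | h | h
  · refine hl.contDiffAt.congr_of_eventuallyEq ?_
    filter_upwards [Iio_mem_nhds h] with y hy
    simp [(Set.mem_Iio.1 hy).le]
  · subst h; exact glue hl.contDiffAt hr.contDiffAt h0 h1
  · refine hr.contDiffAt.congr_of_eventuallyEq ?_
    filter_upwards [Ioi_mem_nhds h] with y hy
    simp [(Set.mem_Ioi.1 hy).not_ge]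

lemma ext_exists (A : Set ℝ) (F h₀ : ℝ → ℝ) (Gi : ℝ → ℝ → ℝ) :
    ∃ h : ℝ → ℝ, (∀ x ∈ A, h x = h₀ x) ∧
      ∀ x, x ∉ A → (∃ n : ℕ, F^[n] x ∈ A) → h x = Gi x (h (F x)) := by
  classical
  let H : ℕ → ℝ → ℝ := fun n => Nat.rec h₀ (fun _ Hn => fun x => Gi x (Hn (F x))) n
  have hH0 : ∀ x, H 0 x = h₀ x := fun x => rfl
  have hHs : ∀ n x, H (n + 1) x = Gi x (H n (F x)) := fun n x => rfl
  refine ⟨fun x => if hx : ∃ n : ℕ, F^[n] x ∈ A then H (Nat.find hx) x else 0, ?_, ?_⟩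
  · intro x hx
    have hx' : ∃ n : ℕ, F^[n] x ∈ A := ⟨0, hx⟩
    simp only [dif_pos hx']
    have : Nat.find hx' = 0 := by rw [Nat.find_eq_zero]; exact hx
    rw [this, hH0]
  · intro x hxA hx
    have hFx : ∃ n : ℕ, F^[n] (F x) ∈ A := by
      obtain ⟨n, hn⟩ := hx
      cases n with
      | zero => exact absurd hn hxA
      | succ n => exact ⟨n, by rwa [Function.iterate_succ_apply] at hn⟩
    simp only [dif_pos hx, dif_pos hFx]
    have : Nat.find hx = Nat.find hFx + 1 :=
      Nat.find_comp_succ hx hFx hxA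
    rw [this, hHs]

/-- piecewise map -/
noncomputable def pc (c : ℝ) (l r : ℝ → ℝ) : ℝ → ℝ := fun x => if x ≤ c then l x else r x

lemma EXT {Fl Fr Gli Gri h₀ : ℝ → ℝ} {c : ℝ} {U A : Set ℝ} {Q : ℝ → ℝ → Prop}
    (hFl : ContDiff ℝ 1 Fl) (hFr : ContDiff ℝ 1 Fr) (hGl : ContDiff ℝ 1 Gli)
    (hGr : ContDiff ℝ 1 Gri) (hFc : Fl c = Fr c) (hU : IsOpen U) (hA : IsOpen A)
    (hreach : ∀ x ∈ U, ∃ n : ℕ, (pc c Fl Fr)^[n] x ∈ A)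
    (hFU : ∀ x ∈ U, pc c Fl Fr x ∈ U) (hFA : ∀ x ∈ A, pc c Fl Fr x ∈ A)
    (hh₀ : ∀ x ∈ A, ContDiffAt ℝ 1 h₀ x)
    (hfe : ∀ x ∈ A, h₀ x = if x ≤ c then Gli (h₀ (pc c Fl Fr x)) else Gri (h₀ (pc c Fl Fr x)))
    (hkA : c ∈ U → Fl c ∈ A) (hk0 : Gli (h₀ (Fl c)) = Gri (h₀ (Fl c)))
    (hk1 : deriv Gli (h₀ (Fl c)) * deriv Fl c = deriv Gri (h₀ (Fl c)) * deriv Fr c)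
    (hQ0 : ∀ x ∈ A, Q x (h₀ x))
    (hQ1 : ∀ x ∈ U, x ∉ A → ∀ v, Q (pc c Fl Fr x) v → Q x (if x ≤ c then Gli v else Gri v)) :
    ∃ h : ℝ → ℝ, (∀ x ∈ A, h x = h₀ x) ∧ (∀ x ∈ U, ContDiffAt ℝ 1 h x) ∧
      (∀ x ∈ U, h x = if x ≤ c then Gli (h (pc c Fl Fr x)) else Gri (h (pc c Fl Fr x))) ∧
      (∀ x ∈ U, Q x (h x)) := by
  set F := pc c Fl Fr with hF
  obtain ⟨h, hhA, hhs⟩ := ext_exists A F h₀ (fun x v => if x ≤ c then Gli v else Gri v)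
  have hfe' : ∀ x ∈ U, h x = if x ≤ c then Gli (h (F x)) else Gri (h (F x)) := by
    intro x hx
    by_cases hxA : x ∈ A
    · rw [hhA x hxA, hfe x hxA, hhA _ (hFA x hxA)]
    · exact hhs x hxA (hreach x hx)
  refine ⟨h, hhA, ?_, hfe', ?_⟩
  · have key : ∀ n : ℕ, ∀ x ∈ U, F^[n] x ∈ A → ContDiffAt ℝ 1 h x := by
      intro n
      induction n with
      | zero =>
        intro x hx hxA
        refine (hh₀ x hxA).congr_of_eventuallyEq ?_
        filter_upwards [hA.mem_nhds hxA] with y hy using hhA y hy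
      | succ n ih =>
        intro x hx hxA
        rw [Function.iterate_succ_apply] at hxA
        have h1 := ih (F x) (hFU x hx) hxA
        rcases lt_trichotomy x c with hc | hc | hc
        · have e1 : h =ᶠ[nhds x] (Gli ∘ h ∘ Fl) := by
            filter_upwards [hU.mem_nhds hx, Iio_mem_nhds hc] with y hy hyc
            have hyc' : y ≤ c := le_of_lt hyc
            rw [hfe' y hy, if_pos hyc', hF]
            simp [pc, hyc']
          refine ContDiffAt.congr_of_eventuallyEq ?_ e1
          have e2 : F x = Fl x := by simp [hF, pc, hc.le]
          rw [e2] at h1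
          exact hGl.contDiffAt.comp x (h1.comp x hFl.contDiffAt)
        · subst hc
          have e2 : F x = Fl x := by simp [hF, pc]
          rw [e2] at h1
          have hFA' := hkA hx
          have hv : h (Fl x) = h₀ (Fl x) := hhA _ hFA'
          have e1 : h =ᶠ[nhds x] (fun y => if y ≤ x then (Gli ∘ h ∘ Fl) y else (Gri ∘ h ∘ Fr) y) := by
            filter_upwards [hU.mem_nhds hx] with y hy
            rw [hfe' y hy, hF]
            by_cases hyc : y ≤ x
            · simp [pc, hyc]
            · simp [pc, hyc]
          refine ContDiffAt.congr_of_eventuallyEq ?_ e1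
          have h1r : ContDiffAt ℝ 1 h (Fr x) := by rw [← hFc]; exact h1
          refine glue (hGl.contDiffAt.comp x (h1.comp x hFl.contDiffAt))
            (hGr.contDiffAt.comp x (h1r.comp x hFr.contDiffAt)) ?_ ?_
          · simp only [Function.comp]
            rw [← hFc, hv, hk0]
          · have dh := (h1.differentiableAt (by norm_num)).hasDerivAt
            have dFl := (hFl.differentiable (by norm_num) x).hasDerivAt
            have dFr := (hFr.differentiable (by norm_num) x).hasDerivAt
            have dGl := (hGl.differentiable (by norm_num) (h (Fl x))).hasDerivAt
            have dGr := (hGr.differentiable (by norm_num) (h (Fl x))).hasDerivAt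
            have d1 : HasDerivAt (Gli ∘ h ∘ Fl) _ x := HasDerivAt.comp x dGl (HasDerivAt.comp x dh dFl)
            have dh' : HasDerivAt h (deriv h (Fl x)) (Fr x) := by rw [← hFc]; exact dh
            have dGr' : HasDerivAt Gri (deriv Gri (h (Fl x))) ((h ∘ Fr) x) := by
              simp only [Function.comp]; rw [← hFc]; exact dGr
            have d2 : HasDerivAt (Gri ∘ h ∘ Fr) _ x := HasDerivAt.comp x dGr' (HasDerivAt.comp x dh' dFr)
            rw [d1.deriv, d2.deriv, hv]
            linear_combination (deriv h (Fl x)) * hk1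
        · have e1 : h =ᶠ[nhds x] (Gri ∘ h ∘ Fr) := by
            filter_upwards [hU.mem_nhds hx, Ioi_mem_nhds hc] with y hy hyc
            have hyc' : ¬ y ≤ c := not_le.2 hyc
            rw [hfe' y hy, if_neg hyc', hF]
            simp [pc, hyc']
          refine ContDiffAt.congr_of_eventuallyEq ?_ e1
          have e2 : F x = Fr x := by simp [hF, pc, hc.not_ge]
          rw [e2] at h1
          exact hGr.contDiffAt.comp x (h1.comp x hFr.contDiffAt)
    intro x hx
    obtain ⟨n, hn⟩ := hreach x hx
    exact key n x hx hn
  · have key : ∀ n : ℕ, ∀ x ∈ U, F^[n] x ∈ A → Q x (h x) := by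
      intro n
      induction n with
      | zero => intro x hx hxA; rw [hhA x hxA]; exact hQ0 x hxA
      | succ n ih =>
        intro x hx hxA
        rw [Function.iterate_succ_apply] at hxA
        have h1 := ih (F x) (hFU x hx) hxA
        by_cases hxA' : x ∈ A
        · rw [hhA x hxA']; exact hQ0 x hxA'
        · rw [hfe' x hx]
          exact hQ1 x hx hxA' _ h1
    intro x hx
    obtain ⟨n, hn⟩ := hreach x hx
    exact key n x hx hn

end SN


namespace SN

def SS (c x v : ℝ) : Prop := (x < c ∧ v < c) ∨ (x = c ∧ v = c) ∨ (c < x ∧ c < v)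

lemma SS.symm {c x v : ℝ} (h : SS c x v) : SS c v x := by
  rcases h with h | h | h
  · exact Or.inl ⟨h.2, h.1⟩
  · exact Or.inr (Or.inl ⟨h.2, h.1⟩)
  · exact Or.inr (Or.inr ⟨h.2, h.1⟩)

lemma SS.le {c x v : ℝ} (h : SS c x v) : x ≤ c ↔ v ≤ c := by
  rcases h with ⟨h, h'⟩ | ⟨h, h'⟩ | ⟨h, h'⟩ <;> constructor <;> intro _ <;> linarith

lemma SS.lt {c x v : ℝ} (h : SS c x v) : x < c ↔ v < c := by
  rcases h with ⟨h, h'⟩ | ⟨h, h'⟩ | ⟨h, h'⟩ <;> constructor <;> intro _ <;> linarith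

lemma SS.gt {c x v : ℝ} (h : SS c x v) : c < x ↔ c < v := by
  rcases h with ⟨h, h'⟩ | ⟨h, h'⟩ | ⟨h, h'⟩ <;> constructor <;> intro _ <;> linarith

lemma SS.ge {c x v : ℝ} (h : SS c x v) : c ≤ x ↔ c ≤ v := by
  rcases h with ⟨h, h'⟩ | ⟨h, h'⟩ | ⟨h, h'⟩ <;> constructor <;> intro _ <;> linarith

lemma SS.eq {c x v : ℝ} (h : SS c x v) : x = c ↔ v = c := by
  rcases h with ⟨h, h'⟩ | ⟨h, h'⟩ | ⟨h, h'⟩ <;> constructor <;> intro _ <;> linarith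

lemma SS_of_mono {h : ℝ → ℝ} (hm : StrictMono h) {c : ℝ} (hc : h c = c) (x : ℝ) : SS c x (h x) := by
  rcases lt_trichotomy x c with hx | hx | hx
  · left; exact ⟨hx, by have := hm hx; rwa [hc] at this⟩
  · right; left; exact ⟨hx, by rw [hx, hc]⟩
  · right; right; exact ⟨hx, by have := hm hx; rwa [hc] at this⟩

structure GC (f g h k : ℝ → ℝ) (U V : Set ℝ) : Prop where
  m1 : ∀ x ∈ U, h x ∈ V
  m2 : ∀ y ∈ V, k y ∈ U
  i1 : ∀ x ∈ U, k (h x) = x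
  i2 : ∀ y ∈ V, h (k y) = y
  c1 : ∀ x ∈ U, ContDiffAt ℝ 1 h x
  c2 : ∀ y ∈ V, ContDiffAt ℝ 1 k y
  rel : ∀ x ∈ U, f x ∈ U → h (f x) = g (h x)

/-- half of the two sided extension -/
structure HH (Fl Fli Fr Fri : ℝ → ℝ) (c : ℝ) (U A : Set ℝ) : Prop where
  dl : DP Fl Fli
  dr : DP Fr Fri
  k0 : Fl c = Fr c
  oU : IsOpen U
  oA : IsOpen A
  reach : ∀ x ∈ U, ∃ n : ℕ, (pc c Fl Fr)^[n] x ∈ A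
  FU : ∀ x ∈ U, pc c Fl Fr x ∈ U
  FA : ∀ x ∈ A, pc c Fl Fr x ∈ A
  kA : c ∈ U → Fl c ∈ A

lemma HALF {Fl Fli Fr Fri Gl Gli Gr Gri h₀ : ℝ → ℝ} {c a : ℝ} {U A V B : Set ℝ}
    (hF : HH Fl Fli Fr Fri c U A) (hG : HH Gl Gli Gr Gri c V B) (ch : ContDiff ℝ 1 h₀)
    (hrel : ∀ x ∈ A, h₀ (pc c Fl Fr x) = pc c Gl Gr (h₀ x))
    (hk : h₀ (Fl c) = Gl c) (hk1 : deriv Fl c * deriv Gr c = deriv Fr c * deriv Gl c)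
    (hQA : ∀ x ∈ A, h₀ x ∈ V ∧ SS c x (h₀ x) ∧ SS a x (h₀ x))
    (hst : ∀ x ∈ U, x ∉ A → ∀ v, v ∈ V → SS c (pc c Fl Fr x) v → SS a (pc c Fl Fr x) v →
      (if x ≤ c then Gli v else Gri v) ∈ V ∧ SS c x (if x ≤ c then Gli v else Gri v) ∧
        SS a x (if x ≤ c then Gli v else Gri v)) :
    ∃ h : ℝ → ℝ, (∀ x ∈ A, h x = h₀ x) ∧ (∀ x ∈ U, ContDiffAt ℝ 1 h x) ∧
      (∀ x ∈ U, h (pc c Fl Fr x) = pc c Gl Gr (h x)) ∧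
      (∀ x ∈ U, h x ∈ V ∧ SS c x (h x) ∧ SS a x (h x)) := by
  have e1 : Gli (Gl c) = c := hG.dl.li c
  have e2 : Gri (Gl c) = c := by rw [hG.k0]; exact hG.dr.li c
  have X0 : ∀ x ∈ A, h₀ x = if x ≤ c then Gli (h₀ (pc c Fl Fr x)) else Gri (h₀ (pc c Fl Fr x)) := by
    intro x hx
    have hle := (hQA x hx).2.1.le
    rw [hrel x hx]
    by_cases hxc : x ≤ c
    · have hv := hle.1 hxc
      simp [pc, hxc, hv, hG.dl.li]
    · have hv : ¬ h₀ x ≤ c := fun q => hxc (hle.2 q)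
      simp [pc, hxc, hv, hG.dr.li]
  have X1 : Gli (h₀ (Fl c)) = Gri (h₀ (Fl c)) := by
    rw [hk, e1, e2]
  have X2 : deriv Gli (h₀ (Fl c)) * deriv Fl c = deriv Gri (h₀ (Fl c)) * deriv Fr c := by
    rw [hk]
    have d1 := hG.dl.deriv_mul c
    have d2 := hG.dr.deriv_mul c
    rw [← hG.k0] at d2
    have n1 : deriv Gl c ≠ 0 := right_ne_zero_of_mul_eq_one d1
    have n2 : deriv Gr c ≠ 0 := right_ne_zero_of_mul_eq_one d2
    have d1' : deriv Gli (Gl c) = 1 / deriv Gl c := by rw [eq_div_iff n1]; exact d1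
    have d2' : deriv Gri (Gl c) = 1 / deriv Gr c := by rw [eq_div_iff n2]; exact d2
    rw [d1', d2', div_mul_eq_mul_div, div_mul_eq_mul_div, div_eq_div_iff n1 n2]
    linear_combination hk1
  obtain ⟨h, h1, h2, h3, h4⟩ := EXT (Q := fun x v => v ∈ V ∧ SS c x v ∧ SS a x v)
    hF.dl.ce hF.dr.ce hG.dl.ci hG.dr.ci hF.k0 hF.oU hF.oA hF.reach hF.FU hF.FA
    (h₀ := h₀) (fun x _ => ch.contDiffAt) X0 hF.kA X1 X2 hQA
    (fun x hx hxA v hv => hst x hx hxA v hv.1 hv.2.1 hv.2.2)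
  refine ⟨h, h1, h2, fun x hx => ?_, h4⟩
  have hle := (h4 x hx).2.1.le
  have h3x := h3 x hx
  by_cases hxc : x ≤ c
  · have hv := hle.1 hxc
    rw [if_pos hxc] at h3x
    have : pc c Gl Gr (h x) = Gl (h x) := by simp [pc, hv]
    rw [this, h3x, hG.dl.ri]
  · have hv : ¬ h x ≤ c := fun q => hxc (hle.2 q)
    rw [if_neg hxc] at h3x
    have : pc c Gl Gr (h x) = Gr (h x) := by simp [pc, hv]
    rw [this, h3x, hG.dr.ri]

lemma INVL {F G h k h₀ k₀ Fli Fri Fl Fr Gl Gr : ℝ → ℝ} {c : ℝ} {U A V B : Set ℝ}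
    (dl : DP Fl Fli) (dr : DP Fr Fri) (hF : F = pc c Fl Fr) (hG : G = pc c Gl Gr)
    (reach : ∀ x ∈ U, ∃ n : ℕ, F^[n] x ∈ A) (FU : ∀ x ∈ U, F x ∈ U)
    (hA : ∀ x ∈ A, h x = h₀ x) (kB : ∀ y ∈ B, k y = k₀ y) (hAB : ∀ x ∈ A, h₀ x ∈ B)
    (hk0 : ∀ x, k₀ (h₀ x) = x)
    (rh : ∀ x ∈ U, h (F x) = G (h x)) (rk : ∀ y ∈ V, k (G y) = F (k y))
    (sh : ∀ x ∈ U, h x ∈ V ∧ SS c x (h x)) (sk : ∀ y ∈ V, k y ∈ U ∧ SS c y (k y)) :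
    ∀ x ∈ U, k (h x) = x := by
  have key : ∀ n : ℕ, ∀ x ∈ U, F^[n] x ∈ A → k (h x) = x := by
    intro n
    induction n with
    | zero =>
      intro x hx hxA
      simp only [Function.iterate_zero, id] at hxA
      rw [hA x hxA, kB _ (hAB x hxA), hk0]
    | succ n ih =>
      intro x hx hxA
      rw [Function.iterate_succ_apply] at hxA
      have h1 := ih (F x) (FU x hx) hxA
      rw [rh x hx, rk _ (sh x hx).1] at h1
      have l1 := (sh x hx).2.le
      have l2 := (sk _ (sh x hx).1).2.le
      rw [hF] at h1
      by_cases hxc : x ≤ c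
      · have h3 : k (h x) ≤ c := l2.1 (l1.1 hxc)
        simp only [pc, hxc, h3, if_true] at h1
        have := congrArg Fli h1
        rwa [dl.li, dl.li] at this
      · have h3 : ¬ k (h x) ≤ c := fun q => hxc (l1.2 (l2.2 q))
        simp only [pc, hxc, h3, if_false] at h1
        have := congrArg Fri h1
        rwa [dr.li, dr.li] at this
  intro x hx
  obtain ⟨n, hn⟩ := reach x hx
  exact key n x hx hn

lemma TWO {Fl Fli Fr Fri Gl Gli Gr Gri h₀ k₀ : ℝ → ℝ} {c a : ℝ} {U A V B : Set ℝ}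
    (hF : HH Fl Fli Fr Fri c U A) (hG : HH Gl Gli Gr Gri c V B) (hd : DP h₀ k₀)
    (hrel : ∀ x ∈ A, h₀ (pc c Fl Fr x) = pc c Gl Gr (h₀ x))
    (hk : h₀ (Fl c) = Gl c) (hk1 : deriv Fl c * deriv Gr c = deriv Fr c * deriv Gl c)
    (hAB : ∀ x ∈ A, h₀ x ∈ B) (hBA : ∀ y ∈ B, k₀ y ∈ A) (hAU : A ⊆ U) (hBV : B ⊆ V)
    (sc : ∀ x, SS c x (h₀ x)) (sa : ∀ x, SS a x (h₀ x))
    (hst : ∀ x ∈ U, x ∉ A → ∀ v, v ∈ V → SS c (pc c Fl Fr x) v → SS a (pc c Fl Fr x) v →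
      (if x ≤ c then Gli v else Gri v) ∈ V ∧ SS c x (if x ≤ c then Gli v else Gri v) ∧
        SS a x (if x ≤ c then Gli v else Gri v))
    (hst' : ∀ x ∈ V, x ∉ B → ∀ v, v ∈ U → SS c (pc c Gl Gr x) v → SS a (pc c Gl Gr x) v →
      (if x ≤ c then Fli v else Fri v) ∈ U ∧ SS c x (if x ≤ c then Fli v else Fri v) ∧
        SS a x (if x ≤ c then Fli v else Fri v)) :
    ∃ h k : ℝ → ℝ, GC (pc c Fl Fr) (pc c Gl Gr) h k U V ∧ (∀ x ∈ A, h x = h₀ x) ∧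
      (∀ x ∈ U, h (pc c Fl Fr x) = pc c Gl Gr (h x)) ∧
      (∀ x ∈ U, SS c x (h x) ∧ SS a x (h x)) := by
  have sc' : ∀ y, SS c y (k₀ y) := fun y => by have := (sc (k₀ y)).symm; rwa [hd.ri] at this
  have sa' : ∀ y, SS a y (k₀ y) := fun y => by have := (sa (k₀ y)).symm; rwa [hd.ri] at this
  obtain ⟨h, h1, h2, h3, h4⟩ := HALF hF hG hd.ce hrel hk hk1
    (fun x hx => ⟨hBV (hAB x hx), sc x, sa x⟩) hst
  obtain ⟨k, k1, k2, k3, k4⟩ := HALF (h₀ := k₀) hG hF hd.ci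
    (fun y hy => by
      have := hrel _ (hBA y hy)
      rw [hd.ri] at this
      rw [← this, hd.li])
    (by rw [← hk, hd.li]) (by linear_combination -hk1)
    (fun x hx => ⟨hAU (hBA x hx), sc' x, sa' x⟩) hst'
  refine ⟨h, k, ⟨fun x hx => (h4 x hx).1, fun y hy => (k4 y hy).1, ?_, ?_, h2, k2,
    fun x hx _ => h3 x hx⟩, h1, h3, fun x hx => (h4 x hx).2⟩
  · exact INVL hF.dl hF.dr rfl rfl hF.reach hF.FU h1 k1 hAB hd.li h3 k3
      (fun x hx => ⟨(h4 x hx).1, (h4 x hx).2.1⟩) (fun x hx => ⟨(k4 x hx).1, (k4 x hx).2.1⟩)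
  · exact INVL hG.dl hG.dr rfl rfl hG.reach hG.FU k1 h1 hBA hd.ri k3 h3
      (fun x hx => ⟨(k4 x hx).1, (k4 x hx).2.1⟩) (fun x hx => ⟨(h4 x hx).1, (h4 x hx).2.1⟩)

/-- restriction of a monotone conjugacy on an open interval set -/
lemma GC.mono {f g h k : ℝ → ℝ} {U V U' V' : Set ℝ} (H : GC f g h k U V) (hU : U' ⊆ U) (hV : V' ⊆ V)
    (hm : ∀ x ∈ U, x ∈ U' ↔ h x ∈ V') : GC f g h k U' V' := by
  refine ⟨fun x hx => (hm x (hU hx)).1 hx, fun y hy => ?_, fun x hx => H.i1 x (hU hx),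
    fun y hy => H.i2 y (hV hy), fun x hx => H.c1 x (hU hx), fun y hy => H.c2 y (hV hy),
    fun x hx hfx => H.rel x (hU hx) (hU hfx)⟩
  rw [hm _ (H.m2 y (hV hy)), H.i2 y (hV hy)]; exact hy

lemma GC.congr {f g f₁ g₁ h k : ℝ → ℝ} {U V : Set ℝ} (H : GC f g h k U V)
    (hf : ∀ x ∈ U, f₁ x = f x) (hg : ∀ y ∈ V, g₁ y = g y) : GC f₁ g₁ h k U V := by
  refine ⟨H.m1, H.m2, H.i1, H.i2, H.c1, H.c2, fun x hx hfx => ?_⟩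
  rw [hf x hx] at hfx ⊢
  rw [hg _ (H.m1 x hx)]; exact H.rel x hx hfx

/-- monotonicity of conjugacies on the line -/
lemma GC.smono {f g h k : ℝ → ℝ} (H : GC f g h k Set.univ Set.univ)
    {a b : ℝ} (hab : a < b) (hh : h a < h b) : StrictMono h := by
  have hc : Continuous h := continuous_iff_continuousAt.2 fun x => (H.c1 x trivial).continuousAt
  have hi : Function.Injective h := fun x y e => by rw [← H.i1 x trivial, ← H.i1 y trivial, e]
  rcases hc.strictMono_of_inj hi with h1 | h1
  · exact h1
  · exact absurd (h1 hab) (not_lt.2 hh.le)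

end SN


namespace SN

structure Mod (fl fl' fr fr' : ℝ → ℝ) (b B c lam K ν xl xr : ℝ) : Prop where
  el : Exg fl fl' b B K xl
  cr : Ctg fr fr' c lam K xr
  l0 : fl 0 = ν
  r0 : fr 0 = ν

structure Side (fl fli fr fri : ℝ → ℝ) (b c lam ν xl xr : ℝ) : Prop where
  b1 : 1 < b
  c0 : 0 < c
  lm0 : 0 < lam
  lm1 : lam < 1
  dl : DP fl fli
  dr : DP fr fri
  ml : StrictMono fl
  mli : StrictMono fli
  l0 : fl 0 = ν
  r0 : fr 0 = ν
  fxl : fl xl = xl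
  fxr : fr xr = xr
  exl : ∀ x y, b * |x - y| ≤ |fl x - fl y|
  cor : ∀ x y, |fr x - fr y| ≤ lam * |x - y|
  lor : ∀ x y, c * |x - y| ≤ |fr x - fr y|

section
variable {fl fli fr fri : ℝ → ℝ} {b c lam ν xl xr : ℝ}

lemma Side.li0 (S : Side fl fli fr fri b c lam ν xl xr) : fli ν = 0 := by
  rw [← S.l0, S.dl.li]
lemma Side.ri0 (S : Side fl fli fr fri b c lam ν xl xr) : fri ν = 0 := by
  rw [← S.r0, S.dr.li]
lemma Side.lixl (S : Side fl fli fr fri b c lam ν xl xr) : fli xl = xl := by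
  have := S.dl.li xl; rwa [S.fxl] at this
lemma Side.rixr (S : Side fl fli fr fri b c lam ν xl xr) : fri xr = xr := by
  have := S.dr.li xr; rwa [S.fxr] at this

lemma Side.xrb (S : Side fl fli fr fri b c lam ν xl xr) : (1 - lam) * |xr| ≤ |ν| := by
  have h := S.cor 0 xr
  rw [S.r0, S.fxr, zero_sub, abs_neg] at h
  have h2 := abs_sub_abs_le_abs_sub xr ν
  rw [abs_sub_comm] at h2
  linarith

lemma Side.xlb (S : Side fl fli fr fri b c lam ν xl xr) : (b - 1) * |xl| ≤ |ν| := by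
  have h := S.exl 0 xl
  rw [S.l0, S.fxl, zero_sub, abs_neg] at h
  have h2 := abs_sub ν xl
  linarith

lemma Side.xr_pos (S : Side fl fli fr fri b c lam ν xl xr) (h : 0 < ν) : 0 < xr := by
  by_contra hx
  push Not at hx
  have h1 := S.cor 0 xr
  rw [S.r0, S.fxr, zero_sub, abs_neg, abs_of_nonpos hx, abs_of_nonneg (by linarith)] at h1
  nlinarith [S.lm1]

lemma Side.xr_neg (S : Side fl fli fr fri b c lam ν xl xr) (h : ν < 0) : xr < 0 := by
  by_contra hx
  push Not at hx
  have h1 := S.cor 0 xr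
  rw [S.r0, S.fxr, zero_sub, abs_neg, abs_of_nonneg hx, abs_of_nonpos (by linarith)] at h1
  nlinarith [S.lm1]

lemma Side.xl_neg (S : Side fl fli fr fri b c lam ν xl xr) (h : 0 < ν) : xl < 0 := by
  by_contra hx
  push Not at hx
  have h1 := S.exl 0 xl
  have h2 := S.ml.monotone hx
  rw [S.l0, S.fxl] at h1 h2
  rw [zero_sub, abs_neg, abs_of_nonneg hx, abs_of_nonpos (by linarith)] at h1
  nlinarith [S.b1]

lemma Side.xl_pos (S : Side fl fli fr fri b c lam ν xl xr) (h : ν < 0) : 0 < xl := by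
  by_contra hx
  push Not at hx
  have h1 := S.exl 0 xl
  have h2 := S.ml.monotone hx
  rw [S.l0, S.fxl] at h1 h2
  rw [zero_sub, abs_neg, abs_of_nonpos hx, abs_of_nonneg (by linarith)] at h1
  nlinarith [S.b1]

lemma Side.x0 (S : Side fl fli fr fri b c lam ν xl xr) (h : ν = 0) : xl = 0 ∧ xr = 0 := by
  have h1 := S.xlb
  have h2 := S.xrb
  rw [h, abs_zero] at h1 h2
  have hb := S.b1
  have hl := S.lm1
  constructor
  · have : |xl| ≤ 0 := by
      by_contra q; push Not at q; nlinarith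
    exact abs_nonpos_iff.1 this
  · have : |xr| ≤ 0 := by
      by_contra q; push Not at q; nlinarith
    exact abs_nonpos_iff.1 this

lemma iter_contr {F : ℝ → ℝ} {z q : ℝ} (hq0 : 0 ≤ q) (hq : q < 1)
    (h : ∀ x, |F x - z| ≤ q * |x - z|) (x : ℝ) :
    (∀ n : ℕ, |F^[n] x - z| ≤ q ^ n * |x - z|) ∧
    Filter.Tendsto (fun n => F^[n] x) Filter.atTop (nhds z) := by
  have key : ∀ n : ℕ, |F^[n] x - z| ≤ q ^ n * |x - z| := by
    intro n
    induction n with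
    | zero => simp
    | succ n ih =>
      rw [Function.iterate_succ_apply', pow_succ]
      have := h (F^[n] x)
      nlinarith [mul_le_mul_of_nonneg_left ih hq0]
  refine ⟨key, ?_⟩
  have h0 : Filter.Tendsto (fun n : ℕ => q ^ n * |x - z|) Filter.atTop (nhds 0) := by
    have := (tendsto_pow_atTop_nhds_zero_of_lt_one hq0 hq).mul_const (|x - z|)
    simpa using this
  have := squeeze_zero_norm (f := fun n => F^[n] x - z) key h0
  exact tendsto_sub_nhds_zero_iff.1 this

lemma Side.tr (S : Side fl fli fr fri b c lam ν xl xr) (x : ℝ) :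
    Filter.Tendsto (fun n => fr^[n] x) Filter.atTop (nhds xr) :=
  (iter_contr S.lm0.le S.lm1 (fun x => by have := S.cor x xr; rwa [S.fxr] at this) x).2

lemma Side.tl (S : Side fl fli fr fri b c lam ν xl xr) (x : ℝ) :
    Filter.Tendsto (fun n => fli^[n] x) Filter.atTop (nhds xl) := by
  have hb : 0 < b := by linarith [S.b1]
  refine (iter_contr (q := 1 / b) (by positivity) (by rw [div_lt_one hb]; exact S.b1)
    (fun x => ?_) x).2
  have := S.exl (fli x) xl
  rw [S.dl.ri, S.fxl] at this
  rw [div_mul_eq_mul_div, le_div_iff₀ hb]; linarith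

end

structure Cj (F G h k : ℝ → ℝ) (ν z w C : ℝ) : Prop where
  dp : DP h k
  sm : StrictMono h
  h0 : h 0 = 0
  hν : h ν = ν
  rel : ∀ x, h (F x) = G (h x)
  d1 : ν = 0 → deriv h 0 = 1
  est : ∀ P E, |z| ≤ P → |w| ≤ P → |ν| ≤ P → Real.exp (3 * C * P) ≤ E → E ^ 4 < 2 →
        ∀ x, |x| ≤ P → |h x| ≤ E ^ 4 * |x| ∧ |x| ≤ E ^ 4 * |h x|

lemma mod_side {fl fl' fr fr' : ℝ → ℝ} {b B c lam K ν xl xr : ℝ}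
    (M : Mod fl fl' fr fr' b B c lam K ν xl xr) :
    ∃ fli fri, Side fl fli fr fri b c lam ν xl xr ∧
      ((∀ x, 0 < fr' x) → StrictMono fr ∧ StrictMono fri) ∧
      ((∀ x, fr' x < 0) → StrictAnti fr ∧ StrictAnti fri) ∧
      (∃ φ φ', Koe fli φ φ' xl (1 / fl' xl) (K / (1 / B * (1 - 1 / b)))) ∧
      (∃ φ φ', Koe fr φ φ' xr (fr' xr) (K / (c * (1 - lam)))) := by
  obtain ⟨ml, fli, dl, mli, hk⟩ := M.el.main
  obtain ⟨fri, dr, hp, hn, hk'⟩ := M.cr.main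
  refine ⟨fli, fri, ⟨M.el.b1, M.cr.c0, ?_, M.cr.l1, dl, dr, ml, mli, M.l0, M.r0, M.el.fix, M.cr.fix,
    ?_, contr_of_deriv M.cr.hd M.cr.hi, ?_⟩, hp, hn, hk, hk'⟩
  · exact lt_of_lt_of_le M.cr.c0 ((M.cr.lo 0).trans (M.cr.hi 0))
  · intro x y
    obtain ⟨ξ, -, e⟩ := mvt' M.el.hd x y
    rw [e, abs_mul]
    exact mul_le_mul_of_nonneg_right ((M.el.lo ξ).trans (le_abs_self _)) (abs_nonneg _)
  · intro x y
    obtain ⟨ξ, -, e⟩ := mvt' M.cr.hd x y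
    rw [e, abs_mul]
    exact mul_le_mul_of_nonneg_right (M.cr.lo ξ) (abs_nonneg _)

structure Pair (fl fli fr fri gl gli gr gri hL kL hR kR : ℝ → ℝ)
    (b c lam C ν xl xr yl yr : ℝ) : Prop where
  f : Side fl fli fr fri b c lam ν xl xr
  g : Side gl gli gr gri b c lam ν yl yr
  L : Cj fl gl hL kL ν xl yl C
  R : Cj fr gr hR kR ν xr yr C
  kink : deriv fl 0 * deriv gr 0 = deriv fr 0 * deriv gl 0

lemma pair {fl fl' fr fr' gl gl' gr gr' : ℝ → ℝ} {b B c lam K ν xl xr yl yr C : ℝ}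
    (M : Mod fl fl' fr fr' b B c lam K ν xl xr) (M' : Mod gl gl' gr gr' b B c lam K ν yl yr)
    (eL : gl' yl = fl' xl) (eR : gr' yr = fr' xr) (hk : fl' 0 * gr' 0 = fr' 0 * gl' 0)
    (hC0 : 0 ≤ C) (hCl : K / (1 / B * (1 - 1 / b)) ≤ C) (hCr : K / (c * (1 - lam)) ≤ C) :
    ∃ fli fri gli gri hL kL hR kR,
      Pair fl fli fr fri gl gli gr gri hL kL hR kR b c lam C ν xl xr yl yr ∧
      ((∀ x, 0 < fr' x) → StrictMono fr ∧ StrictMono fri) ∧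
      ((∀ x, fr' x < 0) → StrictAnti fr ∧ StrictAnti fri) ∧
      ((∀ x, 0 < gr' x) → StrictMono gr ∧ StrictMono gri) ∧
      ((∀ x, gr' x < 0) → StrictAnti gr ∧ StrictAnti gri) := by
  obtain ⟨fli, fri, Sf, fp, fn, ⟨φ, φ', kf⟩, ⟨φ₂, φ₂', kf2⟩⟩ := mod_side M
  obtain ⟨gli, gri, Sg, gp, gn, ⟨ψ, ψ', kg⟩, ⟨ψ₂, ψ₂', kg2⟩⟩ := mod_side M'
  have hpos : 0 < fl' xl := by linarith [M.el.lo xl, M.el.b1]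
  rw [eL] at kg
  rw [eR] at kg2
  have hsL : (0 < xl ∧ 0 < yl ∧ ν ≠ 0) ∨ (xl < 0 ∧ yl < 0 ∧ ν ≠ 0) ∨ (xl = 0 ∧ yl = 0 ∧ ν = 0) := by
    rcases lt_trichotomy ν 0 with h | h | h
    · left; exact ⟨Sf.xl_pos h, Sg.xl_pos h, h.ne⟩
    · right; right; exact ⟨(Sf.x0 h).1, (Sg.x0 h).1, h⟩
    · right; left; exact ⟨Sf.xl_neg h, Sg.xl_neg h, h.ne'⟩
  have hsR : (0 < xr ∧ 0 < yr ∧ ν ≠ 0) ∨ (xr < 0 ∧ yr < 0 ∧ ν ≠ 0) ∨ (xr = 0 ∧ yr = 0 ∧ ν = 0) := by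
    rcases lt_trichotomy ν 0 with h | h | h
    · right; left; exact ⟨Sf.xr_neg h, Sg.xr_neg h, h.ne⟩
    · right; right; exact ⟨(Sf.x0 h).2, (Sg.x0 h).2, h⟩
    · left; exact ⟨Sf.xr_pos h, Sg.xr_pos h, h.ne'⟩
  obtain ⟨hL, kL, a1, a2, a3, a4, a5, a6, a7⟩ := conj_est (ν := ν) (ρ := fl' xl) hC0
    (kf.mono hCl) (kg.mono hCl)
    (by have := kf.fe ν; rw [Sf.li0] at this; rw [this]; field_simp)
    (by have := kg.fe ν; rw [Sg.li0] at this; rw [this]; field_simp) hsL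
  obtain ⟨hR, kR, b1, b2, b3, b4, b5, b6, b7⟩ := conj_est (ν := ν) (ρ := fr' xr) hC0
    (kf2.mono hCr) (kg2.mono hCr)
    (by have := kf2.fe 0; rwa [Sf.r0] at this)
    (by have := kg2.fe 0; rwa [Sg.r0] at this) hsR
  refine ⟨fli, fri, gli, gri, hL, kL, hR, kR, ⟨Sf, Sg, ⟨a1, a2, a3, a4, ?_, a6, a7⟩,
    ⟨b1, b2, b3, b4, b5, b6, b7⟩, ?_⟩, fp, fn, gp, gn⟩
  · intro x
    have := a5 (fl x)
    rw [Sf.dl.li] at this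
    rw [this, Sg.dl.ri]
  · rw [(M.el.hd 0).deriv, (M.cr.hd 0).deriv, (M'.el.hd 0).deriv, (M'.cr.hd 0).deriv]; exact hk

end SN


namespace SN

lemma reach_gen {F : ℝ → ℝ} {z q R : ℝ} {I : Set ℝ} (hq : 1 < q)
    (h1 : ∀ y ∈ I, q * |y - z| ≤ |F y - z|) (h2 : ∀ y ∈ I, |y - z| ≤ R) {x : ℝ} (hx : x ≠ z) :
    ∃ n : ℕ, F^[n] x ∉ I := by
  by_contra hc
  push Not at hc
  have key : ∀ n : ℕ, q ^ n * |x - z| ≤ |F^[n] x - z| := by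
    intro n
    induction n with
    | zero => simp
    | succ n ih =>
      rw [Function.iterate_succ_apply', pow_succ]
      have := h1 _ (hc n)
      nlinarith
  have hp : 0 < |x - z| := abs_pos.2 (sub_ne_zero.2 hx)
  obtain ⟨n, hn⟩ := pow_unbounded_of_one_lt (R / |x - z|) hq
  rw [div_lt_iff₀ hp] at hn
  linarith [key n, h2 _ (hc n)]

lemma reach_con {F : ℝ → ℝ} {z q r : ℝ} {I : Set ℝ} (hq0 : 0 ≤ q) (hq : q < 1) (hr : 0 < r)
    (h1 : ∀ y ∈ I, |F y - z| ≤ q * |y - z|) (h2 : ∀ y ∈ I, r ≤ |y - z|) (x : ℝ) :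
    ∃ n : ℕ, F^[n] x ∉ I := by
  by_contra hc
  push Not at hc
  have key : ∀ n : ℕ, |F^[n] x - z| ≤ q ^ n * |x - z| := by
    intro n
    induction n with
    | zero => simp
    | succ n ih =>
      rw [Function.iterate_succ_apply', pow_succ]
      have := h1 _ (hc n)
      nlinarith
  have h0 : Filter.Tendsto (fun n : ℕ => q ^ n * |x - z|) Filter.atTop (nhds 0) := by
    have := (tendsto_pow_atTop_nhds_zero_of_lt_one hq0 hq).mul_const (|x - z|)
    simpa using this
  obtain ⟨n, hn⟩ := (h0.eventually (gt_mem_nhds hr)).exists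
  linarith [key n, h2 _ (hc n)]

lemma iter_mem {F : ℝ → ℝ} {U : Set ℝ} (h : ∀ x ∈ U, F x ∈ U) {x : ℝ} (hx : x ∈ U) (n : ℕ) :
    F^[n] x ∈ U := by
  induction n with
  | zero => exact hx
  | succ n ih => rw [Function.iterate_succ_apply']; exact h _ ih

lemma pc_le {c x : ℝ} {l r : ℝ → ℝ} (h : x ≤ c) : pc c l r x = l x := by simp [pc, h]
lemma pc_gt {c x : ℝ} {l r : ℝ → ℝ} (h : c < x) : pc c l r x = r x := by simp [pc, h]
lemma pc_ge {c x : ℝ} {l r : ℝ → ℝ} (h0 : l c = r c) (h : c ≤ x) : pc c l r x = r x := by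
  rcases h.eq_or_lt with h | h
  · subst h; rw [pc_le le_rfl, h0]
  · exact pc_gt h

section
variable {fl fli fr fri gl gli gr gri : ℝ → ℝ} {b c lam ν xl xr yl yr : ℝ}

lemma Side.k0 (S : Side fl fli fr fri b c lam ν xl xr) : fl 0 = fr 0 := by rw [S.l0, S.r0]
lemma Side.ki0 (S : Side fl fli fr fri b c lam ν xl xr) : fli ν = fri ν := by rw [S.li0, S.ri0]

/-- attracting case -/
lemma hh2 (S : Side fl fli fr fri b c lam ν xl xr) (m : StrictMono fr) (hν : 0 < ν) :
    HH fl fli fr fri 0 (Set.Ioi xl) (Set.Ioi 0) := by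
  have hxl := S.xl_neg hν
  have FU : ∀ x ∈ Set.Ioi xl, pc 0 fl fr x ∈ Set.Ioi xl := by
    intro x hx
    rw [Set.mem_Ioi] at *
    rcases le_or_gt x 0 with h | h
    · rw [pc_le h]; have := S.ml hx; rwa [S.fxl] at this
    · rw [pc_gt h]; have := m h; rw [S.r0] at this; linarith
  refine ⟨S.dl, S.dr, S.k0, isOpen_Ioi, isOpen_Ioi, ?_, FU, ?_, ?_⟩
  · intro x hx
    obtain ⟨n, hn⟩ := reach_gen (F := pc 0 fl fr) (z := xl) (I := Set.Ioc xl 0) (R := |xl|) S.b1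
      (fun y hy => by
        have := S.exl y xl
        rw [S.fxl] at this
        rwa [pc_le hy.2]) (fun y hy => by
          rw [abs_of_pos (by linarith [hy.1]), abs_of_neg hxl]; linarith [hy.2])
      (x := x) (ne_of_gt hx)
    refine ⟨n, ?_⟩
    by_contra q
    exact hn ⟨iter_mem FU hx n, not_lt.1 q⟩
  · intro x hx
    rw [Set.mem_Ioi] at *
    rw [pc_gt hx]; have := m hx; rw [S.r0] at this; linarith
  · intro _; rw [S.l0]; exact hν

lemma st2 (S : Side fl fli fr fri b c lam ν xl xr) (T : Side gl gli gr gri b c lam ν yl yr)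
    (hν : 0 < ν) {x v : ℝ} (hx : x ≤ 0) (hv : yl < v) (hs : SS ν (pc 0 fl fr x) v) :
    yl < gli v ∧ gli v ≤ 0 ∧ SS 0 x (gli v) ∧ SS ν x (gli v) := by
  rw [pc_le hx] at hs
  have h1 : yl < gli v := by have := T.mli hv; rwa [T.lixl] at this
  have h2 : SS 0 x (gli v) := by
    rcases hx.lt_or_eq with h | h
    · left
      refine ⟨h, ?_⟩
      have h3 := S.ml h
      rw [S.l0] at h3
      have := T.mli (hs.lt.1 h3)
      rwa [T.li0] at this
    · right; left
      refine ⟨h, ?_⟩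
      rw [h, S.l0] at hs
      rw [hs.eq.1 rfl, T.li0]
  have h3 := h2.le.1 hx
  exact ⟨h1, h3, h2, Or.inl ⟨by linarith, by linarith⟩⟩

/-- repelling case -/
lemma hh3 (S : Side fl fli fr fri b c lam ν xl xr) (m : StrictMono fr) (mi : StrictMono fri)
    (hν : 0 < ν) : HH fli fl fri fr ν (Set.Iio xr) (Set.Iio ν) := by
  have hxr := S.xr_pos hν
  have hνr : ν < xr := by have := m hxr; rwa [S.r0, S.fxr] at this
  have FU : ∀ x ∈ Set.Iio xr, pc ν fli fri x ∈ Set.Iio xr := by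
    intro x hx
    rw [Set.mem_Iio] at *
    rcases le_or_gt x ν with h | h
    · rw [pc_le h]; have := S.mli.monotone h; rw [S.li0] at this; linarith
    · rw [pc_gt h]; have := mi hx; rwa [S.rixr] at this
  refine ⟨S.dl.symm, S.dr.symm, S.ki0, isOpen_Iio, isOpen_Iio, ?_, FU, ?_, ?_⟩
  · intro x hx
    obtain ⟨n, hn⟩ := reach_gen (F := pc ν fli fri) (z := xr) (I := Set.Ico ν xr) (R := |ν - xr|)
      (q := 1 / lam) (by rw [lt_div_iff₀ S.lm0]; linarith [S.lm1])
      (fun y hy => by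
        have := S.cor (fri y) xr
        rw [S.dr.ri, S.fxr] at this
        rw [pc_ge S.ki0 hy.1, div_mul_eq_mul_div, div_le_iff₀ S.lm0]
        linarith) (fun y hy => by
          rw [abs_of_neg (by linarith [hy.2]), abs_of_neg (by linarith)]; linarith [hy.1])
      (x := x) (ne_of_lt hx)
    refine ⟨n, ?_⟩
    by_contra q
    exact hn ⟨not_lt.1 q, iter_mem FU hx n⟩
  · intro x hx
    rw [Set.mem_Iio] at *
    rw [pc_le hx.le]; have := S.mli hx; rw [S.li0] at this; linarith
  · intro _; rw [S.li0]; exact hν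

lemma st3 (S : Side fl fli fr fri b c lam ν xl xr) (T : Side gl gli gr gri b c lam ν yl yr)
    (mi : StrictMono fri) (m' : StrictMono gr)
    (hν : 0 < ν) {x v : ℝ} (hx : ν ≤ x) (hv : v < yr)
    (hs : SS 0 (pc ν fli fri x) v) :
    (if x ≤ ν then gl v else gr v) < yr ∧ SS ν x (if x ≤ ν then gl v else gr v) ∧
      SS 0 x (if x ≤ ν then gl v else gr v) := by
  have hyr := T.xr_pos hν
  have hνr : ν < yr := by have := m' hyr; rwa [T.r0, T.fxr] at this
  rcases hx.eq_or_lt with h | h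
  · subst h
    rw [pc_le le_rfl, S.li0] at hs
    have h0 : v = 0 := hs.eq.1 rfl
    rw [if_pos le_rfl, h0, T.l0]
    exact ⟨hνr, Or.inr (Or.inl ⟨rfl, rfl⟩), Or.inr (Or.inr ⟨hν, hν⟩)⟩
  · rw [pc_gt h] at hs
    rw [if_neg h.not_ge]
    have h1 := mi h
    rw [S.ri0] at h1
    have h2 := hs.gt.1 h1
    have h3 := m' h2
    rw [T.r0] at h3
    have h4 := m' hv
    rw [T.fxr] at h4
    exact ⟨h4, Or.inr (Or.inr ⟨h, h3⟩), Or.inr (Or.inr ⟨by linarith, by linarith⟩)⟩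

lemma Side.w1 (S : Side fl fli fr fri b c lam ν xl xr) (m : StrictAnti fr) (hν : 0 < ν) :
    ν < fri 0 := by
  have h := S.cor ν 0
  rw [S.r0, sub_zero, abs_of_pos hν] at h
  have h2 := neg_abs_le (fr ν - ν)
  have h3 : 0 < fr ν := by nlinarith [S.lm1]
  rw [← S.dr.ri 0] at h3
  exact m.lt_iff_gt.1 h3

/-- contracting flip case -/
lemma hh4 (S : Side fl fli fr fri b c lam ν xl xr) (m : StrictAnti fr) (mi : StrictAnti fri)
    (hν : 0 < ν) : HH fl fli fr fri 0 (Set.Ioo xl (fri xl)) (Set.Ioo 0 (fri 0)) := by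
  have hxl := S.xl_neg hν
  have hw1 := S.w1 m hν
  have hw : fri 0 < fri xl := mi hxl
  have FI : ∀ x, xl < x → x ≤ 0 → xl < pc 0 fl fr x ∧ pc 0 fl fr x ≤ ν := by
    intro x hx h
    rw [pc_le h]
    refine ⟨by have := S.ml hx; rwa [S.fxl] at this, ?_⟩
    have := S.ml.monotone h; rwa [S.l0] at this
  have FU : ∀ x ∈ Set.Ioo xl (fri xl), pc 0 fl fr x ∈ Set.Ioo xl (fri xl) := by
    intro x hx
    rcases le_or_gt x 0 with h | h
    · have := FI x hx.1 h; exact ⟨this.1, by linarith⟩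
    · rw [pc_gt h]
      have h1 := m h; rw [S.r0] at h1
      have h2 := m hx.2
      rw [S.dr.ri] at h2
      exact ⟨h2, by linarith⟩
  have RI : ∀ x, xl < x → x ≤ 0 → ∃ n : ℕ, (pc 0 fl fr)^[n] x ∈ Set.Ioo 0 (fri 0) := by
    intro x hx hx0
    have hex := reach_gen (F := pc 0 fl fr) (z := xl) (I := Set.Ioc xl 0) (R := |xl|) S.b1
      (fun y hy => by
        have := S.exl y xl
        rw [S.fxl] at this
        rwa [pc_le hy.2]) (fun y hy => by
          rw [abs_of_pos (by linarith [hy.1]), abs_of_neg hxl]; linarith [hy.2])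
      (x := x) (ne_of_gt hx)
    classical
    have hn := Nat.find_spec hex
    have hm := fun k => Nat.find_min (H := hex) (m := k)
    generalize Nat.find hex = n at hn hm
    cases n with
    | zero => exact absurd ⟨hx, hx0⟩ hn
    | succ n =>
      have h1 := hm n (Nat.lt_succ_self n)
      push Not at h1
      have h2 := FI _ h1.1 h1.2
      rw [← Function.iterate_succ_apply' (pc 0 fl fr)] at h2
      refine ⟨n + 1, ?_, by linarith [h2.2]⟩
      by_contra q
      exact hn ⟨h2.1, not_lt.1 q⟩
  refine ⟨S.dl, S.dr, S.k0, isOpen_Ioo, isOpen_Ioo, ?_, FU, ?_, ?_⟩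
  · intro x hx
    rcases le_or_gt x 0 with h | h
    · exact RI x hx.1 h
    · rcases lt_or_ge x (fri 0) with h' | h'
      · exact ⟨0, h, h'⟩
      · have h2 : pc 0 fl fr x ≤ 0 := by
          rw [pc_gt h]; have := m.antitone h'; rwa [S.dr.ri] at this
        obtain ⟨n, hn⟩ := RI _ (FU x hx).1 h2
        exact ⟨n + 1, by rwa [Function.iterate_succ_apply]⟩
  · intro x hx
    rw [pc_gt hx.1]
    have h1 := m hx.1; rw [S.r0] at h1
    have h2 := m hx.2
    rw [S.dr.ri] at h2
    exact ⟨h2, by linarith⟩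
  · intro _; rw [S.l0]; exact ⟨hν, hw1⟩

lemma st4 (S : Side fl fli fr fri b c lam ν xl xr) (T : Side gl gli gr gri b c lam ν yl yr)
    (m : StrictAnti fr) (m' : StrictAnti gr) (mi' : StrictAnti gri)
    (hν : 0 < ν) {x v : ℝ} (hx : x ∈ Set.Ioo xl (fri xl)) (hxA : x ∉ Set.Ioo 0 (fri 0))
    (hv : v ∈ Set.Ioo yl (gri yl))
    (hs0 : SS 0 (pc 0 fl fr x) v) (hs : SS ν (pc 0 fl fr x) v) :
    (if x ≤ 0 then gli v else gri v) ∈ Set.Ioo yl (gri yl) ∧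
      SS 0 x (if x ≤ 0 then gli v else gri v) ∧
      SS ν x (if x ≤ 0 then gli v else gri v) := by
  have hyl := T.xl_neg hν
  have hw1 := S.w1 m hν
  have hz1 := T.w1 m' hν
  have hz : gri 0 < gri yl := mi' hyl
  rcases le_or_gt x 0 with h | h
  · rw [if_pos h]
    obtain ⟨a1, a2, a3, a4⟩ := st2 S T hν h hv.1 hs
    exact ⟨⟨a1, by linarith⟩, a3, a4⟩
  · have h' : fri 0 ≤ x := by
      by_contra q
      exact hxA ⟨h, not_le.1 q⟩
    rw [pc_gt h] at hs0
    rw [if_neg h.not_ge]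
    have h1 := m.antitone h'
    rw [S.dr.ri] at h1
    have h2 := hs0.le.1 h1
    have h3 := mi'.antitone h2
    have h4 := mi' hv.1
    exact ⟨⟨by linarith, h4⟩, Or.inr (Or.inr ⟨h, by linarith⟩), Or.inr (Or.inr ⟨by linarith, by linarith⟩)⟩

/-- no fixed point case -/
lemma hh1 (S : Side fl fli fr fri b c lam ν xl xr) (hν : ν < 0) :
    HH fl fli fr fri 0 Set.univ (Set.Iio 0) := by
  have hxr := S.xr_neg hν
  refine ⟨S.dl, S.dr, S.k0, isOpen_univ, isOpen_Iio, ?_, fun _ _ => trivial, ?_, ?_⟩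
  · intro x hx
    obtain ⟨n, hn⟩ := reach_con (F := pc 0 fl fr) (z := xr) (I := Set.Ici 0) (r := |xr|) S.lm0.le
      S.lm1 (abs_pos.2 hxr.ne)
      (fun y hy => by
        have := S.cor y xr
        rw [S.fxr] at this
        rwa [pc_ge S.k0 hy]) (fun y hy => by
          have hy' : 0 ≤ y := hy
          rw [abs_of_neg hxr, abs_of_pos (by linarith)]; linarith) x
    exact ⟨n, by simpa using hn⟩
  · intro x hx
    rw [Set.mem_Iio] at *
    rw [pc_le hx.le]; have := S.ml hx; rw [S.l0] at this; linarith
  · intro _; rw [S.l0]; exact hν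

lemma st1 (S : Side fl fli fr fri b c lam ν xl xr) (T : Side gl gli gr gri b c lam ν yl yr)
    (m : StrictMono fr) (mi' : StrictMono gri)
    (hν : ν < 0) {x v : ℝ} (hx : 0 ≤ x) (hs : SS ν (pc 0 fl fr x) v) :
    SS 0 x (if x ≤ 0 then gli v else gri v) ∧ SS ν x (if x ≤ 0 then gli v else gri v) := by
  rcases hx.eq_or_lt with h | h
  · subst h
    rw [pc_le le_rfl, S.l0] at hs
    rw [if_pos le_rfl, hs.eq.1 rfl, T.li0]
    exact ⟨Or.inr (Or.inl ⟨rfl, rfl⟩), Or.inr (Or.inr ⟨hν, hν⟩)⟩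
  · rw [pc_gt h] at hs
    rw [if_neg h.not_ge]
    have h1 := m h
    rw [S.r0] at h1
    have h2 := hs.gt.1 h1
    have h3 := mi' h2
    rw [T.ri0] at h3
    exact ⟨Or.inr (Or.inr ⟨h, h3⟩), Or.inr (Or.inr ⟨by linarith, by linarith⟩)⟩

end

end SN


namespace SN

lemma Cj.ks {F G h k : ℝ → ℝ} {ν z w C : ℝ} (H : Cj F G h k ν z w C) :
    StrictMono k ∧ k 0 = 0 ∧ k ν = ν ∧ (∀ y, k (G y) = F (k y)) := by
  refine ⟨?_, ?_, ?_, ?_⟩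
  · intro x y hxy
    by_contra q
    have := H.sm.monotone (not_lt.1 q)
    rw [H.dp.ri, H.dp.ri] at this
    linarith
  · have := H.dp.li 0; rwa [H.h0] at this
  · have := H.dp.li ν; rwa [H.hν] at this
  · intro y
    have := H.rel (k y)
    rw [H.dp.ri] at this
    rw [← this, H.dp.li]

section
variable {fl fli fr fri gl gli gr gri hL kL hR kR : ℝ → ℝ} {b c lam C ν xl xr yl yr p : ℝ}

lemma case2 (P : Pair fl fli fr fri gl gli gr gri hL kL hR kR b c lam C ν xl xr yl yr)
    (m : StrictMono fr) (m' : StrictMono gr) (hν : 0 < ν) (hp : 0 < p) :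
    ∃ h k, GC (pc 0 fl fr) (pc 0 gl gr) h k (Set.Ioo xl p) (Set.Ioo yl (hR p)) := by
  obtain ⟨ks, k0, kν, kr⟩ := P.R.ks
  have hxl := P.f.xl_neg hν
  have hyl := P.g.xl_neg hν
  have hpos : ∀ x, 0 < x → 0 < hR x := fun x hx => by have := P.R.sm hx; rwa [P.R.h0] at this
  have kpos : ∀ x, 0 < x → 0 < kR x := fun x hx => by have := ks hx; rwa [k0] at this
  obtain ⟨h, k, H1, H2, H3, H4⟩ := TWO (a := ν) (hh2 P.f m hν) (hh2 P.g m' hν) P.R.dp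
    (fun x hx => by rw [pc_gt hx, pc_gt (hpos x hx), P.R.rel])
    (by rw [P.f.l0, P.R.hν, P.g.l0]) P.kink
    (fun x hx => hpos x hx) (fun x hx => kpos x hx)
    (fun x hx => by rw [Set.mem_Ioi] at *; linarith) (fun x hx => by rw [Set.mem_Ioi] at *; linarith)
    (SS_of_mono P.R.sm P.R.h0) (SS_of_mono P.R.sm P.R.hν)
    (fun x hx hxA v hv _ hs => by
      have hx0 : x ≤ 0 := not_lt.1 hxA
      obtain ⟨a1, a2, a3, a4⟩ := st2 P.f P.g hν hx0 hv hs
      rw [if_pos hx0]; exact ⟨a1, a3, a4⟩)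
    (fun x hx hxA v hv _ hs => by
      have hx0 : x ≤ 0 := not_lt.1 hxA
      obtain ⟨a1, a2, a3, a4⟩ := st2 P.g P.f hν hx0 hv hs
      rw [if_pos hx0]; exact ⟨a1, a3, a4⟩)
  refine ⟨h, k, H1.mono (fun x hx => hx.1) (fun x hx => hx.1) ?_⟩
  intro x hx
  have e1 : xl < x := hx
  have e2 : yl < h x := H1.m1 x hx
  rcases le_or_gt x 0 with hx0 | hx0
  · have := (H4 x hx).1.le.1 hx0
    have := hpos p hp
    constructor
    · intro _; exact ⟨e2, by linarith⟩
    · intro _; exact ⟨e1, by linarith⟩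
  · rw [H2 x hx0] at *
    constructor
    · intro q; exact ⟨e2, P.R.sm q.2⟩
    · intro q; exact ⟨e1, P.R.sm.lt_iff_lt.1 q.2⟩

lemma pc_inv (S : Side fl fli fr fri b c lam ν xl xr) (m : StrictMono fr) (x : ℝ) :
    pc ν fli fri (pc 0 fl fr x) = x := by
  rcases le_or_gt x 0 with h | h
  · have h1 := S.ml.monotone h
    rw [S.l0] at h1
    rw [pc_le h, pc_le h1, S.dl.li]
  · have h1 := m h
    rw [S.r0] at h1
    rw [pc_gt h, pc_gt h1, S.dr.li]

lemma pc_inv' (S : Side fl fli fr fri b c lam ν xl xr) (mi : StrictMono fri) (x : ℝ) :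
    pc 0 fl fr (pc ν fli fri x) = x := by
  rcases le_or_gt x ν with h | h
  · have h1 := S.mli.monotone h
    rw [S.li0] at h1
    rw [pc_le h, pc_le h1, S.dl.ri]
  · have h1 := mi h
    rw [S.ri0] at h1
    rw [pc_gt h, pc_gt h1, S.dr.ri]

lemma Side.dinv (S : Side fl fli fr fri b c lam ν xl xr) :
    deriv fl 0 ≠ 0 ∧ deriv fr 0 ≠ 0 ∧ deriv fli ν = 1 / deriv fl 0 ∧ deriv fri ν = 1 / deriv fr 0 := by
  have d1 := S.dl.deriv_mul 0
  have d2 := S.dr.deriv_mul 0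
  rw [S.l0] at d1
  rw [S.r0] at d2
  have n1 := right_ne_zero_of_mul_eq_one d1
  have n2 := right_ne_zero_of_mul_eq_one d2
  exact ⟨n1, n2, by rw [eq_div_iff n1]; exact d1, by rw [eq_div_iff n2]; exact d2⟩

lemma case3 (P : Pair fl fli fr fri gl gli gr gri hL kL hR kR b c lam C ν xl xr yl yr)
    (m : StrictMono fr) (m' : StrictMono gr) (mi : StrictMono fri) (mi' : StrictMono gri)
    (hν : 0 < ν) (hp : 0 < p) :
    ∃ h k, GC (pc 0 fl fr) (pc 0 gl gr) h k (Set.Ioo (-p) xr) (Set.Ioo (hL (-p)) yr) := by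
  obtain ⟨ks, k0, kν, kr⟩ := P.L.ks
  have hxr := P.f.xr_pos hν
  have hyr := P.g.xr_pos hν
  have hνx : ν < xr := by have := m hxr; rwa [P.f.r0, P.f.fxr] at this
  have hνy : ν < yr := by have := m' hyr; rwa [P.g.r0, P.g.fxr] at this
  have hpos : ∀ x, x < ν → hL x < ν := fun x hx => by have := P.L.sm hx; rwa [P.L.hν] at this
  have kpos : ∀ x, x < ν → kL x < ν := fun x hx => by have := ks hx; rwa [kν] at this
  obtain ⟨n1, n2, d1, d2⟩ := P.f.dinv
  obtain ⟨n3, n4, d3, d4⟩ := P.g.dinv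
  obtain ⟨h, k, H1, H2, H3, H4⟩ := TWO (a := 0) (hh3 P.f m mi hν) (hh3 P.g m' mi' hν) P.L.dp
    (fun x hx => by
      rw [pc_le (le_of_lt hx), pc_le (hpos x hx).le]
      have := P.L.rel (fli x)
      rw [P.f.dl.ri] at this
      rw [this, P.g.dl.li])
    (by rw [P.f.li0, P.L.h0, P.g.li0])
    (by
      rw [d1, d2, d3, d4]
      field_simp
      linear_combination -P.kink)
    (fun x hx => hpos x hx) (fun x hx => kpos x hx)
    (fun x hx => by rw [Set.mem_Iio] at *; linarith) (fun x hx => by rw [Set.mem_Iio] at *; linarith)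
    (SS_of_mono P.L.sm P.L.hν) (SS_of_mono P.L.sm P.L.h0)
    (fun x hx hxA v hv _ hs => st3 P.f P.g mi m' hν (not_lt.1 hxA) hv hs)
    (fun x hx hxA v hv _ hs => st3 P.g P.f mi' m hν (not_lt.1 hxA) hv hs)
  have R := H1.mono (U' := Set.Ioo (-p) xr) (V' := Set.Ioo (hL (-p)) yr) (fun x hx => hx.2) (fun x hx => hx.2) (by
    intro x hx
    have e1 : x < xr := hx
    have e2 : h x < yr := H1.m1 x hx
    rcases lt_or_ge x ν with hx0 | hx0
    · rw [H2 x hx0] at *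
      constructor
      · intro q; exact ⟨P.L.sm q.1, e2⟩
      · intro q; exact ⟨P.L.sm.lt_iff_lt.1 q.1, e1⟩
    · have := (H4 x hx).1.ge.1 hx0
      have := hpos (-p) (by linarith)
      constructor
      · intro _; exact ⟨by linarith, e2⟩
      · intro _; exact ⟨by linarith, e1⟩)
  refine ⟨h, k, R.m1, R.m2, R.i1, R.i2, R.c1, R.c2, fun x hx hfx => ?_⟩
  have e := H3 _ (Set.mem_Iio.2 hfx.2)
  rw [pc_inv P.f m] at e
  rw [e, pc_inv' P.g mi']

lemma case4 (P : Pair fl fli fr fri gl gli gr gri hL kL hR kR b c lam C ν xl xr yl yr)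
    (m : StrictAnti fr) (m' : StrictAnti gr) (mi : StrictAnti fri) (mi' : StrictAnti gri)
    (hν : 0 < ν) :
    ∃ h k, GC (pc 0 fl fr) (pc 0 gl gr) h k (Set.Ioo xl (fri xl)) (Set.Ioo yl (gri yl)) := by
  obtain ⟨ks, k0, kν, kr⟩ := P.R.ks
  have hxl := P.f.xl_neg hν
  have hyl := P.g.xl_neg hν
  have hpos : ∀ x, 0 < x → 0 < hR x := fun x hx => by have := P.R.sm hx; rwa [P.R.h0] at this
  have kpos : ∀ x, 0 < x → 0 < kR x := fun x hx => by have := ks hx; rwa [k0] at this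
  have e1 : hR (fri 0) = gri 0 := by
    have := P.R.rel (fri 0)
    rw [P.f.dr.ri, P.R.h0] at this
    have h2 := congrArg gri this
    rw [P.g.dr.li] at h2
    exact h2.symm
  have e2 : kR (gri 0) = fri 0 := by rw [← e1, P.R.dp.li]
  have q1 := mi hxl
  have q2 := mi' hyl
  obtain ⟨h, k, H1, H2, H3, H4⟩ := TWO (a := ν) (hh4 P.f m mi hν) (hh4 P.g m' mi' hν) P.R.dp
    (fun x hx => by rw [pc_gt hx.1, pc_gt (hpos x hx.1), P.R.rel])
    (by rw [P.f.l0, P.R.hν, P.g.l0]) P.kink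
    (fun x hx => ⟨hpos x hx.1, by have := P.R.sm hx.2; rwa [e1] at this⟩)
    (fun x hx => ⟨kpos x hx.1, by have := ks hx.2; rwa [e2] at this⟩)
    (fun x hx => ⟨by linarith [hx.1], by linarith [hx.2]⟩)
    (fun x hx => ⟨by linarith [hx.1], by linarith [hx.2]⟩)
    (SS_of_mono P.R.sm P.R.h0) (SS_of_mono P.R.sm P.R.hν)
    (fun x hx hxA v hv hs0 hs => st4 P.f P.g m m' mi' hν hx hxA hv hs0 hs)
    (fun x hx hxA v hv hs0 hs => st4 P.g P.f m' m mi hν hx hxA hv hs0 hs)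
  exact ⟨h, k, H1⟩

lemma case4b (P : Pair fl fli fr fri gl gli gr gri hL kL hR kR b c lam C ν xl xr yl yr) :
    GC (pc 0 fl fr) (pc 0 gl gr) hL kL (Set.Ioo (-p) 0) (Set.Ioo (hL (-p)) 0) := by
  obtain ⟨ks, k0, kν, kr⟩ := P.L.ks
  refine ⟨fun x hx => ?_, fun y hy => ?_, fun x _ => P.L.dp.li x, fun y _ => P.L.dp.ri y,
    fun x _ => P.L.dp.ce.contDiffAt, fun y _ => P.L.dp.ci.contDiffAt, fun x hx hfx => ?_⟩
  · have h1 := P.L.sm hx.2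
    rw [P.L.h0] at h1
    exact ⟨P.L.sm hx.1, h1⟩
  · have h1 := ks hy.2
    have h2 := ks hy.1
    rw [k0] at h1
    rw [P.L.dp.li] at h2
    exact ⟨h2, h1⟩
  · have h1 := P.L.sm hx.2
    rw [P.L.h0] at h1
    rw [pc_le hx.2.le, pc_le h1.le, P.L.rel]

lemma case1 (P : Pair fl fli fr fri gl gli gr gri hL kL hR kR b c lam C ν xl xr yl yr)
    (m : StrictMono fr) (m' : StrictMono gr) (mi : StrictMono fri) (mi' : StrictMono gri)
    (hν : ν < 0) :
    ∃ h k, GC (pc 0 fl fr) (pc 0 gl gr) h k Set.univ Set.univ ∧ (∀ x ≤ 0, h x = hL x) ∧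
      ∀ x, 0 < x → 0 < h x ∧ h (fr x) = gr (h x) := by
  obtain ⟨ks, k0, kν, kr⟩ := P.L.ks
  have hpos : ∀ x, x < 0 → hL x < 0 := fun x hx => by have := P.L.sm hx; rwa [P.L.h0] at this
  have kpos : ∀ x, x < 0 → kL x < 0 := fun x hx => by have := ks hx; rwa [k0] at this
  obtain ⟨h, k, H1, H2, H3, H4⟩ := TWO (a := ν) (hh1 P.f hν) (hh1 P.g hν) P.L.dp
    (fun x hx => by rw [pc_le (le_of_lt hx), pc_le (hpos x hx).le, P.L.rel])
    (by rw [P.f.l0, P.L.hν, P.g.l0]) P.kink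
    (fun x hx => hpos x hx) (fun x hx => kpos x hx)
    (fun x hx => trivial) (fun x hx => trivial)
    (SS_of_mono P.L.sm P.L.h0) (SS_of_mono P.L.sm P.L.hν)
    (fun x hx hxA v hv _ hs => ⟨trivial, st1 P.f P.g m mi' hν (not_lt.1 hxA) hs⟩)
    (fun x hx hxA v hv _ hs => ⟨trivial, st1 P.g P.f m' mi hν (not_lt.1 hxA) hs⟩)
  refine ⟨h, k, H1, fun x hx => ?_, fun x hx => ?_⟩
  · rcases hx.lt_or_eq with hx | hx
    · exact H2 x hx
    · rw [hx, P.L.h0]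
      exact (H4 0 trivial).1.eq.1 rfl
  · have h1 := (H4 x trivial).1.gt.1 hx
    have h2 := H3 x trivial
    rw [pc_gt hx, pc_gt h1] at h2
    exact ⟨h1, h2⟩

lemma gc_glue {f g l r l' r' : ℝ → ℝ} (hl : DP l l') (hr : DP r r')
    (ml : StrictMono l) (l0 : l 0 = 0) (r0 : r 0 = 0)
    (mr : StrictMono r) (hd : deriv l 0 = deriv r 0)
    (rel : ∀ x, pc 0 l r (f x) = g (pc 0 l r x)) :
    GC f g (pc 0 l r) (pc 0 l' r') Set.univ Set.univ := by
  have l0' : l' 0 = 0 := by have := hl.li 0; rwa [l0] at this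
  have r0' : r' 0 = 0 := by have := hr.li 0; rwa [r0] at this
  have d1 := hl.deriv_mul 0
  have d2 := hr.deriv_mul 0
  rw [l0] at d1
  rw [r0, ← hd] at d2
  have n1 := right_ne_zero_of_mul_eq_one d1
  have hd' : deriv l' 0 = deriv r' 0 := mul_right_cancel₀ n1 (d1.trans d2.symm)
  refine ⟨fun _ _ => trivial, fun _ _ => trivial, ?_, ?_, ?_, ?_, fun x _ _ => rel x⟩
  · intro x _
    rcases le_or_gt x 0 with h | h
    · have h1 := ml.monotone h
      rw [l0] at h1
      rw [pc_le h, pc_le h1, hl.li]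
    · have h1 := mr h
      rw [r0] at h1
      rw [pc_gt h, pc_gt h1, hr.li]
  · intro x _
    rcases le_or_gt x 0 with h | h
    · have h1 : l' x ≤ 0 := by
        by_contra q; have := ml (not_le.1 q); rw [l0, hl.ri] at this; linarith
      rw [pc_le h, pc_le h1, hl.ri]
    · have h1 : 0 < r' x := by
        by_contra q; have := mr.monotone (not_lt.1 q); rw [r0, hr.ri] at this; linarith
      rw [pc_gt h, pc_gt h1, hr.ri]
  · intro x _
    exact (glue_global hl.ce hr.ce (by rw [l0, r0]) hd).contDiffAt
  · intro x _
    exact (glue_global hl.ci hr.ci (by rw [l0', r0']) hd').contDiffAt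

lemma DP.comp {e i e₂ i₂ : ℝ → ℝ} (h : DP e i) (h₂ : DP e₂ i₂) : DP (e₂ ∘ e) (i ∘ i₂) :=
  ⟨h₂.ce.comp h.ce, h.ci.comp h₂.ci, fun x => by simp [h.li, h₂.li], fun x => by simp [h.ri, h₂.ri]⟩

lemma caseN (P : Pair fl fli fr fri gl gli gr gri hL kL hR kR b c lam C ν xl xr yl yr)
    (m : StrictAnti fr) (mi' : StrictAnti gri)
    (hν : ν ≤ 0) :
    ∃ h k, GC (pc 0 fl fr) (pc 0 gl gr) h k Set.univ Set.univ ∧ (∀ x ≤ 0, h x = hL x) ∧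
      ∀ x, 0 < x → 0 < h x ∧ gr (h x) = hL (fr x) := by
  have hD : DP (gri ∘ hL ∘ fr) (fri ∘ kL ∘ gr) := (P.f.dr.comp P.L.dp).comp P.g.dr.symm
  have hM : StrictMono (gri ∘ hL ∘ fr) := fun x y hxy => mi' (P.L.sm (m hxy))
  have h0 : (gri ∘ hL ∘ fr) 0 = 0 := by simp [P.f.r0, P.L.hν, P.g.ri0]
  have hp : ∀ x, 0 < x → 0 < (gri ∘ hL ∘ fr) x := fun x hx => by have := hM hx; rwa [h0] at this
  have hd : deriv hL 0 = deriv (gri ∘ hL ∘ fr) 0 := by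
    obtain ⟨n1, n2, d1, d2⟩ := P.f.dinv
    obtain ⟨n3, n4, d3, d4⟩ := P.g.dinv
    have D : ∀ {f : ℝ → ℝ} (_ : ContDiff ℝ 1 f) (x : ℝ), HasDerivAt f (deriv f x) x := fun hf x =>
      (hf.differentiable (by norm_num) x).hasDerivAt
    have a1 : HasDerivAt (hL ∘ fl) (deriv hL ν * deriv fl 0) 0 :=
      HasDerivAt.comp 0 (by rw [P.f.l0]; exact D P.L.dp.ce ν) (D P.f.dl.ce 0)
    have a2 : HasDerivAt (gl ∘ hL) (deriv gl 0 * deriv hL 0) 0 :=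
      HasDerivAt.comp 0 (by rw [P.L.h0]; exact D P.g.dl.ce 0) (D P.L.dp.ce 0)
    have e : hL ∘ fl = gl ∘ hL := funext P.L.rel
    rw [e] at a1
    have a3 := a1.unique a2
    have a4 : HasDerivAt (hL ∘ fr) (deriv hL ν * deriv fr 0) 0 :=
      HasDerivAt.comp 0 (by rw [P.f.r0]; exact D P.L.dp.ce ν) (D P.f.dr.ce 0)
    have a5 : HasDerivAt (gri ∘ hL ∘ fr) (deriv gri ν * (deriv hL ν * deriv fr 0)) 0 :=
      HasDerivAt.comp 0 (by simp only [Function.comp]; rw [P.f.r0, P.L.hν]; exact D P.g.dr.ci ν) a4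
    rw [a5.deriv, d4]
    have hk := P.kink
    field_simp
    apply mul_right_cancel₀ n1
    linear_combination (deriv hL 0) * hk - (deriv fr 0) * a3
  have rel : ∀ x, pc 0 hL (gri ∘ hL ∘ fr) (pc 0 fl fr x) = pc 0 gl gr (pc 0 hL (gri ∘ hL ∘ fr) x) := by
    intro x
    rcases le_or_gt x 0 with h | h
    · have h1 := P.f.ml.monotone h
      rw [P.f.l0] at h1
      have h2 := P.L.sm.monotone h
      rw [P.L.h0] at h2
      rw [pc_le h, pc_le (h1.trans hν), pc_le h, pc_le h2, P.L.rel]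
    · have h1 := m h
      rw [P.f.r0] at h1
      rw [pc_gt h, pc_le (by linarith), pc_gt h, pc_gt (hp x h)]
      simp [P.g.dr.ri]
  refine ⟨_, _, gc_glue P.L.dp hD P.L.sm P.L.h0 h0 hM hd rel, fun x hx => pc_le hx, fun x hx => ?_⟩
  rw [pc_gt hx]
  exact ⟨hp x hx, by simp [P.g.dr.ri]⟩

lemma case0 (P : Pair fl fli fr fri gl gli gr gri hL kL hR kR b c lam C ν xl xr yl yr)
    (m : StrictMono fr) (hν : ν = 0) :
    ∃ h k, GC (pc 0 fl fr) (pc 0 gl gr) h k Set.univ Set.univ ∧ (∀ x ≤ 0, h x = hL x) ∧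
      ∀ x, 0 < x → h x = hR x := by
  have rel : ∀ x, pc 0 hL hR (pc 0 fl fr x) = pc 0 gl gr (pc 0 hL hR x) := by
    intro x
    rcases le_or_gt x 0 with h | h
    · have h1 := P.f.ml.monotone h
      rw [P.f.l0, hν] at h1
      have h2 := P.L.sm.monotone h
      rw [P.L.h0] at h2
      rw [pc_le h, pc_le h1, pc_le h, pc_le h2, P.L.rel]
    · have h1 := m h
      rw [P.f.r0, hν] at h1
      have h2 := P.R.sm h
      rw [P.R.h0] at h2
      rw [pc_gt h, pc_gt h1, pc_gt h, pc_gt h2, P.R.rel]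
  exact ⟨_, _, gc_glue P.L.dp P.R.dp P.L.sm P.L.h0 P.R.h0 P.R.sm
    (by rw [P.L.d1 hν, P.R.d1 hν]) rel, fun x hx => pc_le hx, fun x hx => pc_gt hx⟩

end

end SN


namespace SN

lemma Cj.near {F G h k : ℝ → ℝ} {ν z w C P E : ℝ} (H : Cj F G h k ν z w C)
    (hz : |z| ≤ P) (hw : |w| ≤ P) (hν : |ν| ≤ P) (hE : Real.exp (3 * C * P) ≤ E) (hE2 : E ^ 4 < 2)
    {x : ℝ} (hx : |x| ≤ P) : |h x - x| ≤ (E ^ 4 - 1) * |x| := by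
  obtain ⟨h1, h2⟩ := H.est P E hz hw hν hE hE2 x hx
  set u := E ^ 4
  have hu0 : 0 ≤ u := by positivity
  have key : ∀ a y : ℝ, 0 ≤ a → 0 ≤ y → y ≤ u * a → a ≤ u * y → |y - a| ≤ (u - 1) * a := by
    intro a y ha hy h1 h2
    rw [abs_le]
    refine ⟨?_, by linarith⟩
    have : (2 - u) * a ≤ (2 - u) * (u * y) := mul_le_mul_of_nonneg_left h2 (by linarith)
    nlinarith [sq_nonneg (u - 1), mul_nonneg hy (sq_nonneg (u - 1))]
  rcases le_or_gt 0 x with q | q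
  · have h3 := H.sm.monotone q
    rw [H.h0] at h3
    rw [abs_of_nonneg q, abs_of_nonneg h3] at h1 h2
    rw [abs_of_nonneg q]
    exact key x (h x) q h3 h1 h2
  · have h3 := H.sm q
    rw [H.h0] at h3
    rw [abs_of_neg q, abs_of_neg h3] at h1 h2
    rw [abs_of_neg q]
    have := key (-x) (-h x) (by linarith) (by linarith) h1 h2
    rwa [← abs_neg, show -(-h x - -x) = h x - x by ring] at this

section
variable {fl fli fr fri gl gli gr gri hL kL hR kR : ℝ → ℝ} {b c lam C ν xl xr yl yr p ε δ s : ℝ}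

lemma gc_restrict {f g h k : ℝ → ℝ} (H : GC f g h k Set.univ Set.univ) (hp : 0 < p)
    (h0 : h (-p) < h 0) : GC f g h k (Set.Ioo (-p) p) (Set.Ioo (h (-p)) (h p)) ∧ h 0 < h p := by
  have hm := H.smono (a := -p) (b := 0) (by linarith) h0
  refine ⟨H.mono (fun _ _ => trivial) (fun _ _ => trivial) (fun x _ => ?_), hm hp⟩
  constructor
  · intro q; exact ⟨hm q.1, hm q.2⟩
  · intro q; exact ⟨hm.lt_iff_lt.1 q.1, hm.lt_iff_lt.1 q.2⟩

lemma est1 (P : Pair fl fli fr fri gl gli gr gri hL kL hR kR b c lam C ν xl xr yl yr)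
    (m : StrictMono fr) (m' : StrictMono gr)
    (hν : ν < 0) (hp : 0 < p) (hε1 : ε ≤ 1)
    (nL : ∀ x, |x| ≤ 2 * p → |hL x - x| ≤ ε * |x|) (nR : ∀ x, |x| ≤ 2 * p → |hR x - x| ≤ ε * |x|)
    (hνp : |ν| ≤ p) (hyr : |yr| ≤ p) (haff : ∀ y, gr y = ν + s * y)
    {h : ℝ → ℝ} (e1 : ∀ x ≤ 0, h x = hL x) (e2 : ∀ x, 0 < x → 0 < h x ∧ h (fr x) = gr (h x)) :
    |h p - hR p| * c ≤ 6 * ε * p := by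
  have hxr := P.f.xr_neg hν
  have hyr0 := P.g.xr_neg hν
  have hε : 0 ≤ ε := by
    have := (abs_nonneg _).trans (nL p (by rw [abs_of_pos hp]; linarith))
    rw [abs_of_pos hp] at this
    by_contra q; push Not at q; nlinarith
  have hex : ∃ n : ℕ, fr^[n] p ≤ 0 := by
    have h1 := (P.f.tr p).eventually (gt_mem_nhds hxr)
    obtain ⟨n, hn⟩ := h1.exists
    exact ⟨n, le_of_lt hn⟩
  classical
  have hn := Nat.find_spec hex
  have hm : ∀ k < Nat.find hex, 0 < fr^[k] p := fun k hk => not_le.1 (Nat.find_min hex hk)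
  generalize Nat.find hex = n at hn hm
  have hn0 : n ≠ 0 := by rintro rfl; simp at hn; linarith
  have hx1 : ν ≤ fr^[n] p := by
    obtain ⟨j, rfl⟩ := Nat.exists_eq_succ_of_ne_zero hn0
    have h1 := m (hm j (Nat.lt_succ_self j))
    rw [P.f.r0, ← Function.iterate_succ_apply' fr] at h1
    exact h1.le
  have i1 : ∀ k ≤ n, h (fr^[k] p) = gr^[k] (h p) := by
    intro k
    induction k with
    | zero => simp
    | succ k ih =>
      intro hk
      rw [Function.iterate_succ_apply', Function.iterate_succ_apply', (e2 _ (hm k hk)).2,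
        ih (by omega)]
  have i2 : ∀ k, hR (fr^[k] p) = gr^[k] (hR p) := by
    intro k
    induction k with
    | zero => simp
    | succ k ih =>
      rw [Function.iterate_succ_apply', Function.iterate_succ_apply', P.R.rel, ih]
  have hy : yr = ν + s * yr := by rw [← haff, P.g.fxr]
  have i3 : ∀ k y, gr^[k] y - yr = s ^ k * (y - yr) := by
    intro k y
    induction k with
    | zero => simp
    | succ k ih =>
      rw [Function.iterate_succ_apply', haff, pow_succ]
      linear_combination s * ih - hy
  have hs : 0 < s := by
    have := m' (show (0:ℝ) < 1 by norm_num)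
    rw [haff, haff] at this; linarith
  have hcs : c ≤ s := by
    have := P.g.lor 1 0
    rw [haff, haff] at this
    have e : ν + s * 1 - (ν + s * 0) = s := by ring
    rw [e, abs_of_pos hs] at this
    simpa using this
  have j1 := i1 n le_rfl
  have j2 := i2 n
  rw [e1 _ hn] at j1
  set x := fr^[n] p
  have a1 : hL x - hR x = s ^ n * (h p - hR p) := by
    rw [j1, j2]; linear_combination i3 n (h p) - i3 n (hR p)
  have a2 : hR x - yr = s ^ n * (hR p - yr) := by rw [j2]; exact i3 n _
  have a3 : ν ≤ hR x := by have := P.R.sm.monotone hx1; rwa [P.R.hν] at this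
  have hxν : |x| ≤ |ν| := by rw [abs_of_nonpos hn, abs_of_neg hν]; linarith
  have a4 : |hL x - hR x| ≤ 2 * ε * |ν| := by
    have q1 := nL x (by linarith)
    have q2 := nR x (by linarith)
    have q3 := abs_sub_le (hL x) x (hR x)
    rw [abs_sub_comm x] at q3
    nlinarith
  have a5 : |ν| ≤ |yr| := by
    rw [abs_of_neg hν, abs_of_neg hyr0]; nlinarith
  have a6 : 0 < hR p - yr ∧ hR p - yr ≤ 3 * p := by
    have q := nR p (by rw [abs_of_pos hp]; linarith)
    rw [abs_of_pos hp, abs_le] at q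
    have q2 := P.R.sm hp
    rw [P.R.h0] at q2
    rw [abs_of_neg hyr0] at hyr
    refine ⟨by linarith, ?_⟩
    nlinarith
  have hsn : 0 < s ^ n := by positivity
  rw [a1, abs_mul, abs_of_pos hsn] at a4
  have a7 : s * |yr| ≤ s ^ n * (hR p - yr) := by
    rw [← a2, abs_of_neg hyr0]; linarith
  have hyp : 0 < |yr| := abs_pos.2 hyr0.ne
  have A := abs_nonneg (h p - hR p)
  have a8 : |h p - hR p| * (s * |yr|) ≤ 6 * ε * p * |yr| := by
    calc |h p - hR p| * (s * |yr|) ≤ |h p - hR p| * (s ^ n * (hR p - yr)) :=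
          mul_le_mul_of_nonneg_left a7 A
      _ = (s ^ n * |h p - hR p|) * (hR p - yr) := by ring
      _ ≤ (2 * ε * |ν|) * (3 * p) :=
          mul_le_mul a4 a6.2 a6.1.le (by positivity)
      _ = (6 * ε * p) * |ν| := by ring
      _ ≤ (6 * ε * p) * |yr| := mul_le_mul_of_nonneg_left a5 (by positivity)
  have a9 : |h p - hR p| * s ≤ 6 * ε * p := by
    rw [← mul_assoc] at a8; exact le_of_mul_le_mul_right a8 hyp
  exact (mul_le_mul_of_nonneg_left hcs A).trans a9

theorem perMu (P : Pair fl fli fr fri gl gli gr gri hL kL hR kR b c lam C ν xl xr yl yr)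
    (hmm : (StrictMono fr ∧ StrictMono fri ∧ StrictMono gr ∧ StrictMono gri) ∨
      (StrictAnti fr ∧ StrictAnti fri ∧ StrictAnti gr ∧ StrictAnti gri))
    (haff : ∀ y, gr y = ν + s * y) (hp : 0 < p) (hε0 : 0 ≤ ε) (hε1 : ε ≤ 1)
    (nL : ∀ x, |x| ≤ 2 * p → |hL x - x| ≤ ε * |x|) (nR : ∀ x, |x| ≤ 2 * p → |hR x - x| ≤ ε * |x|)
    (hνp : |ν| ≤ p) (hyr : |yr| ≤ p) (hδ1 : δ ≤ 1) (hδ : ε * (1 + 6 / c) < δ) :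
    ∃ qm qp, qm < 0 ∧ 0 < qp ∧ (1 - δ) * p < |qm| ∧ |qm| < (1 + δ) * p ∧
      (1 - δ) * p < |qp| ∧ |qp| < (1 + δ) * p ∧
      (ν ≤ 0 → ∃ h k, GC (pc 0 fl fr) (pc 0 gl gr) h k (Set.Ioo (-p) p) (Set.Ioo qm qp)) ∧
      (0 < ν → StrictMono fr →
        (∃ h k, GC (pc 0 fl fr) (pc 0 gl gr) h k (Set.Ioo xl p) (Set.Ioo yl qp)) ∧
        (∃ h k, GC (pc 0 fl fr) (pc 0 gl gr) h k (Set.Ioo (-p) xr) (Set.Ioo qm yr))) ∧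
      (0 < ν → StrictAnti fr →
        (∃ h k, GC (pc 0 fl fr) (pc 0 gl gr) h k (Set.Ioo xl (fri xl)) (Set.Ioo yl (gri yl))) ∧
        (∃ h k, GC (pc 0 fl fr) (pc 0 gl gr) h k (Set.Ioo (-p) 0) (Set.Ioo qm 0))) := by
  have hc := P.f.c0
  have pp : |p| = p := abs_of_pos hp
  have hεδ : ε < δ := by
    have : 0 ≤ ε * (6 / c) := by positivity
    linarith
  have hmL : hL (-p) < 0 := by have := P.L.sm (show -p < 0 by linarith); rwa [P.L.h0] at this
  have hpR : 0 < hR p := by have := P.R.sm hp; rwa [P.R.h0] at this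
  have q1 := nL (-p) (by rw [abs_neg, pp]; linarith)
  have q2 := nR p (by rw [pp]; linarith)
  rw [abs_neg, pp] at q1
  rw [pp] at q2
  have bm : (1 - δ) * p < |hL (-p)| ∧ |hL (-p)| < (1 + δ) * p := by
    rw [abs_of_neg hmL]
    rw [abs_le] at q1
    constructor <;> nlinarith
  have bqp : ∀ q, 0 < q → |q - hR p| * c ≤ 6 * ε * p → (1 - δ) * p < |q| ∧ |q| < (1 + δ) * p := by
    intro q hq h
    rw [abs_of_pos hq]
    have h1 : |q - hR p| ≤ 6 * ε * p / c := by rw [le_div_iff₀ hc]; exact h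
    have h2 := abs_sub_le q (hR p) p
    have h3 : |q - p| < δ * p := by
      calc |q - p| ≤ 6 * ε * p / c + ε * p := by linarith
        _ = ε * (1 + 6 / c) * p := by ring
        _ < δ * p := mul_lt_mul_of_pos_right hδ hp
    rw [abs_lt] at h3
    constructor <;> linarith
  have bR : (1 - δ) * p < |hR p| ∧ |hR p| < (1 + δ) * p :=
    bqp _ hpR (by simp; positivity)
  rcases le_or_gt ν 0 with hν | hν
  · have main : ∃ h k, GC (pc 0 fl fr) (pc 0 gl gr) h k Set.univ Set.univ ∧ (∀ x ≤ 0, h x = hL x) ∧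
        |h p - hR p| * c ≤ 6 * ε * p := by
      rcases hmm with ⟨m, mi, m', mi'⟩ | ⟨m, mi, m', mi'⟩
      · rcases hν.lt_or_eq with hν | hν
        · obtain ⟨h, k, H, e1, e2⟩ := case1 P m m' mi mi' hν
          exact ⟨h, k, H, e1, est1 P m m' hν hp hε1 nL nR hνp hyr haff e1 e2⟩
        · obtain ⟨h, k, H, e1, e2⟩ := case0 P m hν
          refine ⟨h, k, H, e1, ?_⟩
          rw [e2 p hp]; simp; positivity
      · obtain ⟨h, k, H, e1, e2⟩ := caseN P m mi' hν
        refine ⟨h, k, H, e1, ?_⟩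
        have a1 := P.g.lor (h p) (hR p)
        rw [(e2 p hp).2, ← P.R.rel] at a1
        have a2 := P.f.cor p 0
        rw [P.f.r0, sub_zero, pp] at a2
        have a3 : |fr p| ≤ 2 * p := by
          have := abs_sub_abs_le_abs_sub (fr p) ν
          nlinarith [P.f.lm1]
        have b1 := nL _ a3
        have b2 := nR _ a3
        have b3 := abs_sub_le (hL (fr p)) (fr p) (hR (fr p))
        rw [abs_sub_comm (fr p)] at b3
        nlinarith
    obtain ⟨h, k, H, e1, e2⟩ := main
    have e0 : h (-p) = hL (-p) := e1 _ (by linarith)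
    have e00 : h 0 = 0 := by rw [e1 0 le_rfl, P.L.h0]
    obtain ⟨R1, R2⟩ := gc_restrict H hp (by rw [e0, e00]; exact hmL)
    rw [e00] at R2
    rw [e0] at R1
    refine ⟨hL (-p), h p, hmL, R2, bm.1, bm.2, (bqp _ R2 e2).1, (bqp _ R2 e2).2, fun _ => ⟨h, k, R1⟩,
      fun q => absurd q (not_lt.2 hν), fun q => absurd q (not_lt.2 hν)⟩
  · refine ⟨hL (-p), hR p, hmL, hpR, bm.1, bm.2, bR.1, bR.2, fun q => absurd hν (not_lt.2 q), ?_, ?_⟩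
    · intro _ hm
      rcases hmm with ⟨m, mi, m', mi'⟩ | ⟨m, mi, m', mi'⟩
      · exact ⟨case2 P m m' hν hp, case3 P m m' mi mi' hν hp⟩
      · exact absurd (m (show (0:ℝ) < 1 by norm_num)) (not_lt.2 (hm (show (0:ℝ) < 1 by norm_num)).le)
    · intro _ hm
      rcases hmm with ⟨m, mi, m', mi'⟩ | ⟨m, mi, m', mi'⟩
      · exact absurd (m (show (0:ℝ) < 1 by norm_num)) (not_lt.2 (hm (show (0:ℝ) < 1 by norm_num)).le)
      · exact ⟨case4 P m m' mi mi' hν, hL, kL, case4b P⟩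

end

end SN


namespace SN

lemma GC.dconj {f g h k : ℝ → ℝ} {U V : Set ℝ} (H : GC f g h k U V) : DiffConjOn f g U V := by
  refine ⟨h, ⟨⟨H.m1, ?_, ?_⟩, fun x hx => (H.c1 x hx).contDiffWithinAt, k, ⟨H.i1, H.i2⟩,
    fun x hx => (H.c2 x hx).contDiffWithinAt⟩, H.rel⟩
  · intro x hx y hy e
    rw [← H.i1 x hx, ← H.i1 y hy, e]
  · intro y hy
    exact ⟨k y, H.m2 y hy, H.i2 y hy⟩

section
variable {fl fli fr fri F : ℝ → ℝ} {b c lam ν xl xr p q : ℝ}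

lemma basin_attr (S : Side fl fli fr fri b c lam ν xl xr) (m : StrictMono fr) (hν : 0 < ν)
    (hF : ∀ x ∈ Set.Ioo p q, F x = pc 0 fl fr x) (hp : p < xl) (hq : xr < q) :
    basinAttr F (Set.Ioo p q) xr = Set.Ioo xl q := by
  have hxl := S.xl_neg hν
  have hxr := S.xr_pos hν
  have hνr : ν < xr := by have := m hxr; rwa [S.r0, S.fxr] at this
  have H := hh2 S m hν
  have st : ∀ y ∈ Set.Ioo xl q, F y ∈ Set.Ioo xl q := by
    intro y hy
    have h1 := H.FU y hy.1
    rw [hF y ⟨hp.trans hy.1, hy.2⟩]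
    refine ⟨h1, ?_⟩
    rcases le_or_gt y 0 with h | h
    · rw [pc_le h]
      have := S.ml.monotone h
      rw [S.l0] at this; linarith
    · rw [pc_gt h]
      rcases le_or_gt y xr with h' | h'
      · have := m.monotone h'
        rw [S.fxr] at this; linarith
      · have h2 := S.cor y xr
        have h3 := m h'
        rw [S.fxr] at h2 h3
        rw [abs_of_pos (by linarith), abs_of_pos (by linarith)] at h2
        have := hy.2
        nlinarith [S.lm1]
  have sti : ∀ x ∈ Set.Ioo xl q, ∀ n : ℕ, F^[n] x ∈ Set.Ioo xl q ∧
      F^[n] x = (pc 0 fl fr)^[n] x := by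
    intro x hx n
    induction n with
    | zero => exact ⟨hx, rfl⟩
    | succ n ih =>
      rw [Function.iterate_succ_apply', Function.iterate_succ_apply', ← ih.2]
      exact ⟨st _ ih.1, hF _ ⟨hp.trans ih.1.1, ih.1.2⟩⟩
  ext x
  constructor
  · rintro ⟨hx, h1, h2⟩
    refine ⟨?_, hx.2⟩
    by_contra hh
    push Not at hh
    have : ∀ n : ℕ, F^[n] x ≤ xl := by
      intro n
      induction n with
      | zero => exact hh
      | succ n ih =>
        rw [Function.iterate_succ_apply', hF _ (h1 n), pc_le (by linarith)]
        have := S.ml.monotone ih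
        rwa [S.fxl] at this
    have := le_of_tendsto h2 (Filter.Eventually.of_forall this)
    linarith
  · intro hx
    refine ⟨⟨hp.trans hx.1, hx.2⟩, fun n => ?_, ?_⟩
    · have := (sti x hx n).1
      exact ⟨hp.trans this.1, this.2⟩
    · have e : (fun n => F^[n] x) = fun n => (pc 0 fl fr)^[n] x := funext fun n => (sti x hx n).2
      rw [e]
      obtain ⟨N, hN⟩ := H.reach x hx.1
      rw [← Filter.tendsto_add_atTop_iff_nat N]
      have key : ∀ n : ℕ, (pc 0 fl fr)^[n + N] x ∈ Set.Ioi (0:ℝ) ∧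
          (pc 0 fl fr)^[n + N] x = fr^[n] ((pc 0 fl fr)^[N] x) := by
        intro n
        induction n with
        | zero => simpa using hN
        | succ n ih =>
          rw [show n + 1 + N = (n + N) + 1 by ring, Function.iterate_succ_apply',
            Function.iterate_succ_apply', ← ih.2]
          exact ⟨H.FA _ ih.1, pc_gt ih.1⟩
      exact (S.tr _).congr fun n => (key n).2.symm

lemma basin_rep (S : Side fl fli fr fri b c lam ν xl xr) (m : StrictMono fr) (mi : StrictMono fri)
    (hν : 0 < ν)
    (hF : ∀ x ∈ Set.Ioo p q, F x = pc 0 fl fr x) (hp : p < xl) (hq : xr < q) :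
    basinRep F (Set.Ioo p q) xl = Set.Ioo p xr := by
  have hxl := S.xl_neg hν
  have hxr := S.xr_pos hν
  have hνr : ν < xr := by have := m hxr; rwa [S.r0, S.fxr] at this
  have H := hh3 S m mi hν
  have st : ∀ y ∈ Set.Ioo p xr, pc ν fli fri y ∈ Set.Ioo p xr := by
    intro y hy
    have h1 := H.FU y hy.2
    refine ⟨?_, h1⟩
    rcases le_or_gt y ν with h | h
    · rw [pc_le h]
      rcases le_or_gt xl y with h' | h'
      · have := S.mli.monotone h'
        rw [S.lixl] at this; linarith
      · have h2 := S.exl (fli y) xl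
        have h3 := S.mli h'
        rw [S.dl.ri, S.fxl] at h2
        rw [S.lixl] at h3
        rw [abs_of_neg (by linarith), abs_of_neg (by linarith)] at h2
        have := hy.1
        nlinarith [S.b1]
    · rw [pc_gt h]
      have := mi h
      rw [S.ri0] at this
      linarith
  ext x
  constructor
  · rintro ⟨hx, u, u0, h1, h2, h3⟩
    refine ⟨hx.1, ?_⟩
    by_contra hh
    push Not at hh
    have : ∀ n : ℕ, xr ≤ u n := by
      intro n
      induction n with
      | zero => rwa [u0]
      | succ n ih =>
        have e := h2 n
        rw [hF _ (h1 _)] at e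
        by_contra hc
        push Not at hc
        have : u n < xr := by
          rw [← e]
          rcases le_or_gt (u (n+1)) 0 with h | h
          · rw [pc_le h]
            have := S.ml.monotone h
            rw [S.l0] at this; linarith
          · rw [pc_gt h]
            have := m hc
            rwa [S.fxr] at this
        linarith
    have := ge_of_tendsto h3 (Filter.Eventually.of_forall this)
    linarith
  · intro hx
    have sti : ∀ n : ℕ, (pc ν fli fri)^[n] x ∈ Set.Ioo p xr := by
      intro n
      induction n with
      | zero => exact hx
      | succ n ih => rw [Function.iterate_succ_apply']; exact st _ ih
    refine ⟨⟨hx.1, hx.2.trans hq⟩, fun n => (pc ν fli fri)^[n] x, rfl,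
      fun n => ⟨(sti n).1, (sti n).2.trans hq⟩, fun n => ?_, ?_⟩
    · rw [hF _ ⟨(sti _).1, (sti _).2.trans hq⟩, Function.iterate_succ_apply', pc_inv' S mi]
    · obtain ⟨N, hN⟩ := H.reach x hx.2
      rw [← Filter.tendsto_add_atTop_iff_nat N]
      have key : ∀ n : ℕ, (pc ν fli fri)^[n + N] x ∈ Set.Iio ν ∧
          (pc ν fli fri)^[n + N] x = fli^[n] ((pc ν fli fri)^[N] x) := by
        intro n
        induction n with
        | zero => simpa using hN
        | succ n ih =>
          rw [show n + 1 + N = (n + N) + 1 by ring, Function.iterate_succ_apply',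
            Function.iterate_succ_apply', ← ih.2]
          exact ⟨H.FA _ ih.1, pc_le (le_of_lt ih.1)⟩
      exact (S.tl _).congr fun n => (key n).2.symm

end
end SN


namespace SN

lemma ext_glob {f f' : ℝ → ℝ} {P K : ℝ} (hP : 0 < P)
    (hd : ∀ x, |x| ≤ P → HasDerivAt f (f' x) x)
    (lip : ∀ x y, |x| ≤ P → |y| ≤ P → |f' x - f' y| ≤ K * |x - y|) (hK : 0 ≤ K) :
    ∃ F F' : ℝ → ℝ, (∀ x, HasDerivAt F (F' x) x) ∧ (∀ x, |x| ≤ P → F x = f x ∧ F' x = f' x) ∧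
      (∀ x y, |F' x - F' y| ≤ K * |x - y|) ∧
      ∀ Q : ℝ → Prop, (∀ x, |x| ≤ P → Q (f' x)) → ∀ x, Q (F' x) := by
  set cl : ℝ → ℝ := fun x => max (-P) (min P x) with hcl
  have c1 : ∀ x, |cl x| ≤ P := by
    intro x
    rw [abs_le]
    exact ⟨le_max_left _ _, max_le (by linarith) (min_le_left _ _)⟩
  have c2 : ∀ x y, |cl x - cl y| ≤ |x - y| := by
    intro x y
    have h1 := abs_max_sub_max_le_max (-P) (min P x) (-P) (min P y)
    have h2 := abs_min_sub_min_le_max P x P y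
    simp only [sub_self, abs_zero] at h1 h2
    rw [max_eq_right (abs_nonneg (min P x - min P y))] at h1
    rw [max_eq_right (abs_nonneg (x - y))] at h2
    exact h1.trans h2
  have c3 : ∀ x, |x| ≤ P → cl x = x := by
    intro x hx
    rw [abs_le] at hx
    simp only [hcl]
    rw [min_eq_right hx.2, max_eq_right hx.1]
  have lp : ∀ x y, |f' (cl x) - f' (cl y)| ≤ K * |x - y| := fun x y =>
    (lip _ _ (c1 x) (c1 y)).trans (mul_le_mul_of_nonneg_left (c2 x y) hK)
  have hc : Continuous (fun x => f' (cl x)) := lip_cont hK lp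
  refine ⟨fun x => f 0 + ∫ s in (0:ℝ)..x, f' (cl s), fun x => f' (cl x), ?_, ?_, lp,
    fun Q h x => h _ (c1 x)⟩
  · intro x
    exact (intervalIntegral.integral_hasDerivAt_right (hc.intervalIntegrable _ _)
      (hc.stronglyMeasurableAtFilter _ _) hc.continuousAt).const_add _
  · intro x hx
    refine ⟨?_, by simp only [c3 x hx]⟩
    have : ∫ s in (0:ℝ)..x, f' (cl s) = f x - f 0 := by
      apply intervalIntegral.integral_eq_sub_of_hasDerivAt _ (hc.intervalIntegrable _ _)
      intro s hs
      have hs' : |s| ≤ P := by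
        rw [abs_le] at hx ⊢
        have := Set.uIcc_subset_Icc (show (0:ℝ) ∈ Set.Icc (-P) P from ⟨by linarith, hP.le⟩)
          (show x ∈ Set.Icc (-P) P from hx) hs
        exact this
      rw [c3 s hs']
      exact hd s hs'
    simp only [this]; ring

set_option maxHeartbeats 1000000 in
theorem perMu2 {φL φR DL DR : ℝ → ℝ} {b B c lam K C P ν xl xr yl yr sL sR t E δ : ℝ}
    (hb : 1 < b) (hc : 0 < c) (hl : lam < 1) (hK : 0 ≤ K) (hC : 0 ≤ C)
    (hCl : K / (1 / B * (1 - 1 / b)) ≤ C) (hCr : K / (c * (1 - lam)) ≤ C) (hP : 0 < P)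
    (dL : ∀ x, |x| ≤ P → HasDerivAt φL (DL x) x) (dR : ∀ x, |x| ≤ P → HasDerivAt φR (DR x) x)
    (lL : ∀ x y, |x| ≤ P → |y| ≤ P → |DL x - DL y| ≤ K * |x - y|)
    (lR : ∀ x y, |x| ≤ P → |y| ≤ P → |DR x - DR y| ≤ K * |x - y|)
    (bL : ∀ x, |x| ≤ P → b ≤ DL x ∧ DL x ≤ B)
    (bR : ∀ x, |x| ≤ P → c ≤ |DR x| ∧ |DR x| ≤ lam)
    (sg : (∀ x, |x| ≤ P → 0 < DR x) ∨ (∀ x, |x| ≤ P → DR x < 0))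
    (fL0 : φL 0 = ν) (fR0 : φR 0 = ν) (fxl : φL xl = xl) (fxr : φR xr = xr)
    (gB : ∀ y, |y| ≤ P → b ≤ sL + 2 * t * y ∧ sL + 2 * t * y ≤ B) (ht : |2 * t| ≤ K)
    (fyl : ν + sL * yl + t * yl ^ 2 = yl) (fyr : ν + sR * yr = yr)
    (eL : sL + 2 * t * yl = DL xl) (eR : sR = DR xr) (ek : DL 0 * sR = DR 0 * sL)
    (hxl : |xl| ≤ P / 8) (hxr : |xr| ≤ P / 8) (hyl : |yl| ≤ P / 8) (hyr : |yr| ≤ P / 8)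
    (hν : |ν| ≤ P / 8) (hw : |xl| + |ν| ≤ c * P) (hz : |yl| + |ν| ≤ c * P)
    (hE : Real.exp (3 * C * P) = E) (hE2 : E ^ 4 < 2)
    (hδ : δ ≤ 1 / 2) (hεδ : (E ^ 4 - 1) * (1 + 6 / c) < δ)
    {f : ℝ → ℝ} (hf : ∀ x, f x = if x ≤ 0 then φL x else φR x) :
    ∃ qm qp, qm < 0 ∧ 0 < qp ∧ (1 - δ) * (P / 2) < |qm| ∧ |qm| < (1 + δ) * (P / 2) ∧
      (1 - δ) * (P / 2) < |qp| ∧ |qp| < (1 + δ) * (P / 2) ∧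
      (ν ≤ 0 → DiffConjOn f (enf ν sL sR t) (Set.Ioo (-(P / 2)) (P / 2)) (Set.Ioo qm qp)) ∧
      (0 < ν → 0 < DR 0 →
      xl < 0 ∧ 0 < xr ∧ xl ∈ Set.Ioo (-(P / 2)) (P / 2) ∧ xr ∈ Set.Ioo (-(P / 2)) (P / 2) ∧
      yl < 0 ∧ 0 < yr ∧ yl ∈ Set.Ioo qm qp ∧ yr ∈ Set.Ioo qm qp ∧
      enf ν sL sR t yl = yl ∧ enf ν sL sR t yr = yr ∧
      |deriv φR xr| < 1 ∧ 1 < |deriv φL xl| ∧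
      DiffConjOn f (enf ν sL sR t)
        (basinAttr f (Set.Ioo (-(P / 2)) (P / 2)) xr)
        (basinAttr (enf ν sL sR t) (Set.Ioo qm qp) yr) ∧
      DiffConjOn f (enf ν sL sR t)
        (basinRep f (Set.Ioo (-(P / 2)) (P / 2)) xl)
        (basinRep (enf ν sL sR t) (Set.Ioo qm qp) yl)) ∧
      (0 < ν → DR 0 < 0 → ∃ w z : ℝ,
      xl < 0 ∧ yl < 0 ∧ enf ν sL sR t yl = yl ∧
      0 < w ∧ φR w = xl ∧ 0 < z ∧ ν + sR * z = yl ∧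
      DiffConjOn f (enf ν sL sR t) (Set.Ioo xl w) (Set.Ioo yl z) ∧
      DiffConjOn f (enf ν sL sR t)
        {x ∈ Set.Ioo (-(P / 2)) (P / 2) | x < 0} {y ∈ Set.Ioo qm qp | y < 0}) := by
  obtain ⟨fl, fl', a1, a2, a3, a4⟩ := ext_glob hP dL lL hK
  obtain ⟨fr, fr', b1, b2, b3, b4⟩ := ext_glob hP dR lR hK
  obtain ⟨gl, gl', c1, c2, c3, c4⟩ := ext_glob (f := fun y => ν + sL * y + t * y ^ 2)
    (f' := fun y => sL + 2 * t * y) (K := K) hP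
    (fun x _ => by
      have h1 : HasDerivAt (fun y : ℝ => ν + sL * y + t * y ^ 2)
          (sL * 1 + t * ((2 : ℕ) * x ^ (2 - 1) * 1)) x := by
        exact (((hasDerivAt_id x).const_mul sL).const_add ν).add
          (((hasDerivAt_id x).pow 2).const_mul t)
      convert h1 using 1
      norm_num; ring)
    (fun x y _ _ => by
      rw [show sL + 2 * t * x - (sL + 2 * t * y) = 2 * t * (x - y) by ring, abs_mul]
      exact mul_le_mul_of_nonneg_right ht (abs_nonneg _)) hK
  have p0 : |(0:ℝ)| ≤ P := by rw [abs_zero]; exact hP.le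
  have pxl : |xl| ≤ P := by linarith
  have pxr : |xr| ≤ P := by linarith
  have pyl : |yl| ≤ P := by linarith
  have pyr : |yr| ≤ P := by linarith
  have M : Mod fl fl' fr fr' b B c lam K ν xl xr := by
    refine ⟨⟨hb, hK, a1, a4 _ fun x hx => (bL x hx).1, a4 (fun d => d ≤ B) fun x hx => (bL x hx).2, a3,
      by rw [(a2 _ pxl).1, fxl]⟩, ⟨hc, hl, hK, b1, b4 (fun d => c ≤ |d|) fun x hx => (bR x hx).1,
      b4 (fun d => |d| ≤ lam) fun x hx => (bR x hx).2, ?_, b3, by rw [(b2 _ pxr).1, fxr]⟩,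
      by rw [(a2 _ p0).1, fL0], by rw [(b2 _ p0).1, fR0]⟩
    rcases sg with h | h
    · left; exact b4 _ h
    · right; exact b4 (fun d => d < 0) h
  have sg' : 0 < sR ∨ sR < 0 := by
    rw [eR]
    rcases sg with h | h
    · left; exact h _ pxr
    · right; exact h _ pxr
  have M' : Mod gl gl' (fun y => ν + sR * y) (fun _ => sR) b B c lam K ν yl yr := by
    refine ⟨⟨hb, hK, c1, c4 _ fun x hx => (gB x hx).1, c4 (fun d => d ≤ B) fun x hx => (gB x hx).2, c3,
      by rw [(c2 _ pyl).1, fyl]⟩, ⟨hc, hl, hK, ?_, fun _ => by rw [eR]; exact (bR _ pxr).1,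
      fun _ => by rw [eR]; exact (bR _ pxr).2, ?_, ?_, fyr⟩, by rw [(c2 _ p0).1]; ring, by ring⟩
    · intro x
      simpa using ((hasDerivAt_id x).const_mul sR).const_add ν
    · rcases sg' with h | h
      · left; exact fun _ => h
      · right; exact fun _ => h
    · intro x y; simp; positivity
  obtain ⟨fli, fri, gli, gri, hL, kL, hR, kR, Pr, m1, m2, m3, m4⟩ := pair M M'
    (by rw [(c2 _ pyl).2, (a2 _ pxl).2, eL]) (by rw [(b2 _ pxr).2, eR])
    (by rw [(a2 _ p0).2, (b2 _ p0).2, (c2 _ p0).2, ek]; ring) hC hCl hCr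
  have hE1 : 1 ≤ E := by rw [← hE]; exact Real.one_le_exp (by positivity)
  have hE4 : 1 ≤ E ^ 4 := one_le_pow₀ hE1
  have hmono : 0 < DR 0 → (StrictMono fr ∧ StrictMono fri ∧ StrictMono (fun y => ν + sR * y) ∧
      StrictMono gri) := by
    intro h0
    have h : ∀ x, |x| ≤ P → 0 < DR x := by
      rcases sg with h | h
      · exact h
      · have := h 0 p0; linarith
    have h1 := m1 (b4 _ h)
    have h2 := m3 (fun _ => by rw [eR]; exact h _ pxr)
    exact ⟨h1.1, h1.2, h2.1, h2.2⟩
  have hanti : DR 0 < 0 → (StrictAnti fr ∧ StrictAnti fri ∧ StrictAnti (fun y => ν + sR * y) ∧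
      StrictAnti gri) := by
    intro h0
    have h : ∀ x, |x| ≤ P → DR x < 0 := by
      rcases sg with h | h
      · have := h 0 p0; linarith
      · exact h
    have h1 := m2 (b4 (fun d => d < 0) h)
    have h2 := m4 (fun _ => by rw [eR]; exact h _ pxr)
    exact ⟨h1.1, h1.2, h2.1, h2.2⟩
  have hmm : (StrictMono fr ∧ StrictMono fri ∧ StrictMono (fun y => ν + sR * y) ∧ StrictMono gri) ∨
      (StrictAnti fr ∧ StrictAnti fri ∧ StrictAnti (fun y => ν + sR * y) ∧ StrictAnti gri) := by
    rcases sg with h | h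
    · left; exact hmono (h 0 p0)
    · right; exact hanti (h 0 p0)
  obtain ⟨qm, qp, e1, e2, e3, e4, e5, e6, e7, e8, e9⟩ := perMu (p := P / 2) (ε := E ^ 4 - 1) (δ := δ)
    (s := sR) Pr hmm (fun _ => rfl) (by linarith) (by linarith) (by linarith)
    (fun x hx => Pr.L.near pxl pyl (by linarith) hE.le hE2 (by linarith))
    (fun x hx => Pr.R.near pxr pyr (by linarith) hE.le hE2 (by linarith))
    (by linarith) (by linarith) (by linarith) hεδ
  have ff : ∀ x, |x| ≤ P → f x = pc 0 fl fr x := by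
    intro x hx
    rw [hf, pc, (a2 x hx).1, (b2 x hx).1]
  have gg : ∀ x, |x| ≤ P → enf ν sL sR t x = pc 0 gl (fun y => ν + sR * y) x := by
    intro x hx
    rw [enf, pc, (c2 x hx).1]
  have ffI : ∀ x ∈ Set.Ioo (-(P/2)) (P/2), f x = pc 0 fl fr x := fun x hx =>
    ff x (abs_le.2 ⟨by linarith [hx.1], by linarith [hx.2]⟩)
  rw [abs_of_neg e1] at e3 e4
  rw [abs_of_pos e2] at e5 e6
  have hδP : δ * (P / 2) ≤ 1 / 2 * (P / 2) := mul_le_mul_of_nonneg_right hδ (by linarith)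
  have hq1 : qm < -(P / 8) := by linarith
  have hq2 : P / 8 < qp := by linarith
  have ggI : ∀ x ∈ Set.Ioo qm qp, enf ν sL sR t x = pc 0 gl (fun y => ν + sR * y) x := fun x hx =>
    gg x (abs_le.2 ⟨by linarith [hx.1], by linarith [hx.2]⟩)
  rw [abs_le] at hxl hxr hyl hyr
  have gyl : enf ν sL sR t yl = yl ∨ 0 ≤ yl := by
    rcases lt_or_ge yl 0 with h | h
    · left; rw [enf, if_pos h.le, fyl]
    · right; exact h
  refine ⟨qm, qp, e1, e2, by rwa [abs_of_neg e1], by rwa [abs_of_neg e1], by rwa [abs_of_pos e2],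
    by rwa [abs_of_pos e2], ?_, ?_, ?_⟩
  · intro h
    obtain ⟨h, k, H⟩ := e7 h
    exact (H.congr ffI ggI).dconj
  · intro h h0
    obtain ⟨n1, n2, n3, n4⟩ := hmono h0
    obtain ⟨⟨h1, k1, H1⟩, ⟨h2, k2, H2⟩⟩ := e8 h n1
    have yl0 := Pr.g.xl_neg h
    have yr0 := Pr.g.xr_pos h
    have xl0 := Pr.f.xl_neg h
    have xr0 := Pr.f.xr_pos h
    refine ⟨xl0, xr0, ⟨by linarith, by linarith⟩, ⟨by linarith, by linarith⟩, yl0, yr0,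
      ⟨by linarith, by linarith⟩, ⟨by linarith, by linarith⟩, by rw [enf, if_pos yl0.le, fyl],
      by rw [enf, if_neg (by linarith), fyr], ?_, ?_, ?_, ?_⟩
    · rw [(dR _ pxr).deriv]; linarith [(bR _ pxr).2]
    · rw [(dL _ pxl).deriv]; exact lt_of_lt_of_le (lt_of_lt_of_le hb (bL _ pxl).1) (le_abs_self _)
    · rw [basin_attr Pr.f n1 h ffI (by linarith) (by linarith),
        basin_attr Pr.g n3 h ggI (by linarith) (by linarith)]
      exact (H1.congr (fun x hx => ffI x ⟨by linarith [hx.1], hx.2⟩)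
        (fun x hx => ggI x ⟨by linarith [hx.1], hx.2⟩)).dconj
    · rw [basin_rep Pr.f n1 n2 h ffI (by linarith) (by linarith),
        basin_rep Pr.g n3 n4 h ggI (by linarith) (by linarith)]
      exact (H2.congr (fun x hx => ffI x ⟨hx.1, by linarith [hx.2]⟩)
        (fun x hx => ggI x ⟨hx.1, by linarith [hx.2]⟩)).dconj
  · intro h h0
    obtain ⟨n1, n2, n3, n4⟩ := hanti h0
    obtain ⟨⟨h1, k1, H1⟩, ⟨h2, k2, H2⟩⟩ := e9 h n1
    have yl0 := Pr.g.xl_neg h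
    have xl0 := Pr.f.xl_neg h
    have w0 : 0 < fri xl := by
      have := n2 (xl0.trans h)
      rwa [Pr.f.ri0] at this
    have z0 : 0 < gri yl := by
      have := n4 (yl0.trans h)
      rwa [Pr.g.ri0] at this
    have hw' : |fri xl| ≤ P := by
      have q := Pr.f.lor (fri xl) 0
      rw [Pr.f.dr.ri, Pr.f.r0, sub_zero] at q
      have := abs_sub xl ν
      exact le_of_mul_le_mul_left (by linarith) hc
    have hz' : |gri yl| ≤ P := by
      have q := Pr.g.lor (gri yl) 0
      rw [Pr.g.dr.ri, Pr.g.r0, sub_zero] at q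
      have := abs_sub yl ν
      exact le_of_mul_le_mul_left (by linarith) hc
    rw [abs_le] at hw' hz'
    refine ⟨fri xl, gri yl, xl0, yl0, by rw [enf, if_pos yl0.le, fyl], w0, ?_, z0, ?_, ?_, ?_⟩
    · rw [← (b2 _ (abs_le.2 hw')).1, Pr.f.dr.ri]
    · exact Pr.g.dr.ri yl
    · exact (H1.congr (fun x hx => ff x (abs_le.2 ⟨by linarith [hx.1], by linarith [hx.2]⟩))
        (fun x hx => gg x (abs_le.2 ⟨by linarith [hx.1], by linarith [hx.2]⟩))).dconj
    · have s1 : {x ∈ Set.Ioo (-(P / 2)) (P / 2) | x < 0} = Set.Ioo (-(P/2)) 0 := by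
        ext x
        simp only [Set.mem_setOf_eq, Set.mem_Ioo]
        constructor
        · rintro ⟨q, r⟩; exact ⟨q.1, r⟩
        · rintro ⟨q, r⟩; exact ⟨⟨q, by linarith⟩, r⟩
      have s2 : {y ∈ Set.Ioo qm qp | y < 0} = Set.Ioo qm 0 := by
        ext x
        simp only [Set.mem_setOf_eq, Set.mem_Ioo]
        constructor
        · rintro ⟨q, r⟩; exact ⟨q.1, r⟩
        · rintro ⟨q, r⟩; exact ⟨⟨q, by linarith⟩, r⟩
      rw [s1, s2]
      exact (H2.congr (fun x hx => ffI x ⟨hx.1, by linarith [hx.2]⟩)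
        (fun x hx => ggI x ⟨hx.1, by linarith [hx.2]⟩)).dconj

end SN


namespace SN
open Topology

lemma ev_box {Q : ℝ × ℝ → Prop} (h : ∀ᶠ p in 𝓝 ((0:ℝ), (0:ℝ)), Q p) :
    ∃ r > 0, ∀ x μ : ℝ, |x| < r → |μ| < r → Q (x, μ) := by
  obtain ⟨r, hr, H⟩ := Metric.eventually_nhds_iff.1 h
  refine ⟨r, hr, fun x μ hx hμ => H ?_⟩
  rw [Prod.dist_eq, max_lt_iff]
  simpa [Real.dist_eq] using And.intro hx hμ

lemma branch {f : ℝ → ℝ → ℝ} {a : ℝ} (hf : ContDiffAt ℝ 3 (fun p : ℝ × ℝ => f p.1 p.2) (0, 0))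
    (f0 : f 0 0 = 0) (ha : deriv (fun x => f x 0) 0 = a) (ha1 : a ≠ 1) :
    ∃ (D : ℝ → ℝ → ℝ) (X : ℝ → ℝ) (K : ℝ), 0 ≤ K ∧
      ContDiffAt ℝ 1 (fun p : ℝ × ℝ => D p.1 p.2) (0, 0) ∧ D 0 0 = a ∧ ContDiffAt ℝ 1 X 0 ∧
      X 0 = 0 ∧ (∀ᶠ μ in 𝓝 0, f (X μ) μ = X μ) ∧
      ∃ r > 0, ∀ μ, |μ| < r → (∀ x, |x| < r → HasDerivAt (fun x => f x μ) (D x μ) x) ∧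
        ∀ x y, |x| < r → |y| < r → |D x μ - D y μ| ≤ K * |x - y| := by
  set F : ℝ × ℝ → ℝ := fun p => f p.1 p.2 with hF
  set D : ℝ → ℝ → ℝ := fun x μ => fderiv ℝ F (x, μ) (1, 0) with hD
  have cD : ContDiffAt ℝ 1 (fun p : ℝ × ℝ => D p.1 p.2) (0, 0) := by
    have h1 : ContDiffAt ℝ 1 (fderiv ℝ F) (0, 0) := hf.fderiv_right (by norm_num)
    exact h1.clm_apply contDiffAt_const
  have hdiff : ∀ x μ, DifferentiableAt ℝ F (x, μ) → HasDerivAt (fun x => f x μ) (D x μ) x := by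
    intro x μ h
    have h1 : HasDerivAt (fun x : ℝ => (x, μ)) ((1:ℝ), (0:ℝ)) x :=
      (hasDerivAt_id x).prodMk (hasDerivAt_const x μ)
    exact h.hasFDerivAt.comp_hasDerivAt x h1
  have ev1 : ∀ᶠ p in 𝓝 ((0:ℝ), (0:ℝ)), DifferentiableAt ℝ F p := by
    filter_upwards [hf.eventually (by decide)] with p hp
    exact hp.differentiableAt (by norm_num)
  have D0 : D 0 0 = a := by rw [← ha]; exact (hdiff 0 0 ev1.self_of_nhds).deriv.symm
  obtain ⟨K, s, hs, hl⟩ := cD.exists_lipschitzOnWith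
  set G : ℝ × ℝ → ℝ := fun p => f p.2 p.1 - p.2 with hG
  have cG : ContDiffAt ℝ 3 G (0, 0) := by
    have : ContDiffAt ℝ 3 (fun p : ℝ × ℝ => F (p.2, p.1)) (0, 0) :=
      ContDiffAt.comp (0, 0) (g := F) (f := fun p : ℝ × ℝ => (p.2, p.1)) hf
        (contDiffAt_snd.prodMk contDiffAt_fst)
    exact this.sub contDiffAt_snd
  have hinv : (fderiv ℝ G (0, 0) ∘L .inr ℝ ℝ ℝ).IsInvertible := by
    have e1 : fderiv ℝ G (0, 0) (0, 1) = a - 1 := by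
      have h1 : HasDerivAt (fun x : ℝ => ((0:ℝ), x)) ((0:ℝ), (1:ℝ)) 0 :=
        (hasDerivAt_const (0:ℝ) (0:ℝ)).prodMk (hasDerivAt_id (0:ℝ))
      have h2 := (cG.differentiableAt (by norm_num)).hasFDerivAt.comp_hasDerivAt (0:ℝ) h1
      have h3 : HasDerivAt (G ∘ fun x : ℝ => ((0:ℝ), x)) (a - 1) 0 := by
        have := hdiff 0 0 ev1.self_of_nhds
        rw [D0] at this
        exact this.sub (hasDerivAt_id 0)
      exact h2.unique h3
    refine ⟨ContinuousLinearEquiv.unitsEquivAut ℝ (Units.mk0 (a - 1) (sub_ne_zero.2 ha1)), ?_⟩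
    ext
    simp [e1]
  refine ⟨D, cG.implicitFunction (by norm_num) hinv, K, K.2, cD, D0, ?_, ?_, ?_, ?_⟩
  · exact (cG.contDiffAt_implicitFunction (by norm_num) hinv).of_le (by norm_num)
  · exact cG.implicitFunction_apply_self (by norm_num) hinv
  · filter_upwards [cG.eventually_apply_implicitFunction (by norm_num) hinv] with μ hμ
    simp only [hG, f0, sub_zero] at hμ
    linarith
  · obtain ⟨r, hr, H⟩ := ev_box (ev1.and hs)
    refine ⟨r, hr, fun μ hμ => ⟨fun x hx => hdiff _ _ (H x μ hx hμ).1, fun x y hx hy => ?_⟩⟩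
    have := hl.dist_le_mul _ (H x μ hx hμ).2 _ (H y μ hy hμ).2
    rw [Prod.dist_eq] at this
    simpa [Real.dist_eq] using this

lemma params {ν m sL sR : ℝ → ℝ} {aL aR β : ℝ} (cν : ContDiffAt ℝ 1 ν 0) (cm : ContDiffAt ℝ 1 m 0)
    (cs : ContDiffAt ℝ 1 sL 0) (cr : ContDiffAt ℝ 1 sR 0) (ν0 : ν 0 = 0) (hβ : deriv ν 0 = β)
    (hβ0 : 0 < β)
    (m0 : m 0 = aL) (s0 : sL 0 = aL) (r0 : sR 0 = aR) (hL : 1 < aL) (hR : |aR| < 1) :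
    ∃ t yL yR : ℝ → ℝ, (∀ᶠ μ in 𝓝 0, ContinuousAt t μ) ∧
      Filter.Tendsto yL (𝓝 0) (𝓝 0) ∧ Filter.Tendsto yR (𝓝 0) (𝓝 0) ∧
      (∀ᶠ μ in 𝓝 0, ν μ + sL μ * yL μ + t μ * yL μ ^ 2 = yL μ ∧ ν μ + sR μ * yR μ = yR μ ∧
        sL μ + 2 * t μ * yL μ = m μ) ∧ (∀ᶠ μ in 𝓝 0, (0 < μ → 0 < ν μ) ∧ (μ ≤ 0 → ν μ ≤ 0)) := by
  have evc : ∀ {φ : ℝ → ℝ}, ContDiffAt ℝ 1 φ 0 → ∀ᶠ μ in 𝓝 0, ContinuousAt φ μ := by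
    intro φ h
    filter_upwards [h.eventually (by decide)] with μ hμ using hμ.continuousAt
  have evd : ∀ {φ : ℝ → ℝ}, ContDiffAt ℝ 1 φ 0 → ∀ᶠ μ in 𝓝 0, ContinuousAt (dslope φ 0) μ := by
    intro φ h
    filter_upwards [evc h] with μ hμ
    rcases eq_or_ne μ 0 with e | e
    · rw [e]; exact continuousAt_dslope_same.2 (h.differentiableAt (by norm_num))
    · exact (continuousAt_dslope_of_ne e).2 hμ
  have cd := cm.sub cs
  have hdv := evd cν
  have hdd := evd cd
  have e0 : dslope ν 0 0 = β := by rw [dslope_same, hβ]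
  have hpos : ∀ᶠ μ in 𝓝 0, 0 < dslope ν 0 μ :=
    hdv.self_of_nhds.eventually (lt_mem_nhds (by rw [e0]; exact hβ0))
  have hsm : ∀ᶠ μ in 𝓝 0, 2 < sL μ + m μ :=
    (cs.add cm).continuousAt.eventually (lt_mem_nhds (by simp only [s0, m0]; linarith))
  have hr1 : ∀ᶠ μ in 𝓝 0, sR μ < 1 :=
    cr.continuousAt.eventually (gt_mem_nhds (by rw [r0]; exact (le_abs_self _).trans_lt hR))
  have eν : ∀ μ, ν μ = μ * dslope ν 0 μ := by
    intro μ
    have := sub_smul_dslope ν 0 μ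
    rw [ν0, sub_zero, sub_zero, smul_eq_mul] at this
    exact this.symm
  have ed : ∀ μ, m μ - sL μ = μ * dslope (m - sL) 0 μ := by
    intro μ
    have := sub_smul_dslope (m - sL) 0 μ
    rw [sub_zero, smul_eq_mul] at this
    simp only [Pi.sub_apply, m0, s0, sub_self, sub_zero] at this
    exact this.symm
  refine ⟨fun μ => -(dslope (m - sL) 0 μ * (sL μ + m μ - 2)) / (4 * dslope ν 0 μ),
    fun μ => ν μ / (1 - (sL μ + m μ) / 2), fun μ => ν μ / (1 - sR μ), ?_, ?_, ?_, ?_, ?_⟩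
  · filter_upwards [hdv, hdd, evc cs, evc cm, hpos] with μ h1 h2 h3 h4 h5
    exact ((h2.mul ((h3.add h4).sub continuousAt_const)).neg).div (continuousAt_const.mul h1)
      (by positivity)
  · have : ContinuousAt (fun μ => ν μ / (1 - (sL μ + m μ) / 2)) 0 :=
      cν.continuousAt.div (continuousAt_const.sub
        ((cs.continuousAt.add cm.continuousAt).div_const 2)) (by rw [s0, m0]; intro h; linarith)
    simpa [ContinuousAt, ν0] using this
  · have : ContinuousAt (fun μ => ν μ / (1 - sR μ)) 0 :=
      cν.continuousAt.div (continuousAt_const.sub cr.continuousAt)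
        (by rw [r0]; intro h; linarith [le_abs_self aR])
    simpa [ContinuousAt, ν0] using this
  · filter_upwards [hpos, hsm, hr1] with μ h1 h2 h3
    have hne : 1 - (sL μ + m μ) / 2 ≠ 0 := by intro h; linarith
    have hne2 : 1 - sR μ ≠ 0 := by intro h; linarith
    have key : 2 * (-(dslope (m - sL) 0 μ * (sL μ + m μ - 2)) / (4 * dslope ν 0 μ)) *
        (ν μ / (1 - (sL μ + m μ) / 2)) = m μ - sL μ := by
      rw [ed, eν μ]
      have hne3 : 2 - (sL μ + m μ) ≠ 0 := by intro h; linarith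
      have : 1 - (sL μ + m μ) / 2 = (2 - (sL μ + m μ)) / 2 := by ring
      rw [this]
      have := h1.ne'
      field_simp
      ring
    set y := ν μ / (1 - (sL μ + m μ) / 2) with hy
    set t := -(dslope (m - sL) 0 μ * (sL μ + m μ - 2)) / (4 * dslope ν 0 μ)
    have hy' : y * (1 - (sL μ + m μ) / 2) = ν μ := by rw [hy]; exact div_mul_cancel₀ _ hne
    refine ⟨?_, ?_, by linarith⟩
    · have : t * y ^ 2 = (m μ - sL μ) / 2 * y := by rw [← key]; ring
      rw [this, ← hy']; ring
    · field_simp; ring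
  · filter_upwards [hpos] with μ h1
    rw [eν μ]
    exact ⟨fun h => by positivity, fun h => mul_nonpos_of_nonpos_of_nonneg h h1.le⟩

end SN


namespace SN
open Topology

def Good (fL fR : ℝ → ℝ → ℝ) (aR : ℝ) (sL sR t : ℝ → ℝ) (δ p μ qm qp : ℝ) : Prop :=
  qm < 0 ∧ 0 < qp ∧ (1 - δ) * p < |qm| ∧ |qm| < (1 + δ) * p ∧
      (1 - δ) * p < |qp| ∧ |qp| < (1 + δ) * p ∧
  (μ ≤ 0 → DiffConjOn (pwFam fL fR μ) (enf (fL 0 μ) (sL μ) (sR μ) (t μ))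
      (Set.Ioo (-p) p) (Set.Ioo qm qp)) ∧
  (0 < μ → 0 < aR →
    ∃ xL xR yL yR : ℝ,
      xL < 0 ∧ 0 < xR ∧ xL ∈ (Set.Ioo (-p) p) ∧ xR ∈ (Set.Ioo (-p) p) ∧
      yL < 0 ∧ 0 < yR ∧ yL ∈ (Set.Ioo qm qp) ∧ yR ∈ (Set.Ioo qm qp) ∧
      fL xL μ = xL ∧ fR xR μ = xR ∧
      enf (fL 0 μ) (sL μ) (sR μ) (t μ) yL = yL ∧
      enf (fL 0 μ) (sL μ) (sR μ) (t μ) yR = yR ∧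
      |deriv (fun x => fR x μ) xR| < 1 ∧ 1 < |deriv (fun x => fL x μ) xL| ∧
      DiffConjOn (pwFam fL fR μ) (enf (fL 0 μ) (sL μ) (sR μ) (t μ))
        (basinAttr (pwFam fL fR μ) (Set.Ioo (-p) p) xR)
        (basinAttr (enf (fL 0 μ) (sL μ) (sR μ) (t μ)) (Set.Ioo qm qp) yR) ∧
      DiffConjOn (pwFam fL fR μ) (enf (fL 0 μ) (sL μ) (sR μ) (t μ))
        (basinRep (pwFam fL fR μ) (Set.Ioo (-p) p) xL)
        (basinRep (enf (fL 0 μ) (sL μ) (sR μ) (t μ)) (Set.Ioo qm qp) yL)) ∧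
  (0 < μ → aR < 0 →
    ∃ xL yL w z : ℝ,
      xL < 0 ∧ fL xL μ = xL ∧
      yL < 0 ∧ enf (fL 0 μ) (sL μ) (sR μ) (t μ) yL = yL ∧
      0 < w ∧ fR w μ = xL ∧ 0 < z ∧ fL 0 μ + sR μ * z = yL ∧
      DiffConjOn (pwFam fL fR μ) (enf (fL 0 μ) (sL μ) (sR μ) (t μ))
        (Set.Ioo xL w) (Set.Ioo yL z) ∧
      DiffConjOn (pwFam fL fR μ) (enf (fL 0 μ) (sL μ) (sR μ) (t μ))
        {x ∈ (Set.Ioo (-p) p) | x < 0} {y ∈ (Set.Ioo qm qp) | y < 0})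

lemma good_sn {fL fR : ℝ → ℝ → ℝ} {aR δ p μ₁ : ℝ} {sL sR t qm qp : ℝ → ℝ}
    (h : ∀ μ ∈ Set.Ioo (-μ₁) μ₁, Good fL fR aR sL sR t δ p μ (qm μ) (qp μ)) (h1 : 0 < μ₁) :
    SnConclusion fL fR aR μ₁ sL sR t (Set.Ioo (-p) p) (fun μ => Set.Ioo (qm μ) (qp μ)) := by
  refine ⟨fun μ hμ => ⟨isOpen_Ioo, (h μ hμ).1, (h μ hμ).2.1⟩, fun μ hμ => ?_, fun ha μ hμ => ?_,
    fun ha μ hμ => ?_⟩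
  · exact (h μ ⟨hμ.1, by linarith [hμ.2]⟩).2.2.2.2.2.2.1 hμ.2
  · exact (h μ ⟨by linarith [hμ.1], hμ.2⟩).2.2.2.2.2.2.2.1 hμ.1 ha
  · exact (h μ ⟨by linarith [hμ.1], hμ.2⟩).2.2.2.2.2.2.2.2 hμ.1 ha

set_option maxHeartbeats 1000000 in
theorem core {aL aR β : ℝ} {fL fR : ℝ → ℝ → ℝ}
    (hfL : ContDiffAt ℝ 3 (fun p : ℝ × ℝ => fL p.1 p.2) (0, 0))
    (hfR : ContDiffAt ℝ 3 (fun p : ℝ × ℝ => fR p.1 p.2) (0, 0))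
    (hcont : ∀ᶠ μ in 𝓝 0, fL 0 μ = fR 0 μ)
    (hbcb : fL 0 0 = 0)
    (haL : deriv (fun x => fL x 0) 0 = aL)
    (haR : deriv (fun x => fR x 0) 0 = aR)
    (hβL : deriv (fun μ => fL 0 μ) 0 = β)
    (hβ : 0 < β)
    (hL : 1 < aL) (hR0 : 0 < |aR|) (hR1 : |aR| < 1) :
    ∃ sL sR t : ℝ → ℝ, (∀ᶠ μ in 𝓝 0, ContinuousAt sL μ ∧ ContinuousAt sR μ ∧ ContinuousAt t μ) ∧
        (fun μ => sL μ - aL) =O[nhds (0:ℝ)] (fun μ => μ) ∧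
        (fun μ => sR μ - aR) =O[nhds (0:ℝ)] (fun μ => μ) ∧
      ∀ δ > 0, δ ≤ 1 / 2 → ∀ w > 0, ∃ p > 0, p < w ∧ ∀ᶠ μ in 𝓝 0, ∃ qm qp,
        Good fL fR aR sL sR t δ p μ qm qp := by
  have hRne : aR ≠ 0 := abs_pos.1 hR0
  obtain ⟨DL, XL, KL, kL0, cDL, DL0, cXL, XL0, evXL, rL, hrL, HL⟩ := branch hfL hbcb haL hL.ne'
  obtain ⟨DR, XR, KR, kR0, cDR, DR0, cXR, XR0, evXR, rR, hrR, HR⟩ := branch hfR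
    (by rw [← hcont.self_of_nhds, hbcb]) haR (by intro h; rw [h, abs_one] at hR1; linarith)
  have cmp : ∀ {D : ℝ → ℝ → ℝ} {X : ℝ → ℝ}, ContDiffAt ℝ 1 (fun p : ℝ × ℝ => D p.1 p.2) (0, 0) →
      ContDiffAt ℝ 1 X 0 → X 0 = 0 → ContDiffAt ℝ 1 (fun μ => D (X μ) μ) 0 := by
    intro D X hD hX h0
    exact ContDiffAt.comp (0:ℝ) (g := fun p : ℝ × ℝ => D p.1 p.2) (f := fun μ => (X μ, μ))
      (by simpa only [h0] using hD) (hX.prodMk contDiffAt_id)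
  have cν : ContDiffAt ℝ 1 (fun μ => fL 0 μ) 0 :=
    cmp (hfL.of_le (by norm_num)) (contDiffAt_const (c := (0:ℝ))) rfl
  have cm := cmp cDL cXL XL0
  have cr := cmp cDR cXR XR0
  have cL0 := cmp cDL (contDiffAt_const (c := (0:ℝ))) rfl
  have cR0 := cmp cDR (contDiffAt_const (c := (0:ℝ))) rfl
  have cs : ContDiffAt ℝ 1 (fun μ => DR (XR μ) μ * DL 0 μ / DR 0 μ) 0 :=
    (cr.mul cL0).div cR0 (by rw [DR0]; exact hRne)
  have m0 : DL (XL 0) 0 = aL := by rw [XL0, DL0]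
  have r0 : DR (XR 0) 0 = aR := by rw [XR0, DR0]
  have s0 : DR (XR 0) 0 * DL 0 0 / DR 0 0 = aL := by rw [r0, DR0, DL0]; field_simp
  obtain ⟨t, yL, yR, evt, ty1, ty2, evy, evν⟩ := params cν cm cs cr hbcb hβL hβ m0 s0 r0 hL hR1
  set sR : ℝ → ℝ := fun μ => DR (XR μ) μ with hsR
  set sL : ℝ → ℝ := fun μ => DR (XR μ) μ * DL 0 μ / DR 0 μ with hsL
  have evc : ∀ {φ : ℝ → ℝ}, ContDiffAt ℝ 1 φ 0 → ∀ᶠ μ in 𝓝 0, ContinuousAt φ μ := by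
    intro φ h
    filter_upwards [h.eventually (by decide)] with μ hμ using hμ.continuousAt
  refine ⟨sL, sR, t, (evc cs).and ((evc cr).and evt), ?_, ?_, ?_⟩
  · have := (cs.differentiableAt (by norm_num)).isBigO_sub
    have s0' : sL 0 = aL := s0
    simpa only [sub_zero, s0'] using this
  · have := (cr.differentiableAt (by norm_num)).isBigO_sub
    have r0' : sR 0 = aR := r0
    simpa only [sub_zero, r0'] using this
  intro δ hδ hδ2 w hw
  set b := (1 + aL) / 2 with hb
  set B := 2 * aL with hB
  set c := |aR| / 2 with hc
  set lam := (1 + |aR|) / 2 with hlam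
  set K := max (max KL KR) (|2 * t 0| + 1) with hK
  have K0 : 0 ≤ K := kL0.trans ((le_max_left _ _).trans (le_max_left _ _))
  have KL' : KL ≤ K := (le_max_left _ _).trans (le_max_left _ _)
  have KR' : KR ≤ K := (le_max_right _ _).trans (le_max_left _ _)
  set C := max 0 (max (K / (1 / B * (1 - 1 / b))) (K / (c * (1 - lam)))) with hC
  have C0 : 0 ≤ C := le_max_left _ _
  have C1 : K / (1 / B * (1 - 1 / b)) ≤ C := (le_max_left _ _).trans (le_max_right _ _)
  have C2 : K / (c * (1 - lam)) ≤ C := (le_max_right _ _).trans (le_max_right _ _)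
  have c0 : 0 < c := by positivity
  have evB : ∀ᶠ q in 𝓝 ((0:ℝ), (0:ℝ)), (b < DL q.1 q.2 ∧ DL q.1 q.2 < B) ∧
      (c < |DR q.1 q.2| ∧ |DR q.1 q.2| < lam) ∧ (0 < aR → 0 < DR q.1 q.2) ∧
      (aR < 0 → DR q.1 q.2 < 0) := by
    have hl := cDL.continuousAt
    have hr := cDR.continuousAt
    have hra := hr.abs
    refine ((hl.eventually (lt_mem_nhds ?_)).and (hl.eventually (gt_mem_nhds ?_))).and
      (((hra.eventually (lt_mem_nhds ?_)).and (hra.eventually (gt_mem_nhds ?_))).and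
      (Filter.Eventually.and ?_ ?_))
    · simp only [DL0]; linarith
    · simp only [DL0]; linarith
    · simp only [DR0]; linarith
    · simp only [DR0]; linarith
    · by_cases h : 0 < aR
      · filter_upwards [hr.eventually (lt_mem_nhds (show 0 < DR 0 0 by rw [DR0]; exact h))] with q hq _
          using hq
      · exact Filter.Eventually.of_forall fun q h' => absurd h' h
    · by_cases h : aR < 0
      · filter_upwards [hr.eventually (gt_mem_nhds (show DR 0 0 < 0 by rw [DR0]; exact h))] with q hq _
          using hq
      · exact Filter.Eventually.of_forall fun q h' => absurd h' h
  obtain ⟨rB, hrB, HB⟩ := ev_box evB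
  have cE : Filter.Tendsto (fun P : ℝ => Real.exp (3 * C * P) ^ 4) (𝓝 0) (𝓝 1) := by
    have : Continuous (fun P : ℝ => Real.exp (3 * C * P) ^ 4) := by fun_prop
    simpa using this.tendsto 0
  have cE2 : Filter.Tendsto (fun P : ℝ => (Real.exp (3 * C * P) ^ 4 - 1) * (1 + 6 / c)) (𝓝 0)
      (𝓝 0) := by
    simpa using (cE.sub_const 1).mul_const (1 + 6 / c)
  have cK : Filter.Tendsto (fun P : ℝ => K * P) (𝓝 0) (𝓝 0) := by
    have : Continuous (fun P : ℝ => K * P) := by fun_prop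
    simpa only [mul_zero] using this.tendsto 0
  have evP : ∀ᶠ P in 𝓝[>] (0:ℝ), 0 < P ∧ P < w ∧ P < rL ∧ P < rR ∧ P < rB ∧
      Real.exp (3 * C * P) ^ 4 < 2 ∧ (Real.exp (3 * C * P) ^ 4 - 1) * (1 + 6 / c) < δ ∧
      K * P < (aL - 1) / 4 := by
    filter_upwards [self_mem_nhdsWithin, nhdsWithin_le_nhds (gt_mem_nhds hw),
      nhdsWithin_le_nhds (gt_mem_nhds hrL), nhdsWithin_le_nhds (gt_mem_nhds hrR),
      nhdsWithin_le_nhds (gt_mem_nhds hrB),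
      nhdsWithin_le_nhds (cE.eventually (gt_mem_nhds (show (1:ℝ) < 2 by norm_num))),
      nhdsWithin_le_nhds (cE2.eventually (gt_mem_nhds hδ)),
      nhdsWithin_le_nhds (cK.eventually (gt_mem_nhds (show (0:ℝ) < (aL - 1) / 4 by linarith)))]
      with P h1 h2 h3 h4 h5 h6 h7 h8
    exact ⟨h1, h2, h3, h4, h5, h6, h7, h8⟩
  obtain ⟨P, hP, Pw, PL, PR, PB, PE, PE2, PK⟩ := evP.exists
  refine ⟨P / 2, by linarith, by linarith, ?_⟩
  set η := min (P / 8) (c * P / 2) with hη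
  have η0 : 0 < η := by positivity
  have η1 : η ≤ P / 8 := min_le_left _ _
  have η2 : η ≤ c * P / 2 := min_le_right _ _
  have small : ∀ {X : ℝ → ℝ}, Filter.Tendsto X (𝓝 0) (𝓝 0) → ∀ᶠ μ in 𝓝 0, |X μ| < η := by
    intro X h
    have := h.abs
    rw [abs_zero] at this
    exact this.eventually (gt_mem_nhds η0)
  have tXL : Filter.Tendsto XL (𝓝 0) (𝓝 0) := by simpa [ContinuousAt, XL0] using cXL.continuousAt
  have tXR : Filter.Tendsto XR (𝓝 0) (𝓝 0) := by simpa [ContinuousAt, XR0] using cXR.continuousAt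
  have tν : Filter.Tendsto (fun μ => fL 0 μ) (𝓝 0) (𝓝 0) := by
    simpa [ContinuousAt, hbcb] using cν.continuousAt
  have evs : ∀ᶠ μ in 𝓝 0, |sL μ - aL| < (aL - 1) / 4 := by
    have h := (cs.continuousAt.sub (continuousAt_const (y := aL))).abs
    refine h.eventually (gt_mem_nhds ?_)
    have s0' : sL 0 = aL := s0
    simp only [Pi.sub_apply, s0', sub_self, abs_zero]; linarith
  have evK : ∀ᶠ μ in 𝓝 0, |2 * t μ| < |2 * t 0| + 1 :=
    (((evt.self_of_nhds).const_mul 2).abs).eventually (gt_mem_nhds (by linarith))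
  have evμ : ∀ {r : ℝ}, 0 < r → ∀ᶠ μ in 𝓝 (0:ℝ), |μ| < r := by
    intro r hr
    have h : Filter.Tendsto (fun μ : ℝ => |μ|) (𝓝 0) (𝓝 0) := by
      simpa using (continuous_abs (G := ℝ)).tendsto 0
    exact h.eventually (gt_mem_nhds hr)
  filter_upwards [small tXL, small tXR, small ty1, small ty2, small tν, evs, evK, evμ hrL, evμ hrR,
    evμ hrB, evXL, evXR, evy, evν, hcont] with μ h1 h2 h3 h4 h5 h6 h7 h8 h9 h10 h11 h12 h13 h14 h15
  have hRb := fun x (hx : |x| ≤ P) => HB x μ (by linarith) h10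
  have hz0 : |(0:ℝ)| ≤ P := by rw [abs_zero]; exact hP.le
  have hD0 : DR 0 μ ≠ 0 := by
    intro h
    have := (hRb 0 hz0).2.1.1
    simp only [h, abs_zero] at this
    linarith
  rw [abs_lt] at h6
  obtain ⟨qm, qp, e1, e2, e3, e4, e5, e6, e7, e8, e9⟩ := perMu2 (φL := fun x => fL x μ)
    (φR := fun x => fR x μ) (DL := fun x => DL x μ) (DR := fun x => DR x μ) (b := b) (B := B) (c := c)
    (lam := lam) (K := K) (C := C) (P := P) (ν := fL 0 μ) (xl := XL μ) (xr := XR μ) (yl := yL μ)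
    (yr := yR μ) (sL := sL μ) (sR := sR μ) (t := t μ) (E := Real.exp (3 * C * P)) (δ := δ)
    (by linarith) c0 (by linarith) K0 C0 C1 C2 hP
    (fun x hx => (HL μ h8).1 x (by linarith)) (fun x hx => (HR μ h9).1 x (by linarith))
    (fun x y hx hy => ((HL μ h8).2 x y (by linarith) (by linarith)).trans
      (mul_le_mul_of_nonneg_right KL' (abs_nonneg _)))
    (fun x y hx hy => ((HR μ h9).2 x y (by linarith) (by linarith)).trans
      (mul_le_mul_of_nonneg_right KR' (abs_nonneg _)))
    (fun x hx => ⟨(hRb x hx).1.1.le, (hRb x hx).1.2.le⟩)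
    (fun x hx => ⟨(hRb x hx).2.1.1.le, (hRb x hx).2.1.2.le⟩)
    (by
      rcases lt_or_gt_of_ne hRne with h | h
      · right; exact fun x hx => (hRb x hx).2.2.2 h
      · left; exact fun x hx => (hRb x hx).2.2.1 h)
    rfl h15.symm h11 h12
    (by
      intro y hy
      have : |2 * t μ * y| ≤ K * P := by
        rw [abs_mul]
        exact mul_le_mul (h7.le.trans (le_max_right _ _)) hy (abs_nonneg _) K0
      rw [abs_le] at this
      constructor <;> linarith)
    (h7.le.trans (le_max_right _ _)) h13.1 h13.2.1 h13.2.2 rfl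
    (by simp only [hsL, hsR]; field_simp)
    (by linarith) (by linarith) (by linarith) (by linarith) (by linarith) (by linarith) (by linarith)
    rfl PE hδ2 PE2 (f := pwFam fL fR μ) (fun x => rfl)
  refine ⟨qm, qp, e1, e2, e3, e4, e5, e6, fun h => e7 (h14.2 h), fun h ha => ?_, fun h ha => ?_⟩
  · obtain ⟨g1, g2, g3, g4, g5, g6, g7, g8, g9, g10, g11, g12, g13, g14⟩ := e8 (h14.1 h)
      ((hRb 0 hz0).2.2.1 ha)
    exact ⟨XL μ, XR μ, yL μ, yR μ, g1, g2, g3, g4, g5, g6, g7, g8, h11, h12, g9, g10, g11, g12, g13,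
      g14⟩
  · obtain ⟨w, z, g1, g2, g3, g4, g5, g6, g7, g8, g9⟩ := e9 (h14.1 h) ((hRb 0 hz0).2.2.2 ha)
    exact ⟨XL μ, yL μ, w, z, g1, h11, g2, g3, g4, g5, g6, g7, g8, g9⟩

end SN


/-- Theorem 2.2 (saddle-node-like border-collision bifurcations).
Here `Ω = (ω₁, ω₂)` and `I = (ι₁, ι₂)` are the open intervals containing `0` on which the
piecewise-`C³` family is defined, `aL, aR` are the one-sided slopes at the bifurcation,
and `β` is the common `μ`-derivative at the origin. -/
theorem stmt1 (ω₁ ω₂ ι₁ ι₂ aL aR β : ℝ) (fL fR : ℝ → ℝ → ℝ)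
    (hω₁ : ω₁ < 0) (hω₂ : 0 < ω₂) (hι₁ : ι₁ < 0) (hι₂ : 0 < ι₂)
    (hfL : ContDiffOn ℝ 3 (fun p : ℝ × ℝ => fL p.1 p.2) (Set.Ioo ω₁ ω₂ ×ˢ Set.Ioo ι₁ ι₂))
    (hfR : ContDiffOn ℝ 3 (fun p : ℝ × ℝ => fR p.1 p.2) (Set.Ioo ω₁ ω₂ ×ˢ Set.Ioo ι₁ ι₂))
    (hcont : ∀ μ ∈ Set.Ioo ι₁ ι₂, fL 0 μ = fR 0 μ)
    (hbcb : fL 0 0 = 0)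
    (haL : deriv (fun x => fL x 0) 0 = aL)
    (haR : deriv (fun x => fR x 0) 0 = aR)
    (hβL : deriv (fun μ => fL 0 μ) 0 = β)
    (hβR : deriv (fun μ => fR 0 μ) 0 = β)
    (hβ : 0 < β)
    (hL : 1 < aL) (hR0 : 0 < |aR|) (hR1 : |aR| < 1) :
    ∃ μ₀ > 0, Set.Ioo (-μ₀) μ₀ ⊆ Set.Ioo ι₁ ι₂ ∧
      ∃ sL sR t : ℝ → ℝ,
        ContinuousOn sL (Set.Ioo (-μ₀) μ₀) ∧ ContinuousOn sR (Set.Ioo (-μ₀) μ₀) ∧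
        ContinuousOn t (Set.Ioo (-μ₀) μ₀) ∧
        (fun μ => sL μ - aL) =O[nhds (0:ℝ)] (fun μ => μ) ∧
        (fun μ => sR μ - aR) =O[nhds (0:ℝ)] (fun μ => μ) ∧
        (∃ N : Set ℝ, IsOpen N ∧ (0:ℝ) ∈ N ∧ N ⊆ Set.Ioo ω₁ ω₂ ∧
          ∃ M : ℝ → Set ℝ, SnConclusion fL fR aR μ₀ sL sR t N M) ∧
        -- Moreover, the neighbourhoods can be chosen almost symmetric
        (∀ δ > 0, ∃ μ₁ > 0, μ₁ ≤ μ₀ ∧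
          ∃ p > 0, Set.Ioo (-p) p ⊆ Set.Ioo ω₁ ω₂ ∧
            ∃ qm qp : ℝ → ℝ,
              SnConclusion fL fR aR μ₁ sL sR t (Set.Ioo (-p) p)
                (fun μ => Set.Ioo (qm μ) (qp μ)) ∧
              ∀ μ ∈ Set.Ioo (-μ₁) μ₁,
                qm μ < 0 ∧ 0 < qp μ ∧
                (1 - δ) * p < |qm μ| ∧ |qm μ| < (1 + δ) * p ∧
                (1 - δ) * p < |qp μ| ∧ |qp μ| < (1 + δ) * p) := by
  have n0 : Set.Ioo ω₁ ω₂ ×ˢ Set.Ioo ι₁ ι₂ ∈ nhds ((0:ℝ), (0:ℝ)) :=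
    prod_mem_nhds (Ioo_mem_nhds hω₁ hω₂) (Ioo_mem_nhds hι₁ hι₂)
  have nI : Set.Ioo ι₁ ι₂ ∈ nhds (0:ℝ) := Ioo_mem_nhds hι₁ hι₂
  obtain ⟨sL, sR, t, hc, oL, oR, H⟩ := SN.core (hfL.contDiffAt n0) (hfR.contDiffAt n0)
    (Filter.eventually_of_mem nI hcont) hbcb haL haR hβL hβ hL hR0 hR1
  have ball : ∀ {Q : ℝ → Prop}, (∀ᶠ μ in nhds (0:ℝ), Q μ) →
      ∃ r > 0, ∀ μ ∈ Set.Ioo (-r) r, Q μ := by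
    intro Q h
    obtain ⟨r, hr, h'⟩ := Metric.eventually_nhds_iff.1 h
    refine ⟨r, hr, fun μ hμ => h' ?_⟩
    rw [Real.dist_eq, sub_zero, abs_lt]
    exact hμ
  have hw : 0 < min (-ω₁) ω₂ := lt_min (by linarith) hω₂
  have sub : ∀ p, p < min (-ω₁) ω₂ → Set.Ioo (-p) p ⊆ Set.Ioo ω₁ ω₂ := by
    intro p hp x hx
    have h1 := lt_min_iff.1 hp
    exact ⟨by linarith [hx.1, h1.1], by linarith [hx.2, h1.2]⟩
  obtain ⟨p, hp, hpw, hG⟩ := H (1 / 2) (by norm_num) le_rfl _ hw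
  obtain ⟨μ₀, hμ₀, h0⟩ := ball (hG.and (hc.and (Filter.eventually_of_mem nI (fun μ hμ => hμ))))
  refine ⟨μ₀, hμ₀, fun μ hμ => (h0 μ hμ).2.2, sL, sR, t,
    fun μ hμ => (h0 μ hμ).2.1.1.continuousWithinAt,
    fun μ hμ => (h0 μ hμ).2.1.2.1.continuousWithinAt,
    fun μ hμ => (h0 μ hμ).2.1.2.2.continuousWithinAt, oL, oR, ?_, ?_⟩
  · have h1 : ∀ μ ∈ Set.Ioo (-μ₀) μ₀, ∃ qm qp, SN.Good fL fR aR sL sR t (1 / 2) p μ qm qp :=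
      fun μ hμ => (h0 μ hμ).1
    choose! qm qp hq using h1
    exact ⟨Set.Ioo (-p) p, isOpen_Ioo, ⟨by linarith, hp⟩, sub p hpw,
      fun μ => Set.Ioo (qm μ) (qp μ), SN.good_sn hq hμ₀⟩
  · intro δ hδ
    obtain ⟨p, hp, hpw, hG⟩ := H (min δ (1 / 2)) (lt_min hδ (by norm_num)) (min_le_right _ _) _ hw
    obtain ⟨μ₁, hμ₁, h1⟩ := ball hG
    have h2 : ∀ μ ∈ Set.Ioo (-(min μ₀ μ₁)) (min μ₀ μ₁), ∃ qm qp,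
        SN.Good fL fR aR sL sR t (min δ (1 / 2)) p μ qm qp := by
      intro μ hμ
      have := min_le_right μ₀ μ₁
      exact h1 μ ⟨by linarith [hμ.1], by linarith [hμ.2]⟩
    choose! qm qp hq using h2
    have hm : 0 < min μ₀ μ₁ := lt_min hμ₀ hμ₁
    refine ⟨min μ₀ μ₁, hm, min_le_left _ _, p, hp, sub p hpw, qm, qp, SN.good_sn hq hm, ?_⟩
    intro μ hμ
    obtain ⟨e1, e2, e3, e4, e5, e6, -⟩ := hq μ hμ
    have hd : min δ (1 / 2) * p ≤ δ * p := mul_le_mul_of_nonneg_right (min_le_left _ _) hp.le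
    refine ⟨e1, e2, ?_, ?_, ?_, ?_⟩ <;> linarith
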